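/- arXiv:1310.6711 — 2 statements merged into one kernel-verified Lean document; each statement's English description precedes it below -/
import Mathlib

section
/- Let n ≥ 2 and let Ω = ℝⁿ \ Ḡ, where G is a convex domain in ℝⁿ. Let u ∈ C²(Ω) ∩ C_b(Ω̄) be the velocity component of a solution {u, p} of the Stokes system Δu − grad p = 0, div u = 0 in Ω, and let p be the pressure, vanishing as d_x → ∞. Then for every point x ∈ Ω, |p(x)| ≤ (E_n / d_x) · sup_Ω |u|, where E_n = (4 ω_{n−1} / ω_n) ∫₀^{π/2} [1 + n(n−2) cos²θ]^{1/2} sin^{n−2}θ dθ. -/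
open MeasureTheory Real Filter Metric
open scoped Real RealInnerProductSpace

noncomputable section

/-- `Eu n` is the Euclidean space `ℝⁿ`. -/
abbrev Eu (n : ℕ) := EuclideanSpace ℝ (Fin n)

/-- `ω_n`: the surface area of the unit sphere `S^{n-1}` in `ℝⁿ`,
given by the classical formula `2 π^{n/2} / Γ(n/2)`. -/
def sphereArea (n : ℕ) : ℝ := 2 * π ^ ((n : ℝ) / 2) / Real.Gamma ((n : ℝ) / 2)

/-- The divergence `div u(x) = ∑ⱼ ∂uⱼ/∂xⱼ (x)` of a vector field `u : ℝⁿ → ℝⁿ`. -/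
def divg {n : ℕ} (u : Eu n → Eu n) (x : Eu n) : ℝ :=
  ∑ j, fderiv ℝ (fun y => u y j) x (EuclideanSpace.single j 1)

/-- The Laplacian of a scalar function at a point: the sum of the pure second
partial derivatives in the coordinate directions. -/
def lapl {n : ℕ} (u : Eu n → ℝ) (x : Eu n) : ℝ :=
  ∑ i, fderiv ℝ (fun y => fderiv ℝ u y (EuclideanSpace.single i 1)) x
    (EuclideanSpace.single i 1)

/-- The constant `E_n = (4 ω_{n-1}/ω_n) ∫₀^{π/2} (1 + n(n-2) cos²θ)^{1/2} sin^{n-2}θ dθ`. -/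
def Econst (n : ℕ) : ℝ :=
  (4 * sphereArea (n - 1) / sphereArea n) *
    ∫ θ in (0:ℝ)..(π / 2),
      Real.sqrt (1 + (n : ℝ) * ((n : ℝ) - 2) * Real.cos θ ^ 2) * Real.sin θ ^ (n - 2)


/-! ### One-dimensional second derivatives and harmonicity -/

/-- `φ` is differentiable near `0` with derivative differentiable at `0`, second derivative `a`. -/
def D2 (φ : ℝ → ℝ) (a : ℝ) : Prop :=
  ∃ φ' : ℝ → ℝ, (∀ᶠ s in nhds (0:ℝ), HasDerivAt φ (φ' s) s) ∧ HasDerivAt φ' a 0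

lemma D2.add {φ ψ : ℝ → ℝ} {a b : ℝ} (h : D2 φ a) (k : D2 ψ b) :
    D2 (fun s => φ s + ψ s) (a + b) := by
  obtain ⟨φ', h1, h2⟩ := h
  obtain ⟨ψ', k1, k2⟩ := k
  refine ⟨fun s => φ' s + ψ' s, ?_, h2.add k2⟩
  filter_upwards [h1, k1] with s hs ks using hs.add ks

lemma D2.const_mul {φ : ℝ → ℝ} {a : ℝ} (c : ℝ) (h : D2 φ a) :
    D2 (fun s => c * φ s) (c * a) := by
  obtain ⟨φ', h1, h2⟩ := h
  refine ⟨fun s => c * φ' s, ?_, h2.const_mul c⟩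
  filter_upwards [h1] with s hs using hs.const_mul c

lemma D2.neg {φ : ℝ → ℝ} {a : ℝ} (h : D2 φ a) :
    D2 (fun s => - φ s) (- a) := by
  simpa using h.const_mul (-1)

lemma D2.sub {φ ψ : ℝ → ℝ} {a b : ℝ} (h : D2 φ a) (k : D2 ψ b) :
    D2 (fun s => φ s - ψ s) (a - b) := by
  simpa [sub_eq_add_neg] using h.add k.neg

lemma D2_quad (a b c : ℝ) : D2 (fun s => a + b * s + c * s ^ 2) (2 * c) := by
  refine ⟨fun s => b + 2 * c * s, Eventually.of_forall fun s => ?_, ?_⟩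
  · have h1 : HasDerivAt (fun s : ℝ => a + b * s) b s := by
      simpa using ((hasDerivAt_id' s).const_mul b).const_add a
    have h2 : HasDerivAt (fun s : ℝ => c * s ^ 2) (2 * c * s) s := by
      have := (hasDerivAt_pow 2 s).const_mul c
      refine this.congr_deriv ?_
      norm_num; ring
    exact h1.add h2
  · simpa using ((hasDerivAt_id' (0:ℝ)).const_mul (2 * c)).const_add b

lemma D2.nonpos {φ : ℝ → ℝ} {a : ℝ} (h : D2 φ a) (hm : IsLocalMax φ 0) : a ≤ 0 := by
  obtain ⟨φ', h1, h2⟩ := h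
  by_contra hlt
  push Not at hlt
  have hd : deriv φ =ᶠ[nhds 0] φ' := by
    filter_upwards [h1] with s hs using hs.deriv
  have hdd : deriv (deriv φ) 0 = a := by
    rw [hd.deriv_eq, h2.deriv]
  have hmin : IsLocalMin φ 0 :=
    isLocalMin_of_deriv_deriv_pos (by rw [hdd]; exact hlt) hm.deriv_eq_zero
      h1.self_of_nhds.continuousAt
  have hc : φ =ᶠ[nhds 0] fun _ => φ 0 := by
    filter_upwards [hm, hmin] with s h1 h2 using le_antisymm h1 h2
  have h3 : deriv φ =ᶠ[nhds 0] deriv (fun _ => φ 0) := hc.deriv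
  have h4 := h3.deriv_eq
  rw [hdd] at h4
  simp at h4
  linarith

/-- standard basis vector -/
abbrev ee {m : ℕ} (i : Fin m) : Eu m := EuclideanSpace.single i (1:ℝ)

/-- pointwise harmonicity on `ℝ^m × ℝ`. -/
def Harm {m : ℕ} (g : Eu m → ℝ → ℝ) (y : Eu m) (t : ℝ) : Prop :=
  ∃ (a : Fin m → ℝ) (c : ℝ), (∀ i, D2 (fun s => g (y + s • ee i) t) (a i)) ∧
    D2 (fun s => g y (t + s)) c ∧ ∑ i, a i + c = 0

lemma Harm.sub {m : ℕ} {g h : Eu m → ℝ → ℝ} {y : Eu m} {t : ℝ} (hg : Harm g y t)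
    (hh : Harm h y t) : Harm (fun y t => g y t - h y t) y t := by
  obtain ⟨a, c, h1, h2, h3⟩ := hg
  obtain ⟨a', c', h1', h2', h3'⟩ := hh
  refine ⟨fun i => a i - a' i, c - c', fun i => (h1 i).sub (h1' i), h2.sub h2', ?_⟩
  rw [Finset.sum_sub_distrib]; linarith

lemma norm_add_single_sq {m : ℕ} (y : Eu m) (i : Fin m) (s : ℝ) :
    ‖y + s • ee i‖ ^ 2 = ‖y‖ ^ 2 + 2 * y i * s + 1 * s ^ 2 := by
  rw [norm_add_sq_real, inner_smul_right, norm_smul]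
  simp [EuclideanSpace.inner_single_right]
  ring

/-- One-sided comparison on a slab. -/
lemma slab_le {m : ℕ} (g : Eu m → ℝ → ℝ) (L C S ε : ℝ) (hL : 0 < L) (hε : 0 < ε)
    (hcont : ContinuousOn (fun z : Eu m × ℝ => g z.1 z.2) {z | 0 ≤ z.2})
    (hharm : ∀ y t, 0 < t → Harm g y t)
    (h0 : ∀ y, g y 0 ≤ 0) (hC : ∀ y t, 0 ≤ t → t ≤ L → g y t ≤ C)
    (hS : ∀ y, g y L ≤ S) (hS0 : 0 ≤ S) (y : Eu m) (t : ℝ) (ht0 : 0 ≤ t) (htL : t ≤ L) :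
    g y t ≤ S * t / L + ε * (‖y‖ ^ 2 - (m + 1) * t ^ 2 + (m + 1) * L ^ 2) := by
  set q : Eu m × ℝ → ℝ := fun z =>
    g z.1 z.2 - (S * z.2 / L + ε * (‖z.1‖ ^ 2 - (m + 1) * z.2 ^ 2 + (m + 1) * L ^ 2)) with hq
  have hm : (0:ℝ) ≤ m := Nat.cast_nonneg m
  obtain ⟨R, hR0, hRy, hRC⟩ : ∃ R : ℝ, 0 < R ∧ ‖y‖ ≤ R ∧ C ≤ ε * R ^ 2 := by
    refine ⟨‖y‖ + 1 + |C| / ε, by positivity, ?_, ?_⟩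
    · have : 0 ≤ |C| / ε := by positivity
      linarith
    · have h1 : 0 ≤ |C| / ε := by positivity
      have h2 : |C| = ε * (|C| / ε) := by field_simp
      have h3 : |C| / ε ≤ (‖y‖ + 1 + |C| / ε) ^ 2 := by nlinarith [norm_nonneg y]
      calc C ≤ |C| := le_abs_self C
        _ = ε * (|C| / ε) := h2
        _ ≤ _ := by gcongr
  set K : Set (Eu m × ℝ) := closedBall 0 R ×ˢ Set.Icc 0 L with hK
  have hKc : IsCompact K := (isCompact_closedBall 0 R).prod isCompact_Icc
  have hyK : (y, t) ∈ K := by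
    simp [hK, hRy, ht0, htL]
  have hqc : ContinuousOn q K := by
    apply ContinuousOn.sub
    · apply hcont.mono
      rintro ⟨a, b⟩ hab
      simp [hK] at hab
      exact hab.2.1
    · fun_prop
  obtain ⟨⟨y1, t1⟩, hz1, hmax⟩ := hKc.exists_isMaxOn ⟨_, hyK⟩ hqc
  have hle : q (y, t) ≤ q (y1, t1) := hmax hyK
  suffices q (y1, t1) ≤ 0 by
    have h := hle.trans this
    simp only [hq] at h
    linarith
  simp only [hK, Set.mem_prod, mem_closedBall, dist_zero_right, Set.mem_Icc] at hz1
  obtain ⟨hy1, ht10, ht1L⟩ := hz1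
  have hbar : 0 ≤ -((m:ℝ) + 1) * t1 ^ 2 + (m + 1) * L ^ 2 := by
    have : t1 ^ 2 ≤ L ^ 2 := by gcongr
    nlinarith
  have hSt : 0 ≤ S * t1 / L := by positivity
  rcases ht10.eq_or_lt with h | ht1p
  · subst h
    have := h0 y1
    simp only [hq]
    have h1 : 0 ≤ ε * (‖y1‖ ^ 2 - (m + 1) * 0 ^ 2 + (m + 1) * L ^ 2) := by
      apply mul_nonneg hε.le
      have := sq_nonneg ‖y1‖
      nlinarith
    linarith
  rcases ht1L.eq_or_lt with h | ht1l
  · subst h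
    have := hS y1
    simp only [hq]
    have h1 : 0 ≤ ε * (‖y1‖ ^ 2 - (m + 1) * t1 ^ 2 + (m + 1) * t1 ^ 2) := by
      apply mul_nonneg hε.le
      have := sq_nonneg ‖y1‖
      nlinarith
    have h2 : S * t1 / t1 = S := by field_simp
    linarith
  rcases hy1.eq_or_lt with h | hy1l
  · have := hC y1 t1 ht10 ht1L
    simp only [hq]
    have h1 : ε * R ^ 2 ≤ ε * (‖y1‖ ^ 2 - (m + 1) * t1 ^ 2 + (m + 1) * L ^ 2) := by
      apply mul_le_mul_of_nonneg_left _ hε.le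
      rw [h]
      nlinarith
    linarith
  exfalso
  obtain ⟨a, c, ha, hc, hsum⟩ := hharm y1 t1 ht1p
  have hloc : IsLocalMax q (y1, t1) := by
    apply hmax.isLocalMax
    apply prod_mem_nhds
    · apply mem_of_superset (isOpen_ball.mem_nhds (x := y1) (s := ball 0 R) (by simpa using hy1l))
      exact ball_subset_closedBall
    · exact Icc_mem_nhds ht1p ht1l
  have hA : ∀ i, a i ≤ 2 * ε := by
    intro i
    have h1 : D2 (fun s => q (y1 + s • ee i, t1)) (a i - 2 * ε) := by
      have := (ha i).sub (D2_quad (S * t1 / L + ε * (‖y1‖ ^ 2 - (m + 1) * t1 ^ 2 + (m + 1) * L ^ 2))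
        (ε * (2 * y1 i)) ε)
      convert this using 2 with s
      simp only [hq, norm_add_single_sq]
      ring
    have h2 : IsLocalMax (fun s : ℝ => q (y1 + s • ee i, t1)) 0 := by
      have hT : Tendsto (fun s : ℝ => (y1 + s • ee i, t1)) (nhds 0) (nhds (y1, t1)) := by
        apply Continuous.tendsto' (by fun_prop)
        simp
      filter_upwards [hT.eventually hloc] with s hs
      simpa using hs
    linarith [h1.nonpos h2]
  have hB : c ≤ - 2 * (m + 1) * ε := by
    have h1 : D2 (fun s => q (y1, t1 + s)) (c - 2 * (-(ε * (m + 1)))) := by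
      have := hc.sub (D2_quad (S * t1 / L + ε * (‖y1‖ ^ 2 - (m + 1) * t1 ^ 2 + (m + 1) * L ^ 2))
        (S / L - ε * (m + 1) * 2 * t1) (-(ε * (m + 1))))
      convert this using 2 with s
      simp only [hq]
      ring
    have h2 : IsLocalMax (fun s : ℝ => q (y1, t1 + s)) 0 := by
      have hT : Tendsto (fun s : ℝ => (y1, t1 + s)) (nhds 0) (nhds (y1, t1)) := by
        apply Continuous.tendsto' (by fun_prop)
        simp
      filter_upwards [hT.eventually hloc] with s hs
      simpa using hs
    linarith [h1.nonpos h2]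
  have hs : ∑ i, a i ≤ m * (2 * ε) := by
    calc ∑ i, a i ≤ ∑ _i : Fin m, 2 * ε := Finset.sum_le_sum fun i _ => hA i
      _ = _ := by simp
  nlinarith

/-- Growth condition: slab-bounded and `o(t)`. -/
def Grow {m : ℕ} (g : Eu m → ℝ → ℝ) : Prop :=
  (∃ C, 0 ≤ C ∧ ∀ y t, 0 ≤ t → |g y t| ≤ C * (1 + t)) ∧
  (∀ ε > 0, ∃ R : ℝ, ∀ y t, R ≤ t → |g y t| ≤ ε * t)

lemma pl_nonpos {m : ℕ} (g : Eu m → ℝ → ℝ)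
    (hcont : ContinuousOn (fun z : Eu m × ℝ => g z.1 z.2) {z | 0 ≤ z.2})
    (hharm : ∀ y t, 0 < t → Harm g y t)
    (h0 : ∀ y, g y 0 = 0) (hgr : Grow g) (y : Eu m) (t : ℝ) (ht : 0 ≤ t) : g y t ≤ 0 := by
  obtain ⟨⟨C, hC0, hC⟩, hg⟩ := hgr
  have key : ∀ δ > 0, g y t ≤ δ * t := by
    intro δ hδ
    obtain ⟨R, hR⟩ := hg δ hδ
    set L := max R (t + 1) with hL
    have hLt : t + 1 ≤ L := le_max_right _ _
    have hLp : 0 < L := by linarith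
    have h1 : ∀ ε > 0, g y t ≤ δ * t + ε * (‖y‖ ^ 2 - (m + 1) * t ^ 2 + (m + 1) * L ^ 2) := by
      intro ε hε
      have := slab_le g L (C * (1 + L)) (δ * L) ε hLp hε hcont hharm (fun y => (h0 y).le)
        (fun y t h1 h2 => (le_abs_self _).trans ((hC y t h1).trans (by gcongr)))
        (fun y => (le_abs_self _).trans (hR y L (le_max_left _ _))) (by positivity) y t ht
        (by linarith)
      have h2 : δ * L * t / L = δ * t := by field_simp
      rwa [h2] at this
    have h2 : Tendsto (fun ε : ℝ => δ * t + ε * (‖y‖ ^ 2 - (m + 1) * t ^ 2 + (m + 1) * L ^ 2))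
        (nhdsWithin 0 (Set.Ioi 0)) (nhds (δ * t + 0 * (‖y‖ ^ 2 - (m + 1) * t ^ 2 + (m + 1) * L ^ 2))) := by
      apply Tendsto.mono_left _ nhdsWithin_le_nhds
      apply Continuous.tendsto
      fun_prop
    have h3 := ge_of_tendsto h2 (by
      filter_upwards [self_mem_nhdsWithin] with ε hε using h1 ε hε)
    linarith
  have h2 : Tendsto (fun δ : ℝ => δ * t) (nhdsWithin 0 (Set.Ioi 0)) (nhds (0 * t)) := by
    apply Tendsto.mono_left _ nhdsWithin_le_nhds
    apply Continuous.tendsto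
    fun_prop
  have h3 := ge_of_tendsto h2 (by
      filter_upwards [self_mem_nhdsWithin] with ε hε using key ε hε)
  linarith

lemma Harm.neg {m : ℕ} {g : Eu m → ℝ → ℝ} {y : Eu m} {t : ℝ} (hg : Harm g y t) :
    Harm (fun y t => - g y t) y t := by
  obtain ⟨a, c, h1, h2, h3⟩ := hg
  refine ⟨fun i => - a i, - c, fun i => (h1 i).neg, h2.neg, ?_⟩
  rw [Finset.sum_neg_distrib]; linarith

lemma pl_zero {m : ℕ} (g : Eu m → ℝ → ℝ)
    (hcont : ContinuousOn (fun z : Eu m × ℝ => g z.1 z.2) {z | 0 ≤ z.2})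
    (hharm : ∀ y t, 0 < t → Harm g y t)
    (h0 : ∀ y, g y 0 = 0) (hgr : Grow g) (y : Eu m) (t : ℝ) (ht : 0 ≤ t) : g y t = 0 := by
  apply le_antisymm (pl_nonpos g hcont hharm h0 hgr y t ht)
  have := pl_nonpos (fun y t => - g y t) hcont.neg (fun y t h => (hharm y t h).neg)
    (fun y => by simp [h0 y]) (by
      obtain ⟨⟨C, hC0, hC⟩, hg⟩ := hgr
      exact ⟨⟨C, hC0, by simpa using hC⟩, by simpa using hg⟩) y t ht
  linarith

/-! ### Integrals -/

/-- exponent `-(m+1)/2` -/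
abbrev aa (m : ℕ) : ℝ := -((m : ℝ) + 1) / 2

lemma sphereArea_pos (n : ℕ) (hn : 1 ≤ n) : 0 < sphereArea n := by
  unfold sphereArea
  have : 0 < Real.Gamma ((n : ℝ) / 2) := Real.Gamma_pos_of_pos (by positivity)
  positivity

lemma ball_area (m : ℕ) (hm : 1 ≤ m) :
    (m : ℝ) * (volume : Measure (Eu m)).real (ball 0 1) = sphereArea m := by
  have : Nonempty (Fin m) := ⟨⟨0, hm⟩⟩
  have hm' : (m : ℝ) / 2 ≠ 0 := by positivity
  have hG : Real.Gamma ((m : ℝ) / 2) ≠ 0 := (Real.Gamma_pos_of_pos (by positivity)).ne'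
  rw [Measure.real, EuclideanSpace.volume_ball]
  simp only [ENNReal.ofReal_one, one_pow, one_mul, Fintype.card_fin]
  rw [ENNReal.toReal_ofReal (by
    have : 0 < Real.Gamma ((m : ℝ) / 2 + 1) := Real.Gamma_pos_of_pos (by positivity)
    positivity), Real.Gamma_add_one hm']
  unfold sphereArea
  have : √π ^ m = π ^ ((m : ℝ) / 2) := by
    rw [Real.sqrt_eq_rpow, ← Real.rpow_natCast, ← Real.rpow_mul Real.pi_pos.le]
    congr 1; ring
  rw [this]
  field_simp

lemma tan_image : Real.tan '' Set.Ioo 0 (π / 2) = Set.Ioi 0 := by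
  ext r
  constructor
  · rintro ⟨θ, hθ, rfl⟩
    exact Real.tan_pos_of_pos_of_lt_pi_div_two hθ.1 hθ.2
  · intro hr
    refine ⟨Real.arctan r, ⟨?_, Real.arctan_lt_pi_div_two r⟩, Real.tan_arctan r⟩
    exact Real.arctan_pos.mpr hr

lemma radial_integral (m : ℕ) (hm : 1 ≤ m) (h : ℝ → ℝ) :
    ∫ z : Eu m, h (1 / √(1 + ‖z‖ ^ 2)) * (1 + ‖z‖ ^ 2) ^ (aa m) =
      sphereArea m * ∫ θ in (0:ℝ)..(π / 2), h (Real.cos θ) * Real.sin θ ^ (m - 1) := by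
  have : Nonempty (Fin m) := ⟨⟨0, hm⟩⟩
  have : Nontrivial (Eu m) := inferInstance
  have h1 := integral_fun_norm_addHaar (volume : Measure (Eu m))
    (fun r : ℝ => h (1 / √(1 + r ^ 2)) * (1 + r ^ 2) ^ (aa m))
  rw [h1]
  simp only [finrank_euclideanSpace, Fintype.card_fin, smul_eq_mul, nsmul_eq_mul]
  rw [← mul_assoc, ball_area m hm]
  congr 1
  rw [← tan_image, integral_image_eq_integral_abs_deriv_smul (f' := fun θ => 1 / Real.cos θ ^ 2)
    measurableSet_Ioo]
  · rw [intervalIntegral.integral_of_le (by positivity), integral_Ioc_eq_integral_Ioo]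
    apply setIntegral_congr_fun measurableSet_Ioo
    intro θ hθ
    have hc : 0 < Real.cos θ := Real.cos_pos_of_mem_Ioo ⟨by linarith [hθ.1, Real.pi_pos], hθ.2⟩
    have hQ : 1 + Real.tan θ ^ 2 = (Real.cos θ ^ 2)⁻¹ := by
      rw [← Real.inv_one_add_tan_sq hc.ne', inv_inv]
    have hsq : 1 / √((Real.cos θ ^ 2)⁻¹) = Real.cos θ := by
      rw [Real.sqrt_inv, Real.sqrt_sq hc.le]; simp
    have hp : ((Real.cos θ ^ 2)⁻¹) ^ (aa m) = Real.cos θ ^ (m + 1) := by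
      rw [← Real.rpow_natCast, ← Real.rpow_natCast, ← Real.rpow_neg hc.le, ← Real.rpow_mul hc.le]
      congr 1
      push_cast
      simp only [aa]
      ring
    simp only [smul_eq_mul]
    rw [hQ, hsq, hp, abs_of_pos (by positivity), Real.tan_eq_sin_div_cos, div_pow]
    obtain ⟨k, rfl⟩ : ∃ k, m = k + 1 := ⟨m - 1, by omega⟩
    simp only [Nat.add_sub_cancel]
    field_simp
    ring
  · intro θ hθ
    have hc : 0 < Real.cos θ := Real.cos_pos_of_mem_Ioo ⟨by linarith [hθ.1, Real.pi_pos], hθ.2⟩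
    exact (Real.hasDerivAt_tan hc.ne').hasDerivWithinAt
  · apply Real.injOn_tan.mono
    intro θ hθ
    exact ⟨by linarith [hθ.1, Real.pi_pos], hθ.2⟩

lemma sin_pow_int (k : ℕ) : ∫ θ in (0:ℝ)..(π / 2), Real.sin θ ^ k =
    √π * Real.Gamma (((k : ℝ) + 1) / 2) / (2 * Real.Gamma ((k : ℝ) / 2 + 1)) := by
  induction k using Nat.twoStepInduction with
  | zero =>
    simp only [pow_zero, Nat.cast_zero]
    norm_num
    rw [Real.Gamma_one_half_eq]
    rw [Real.mul_self_sqrt Real.pi_pos.le]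
  | one =>
    simp only [pow_one, integral_sin]
    norm_num
    rw [show (3 / 2 : ℝ) = 1 / 2 + 1 by norm_num, Real.Gamma_add_one (by norm_num),
      Real.Gamma_one_half_eq]
    have := Real.pi_pos
    field_simp
  | more k ih _ =>
    rw [integral_sin_pow, ih]
    have hk : (0:ℝ) ≤ k := Nat.cast_nonneg k
    have e1 : (((k + 2 : ℕ) : ℝ) + 1) / 2 = ((k : ℝ) + 1) / 2 + 1 := by push_cast; ring
    have e2 : (((k + 2 : ℕ) : ℝ)) / 2 + 1 = ((k : ℝ) / 2 + 1) + 1 := by push_cast; ring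
    rw [e1, e2, Real.Gamma_add_one (s := ((k : ℝ) + 1) / 2) (by positivity),
      Real.Gamma_add_one (s := (k : ℝ) / 2 + 1) (by positivity)]
    have hG : 0 < Real.Gamma ((k : ℝ) / 2 + 1) := Real.Gamma_pos_of_pos (by positivity)
    simp only [Real.sin_zero, Real.cos_pi_div_two]
    rw [zero_pow (by omega)]
    field_simp
    ring

lemma poisson_norm (m : ℕ) (hm : 1 ≤ m) :
    2 / sphereArea (m + 1) * ∫ z : Eu m, (1 + ‖z‖ ^ 2) ^ (aa m) = 1 := by
  have h := radial_integral m hm (fun _ => 1)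
  simp only [one_mul] at h
  rw [h, sin_pow_int]
  obtain ⟨k, rfl⟩ : ∃ k, m = k + 1 := ⟨m - 1, by omega⟩
  simp only [Nat.add_sub_cancel]
  unfold sphereArea
  have e1 : (((k + 1 : ℕ) : ℝ)) / 2 = ((k : ℝ) + 1) / 2 := by push_cast; ring
  have e2 : (((k + 1 + 1 : ℕ) : ℝ)) / 2 = (k : ℝ) / 2 + 1 := by push_cast; ring
  rw [e1, e2]
  have hG : 0 < Real.Gamma ((k : ℝ) / 2 + 1) := Real.Gamma_pos_of_pos (by positivity)
  have hG' : 0 < Real.Gamma (((k : ℝ) + 1) / 2) := Real.Gamma_pos_of_pos (by positivity)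
  have e3 : π ^ ((k : ℝ) / 2 + 1) = π ^ (((k : ℝ) + 1) / 2) * √π := by
    rw [Real.sqrt_eq_rpow, ← Real.rpow_add Real.pi_pos]
    congr 1; ring
  rw [e3]
  have hp : 0 < π ^ (((k : ℝ) + 1) / 2) := by positivity
  have hp2 : 0 < √π := by positivity
  field_simp

lemma Econst_eq (m : ℕ) (hm : 1 ≤ m) :
    Econst (m + 1) = 4 / sphereArea (m + 1) *
      ∫ z : Eu m, √(1 + ((m : ℝ) + 1) * ((m : ℝ) - 1) * (1 + ‖z‖ ^ 2)⁻¹) * (1 + ‖z‖ ^ 2) ^ (aa m) := by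
  have h := radial_integral m hm (fun c => √(1 + ((m : ℝ) + 1) * ((m : ℝ) - 1) * c ^ 2))
  have e : ∀ z : Eu m, (1 / √(1 + ‖z‖ ^ 2)) ^ 2 = (1 + ‖z‖ ^ 2)⁻¹ := by
    intro z
    rw [div_pow, Real.sq_sqrt (by positivity)]; simp
  simp only [e] at h
  rw [h]
  unfold Econst
  have e1 : m + 1 - 2 = m - 1 := by omega
  simp only [Nat.add_sub_cancel, e1]
  push_cast
  have e2 : (m : ℝ) + 1 - 2 = m - 1 := by ring
  rw [e2]
  ring

/-! ### The Poisson kernel -/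

lemma D2.congr {φ ψ : ℝ → ℝ} {a : ℝ} (h : D2 φ a) (k : φ =ᶠ[nhds 0] ψ) : D2 ψ a := by
  obtain ⟨φ', h1, h2⟩ := h
  refine ⟨φ', ?_, h2⟩
  filter_upwards [h1, k.eventuallyEq_nhds] with s hs ks
  exact hs.congr_of_eventuallyEq ks.symm

/-- `|z|²+t²` -/
def QQ {m : ℕ} (z : Eu m) (t : ℝ) : ℝ := ‖z‖ ^ 2 + t ^ 2
/-- Poisson kernel (unnormalised) -/
def kk {m : ℕ} (z : Eu m) (t : ℝ) : ℝ := t * QQ z t ^ aa m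
/-- tangential derivative -/
def kd {m : ℕ} (i : Fin m) (z : Eu m) (t : ℝ) : ℝ := 2 * aa m * t * z i * QQ z t ^ (aa m - 1)
/-- second tangential derivative -/
def kdd {m : ℕ} (i : Fin m) (z : Eu m) (t : ℝ) : ℝ :=
  2 * aa m * t * QQ z t ^ (aa m - 1)
    + 4 * aa m * (aa m - 1) * t * z i ^ 2 * QQ z t ^ (aa m - 1 - 1)
/-- normal derivative -/
def kt {m : ℕ} (z : Eu m) (t : ℝ) : ℝ := QQ z t ^ aa m + 2 * aa m * t ^ 2 * QQ z t ^ (aa m - 1)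
/-- second normal derivative -/
def ktt {m : ℕ} (z : Eu m) (t : ℝ) : ℝ :=
  6 * aa m * t * QQ z t ^ (aa m - 1)
    + 4 * aa m * (aa m - 1) * t ^ 3 * QQ z t ^ (aa m - 1 - 1)

lemma QQ_pos {m : ℕ} (z : Eu m) {t : ℝ} (ht : 0 < t) : 0 < QQ z t := by
  unfold QQ; positivity

lemma QQ_deriv_y {m : ℕ} (i : Fin m) (z : Eu m) (t s : ℝ) :
    HasDerivAt (fun s : ℝ => QQ (z + s • ee i) t) (2 * (z + s • ee i) i) s := by
  have h1 : HasDerivAt (fun s : ℝ => ‖z‖ ^ 2 + 2 * z i * s + 1 * s ^ 2 + t ^ 2)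
      (2 * (z + s • ee i) i) s := by
    have := (((hasDerivAt_id' s).const_mul (2 * z i)).const_add (‖z‖ ^ 2)).add
      ((hasDerivAt_pow 2 s).const_mul 1)
    refine (this.add_const (t ^ 2)).congr_deriv ?_
    simp; ring
  refine h1.congr_of_eventuallyEq (Eventually.of_forall fun s => ?_)
  simp only [QQ, norm_add_single_sq]

lemma QQ_deriv_t {m : ℕ} (z : Eu m) (t : ℝ) :
    HasDerivAt (fun t : ℝ => QQ z t) (2 * t) t := by
  unfold QQ
  have := (hasDerivAt_pow 2 t).const_add (‖z‖ ^ 2)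
  refine this.congr_deriv ?_
  simp

lemma coord_deriv {m : ℕ} (i : Fin m) (z : Eu m) (s : ℝ) :
    HasDerivAt (fun s : ℝ => (z + s • ee i) i) 1 s := by
  have : HasDerivAt (fun s : ℝ => z i + s) 1 s := (hasDerivAt_id' s).const_add _
  refine this.congr_of_eventuallyEq (Eventually.of_forall fun s => ?_)
  simp

lemma kk_deriv_y {m : ℕ} (i : Fin m) (z : Eu m) {t : ℝ} (ht : 0 < t) (s : ℝ) :
    HasDerivAt (fun s : ℝ => kk (z + s • ee i) t) (kd i (z + s • ee i) t) s := by
  have h := ((QQ_deriv_y i z t s).rpow_const (p := aa m)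
    (Or.inl (QQ_pos (z + s • ee i) ht).ne')).const_mul t
  refine h.congr_deriv ?_
  unfold kd; ring

lemma kd_deriv_y {m : ℕ} (i : Fin m) (z : Eu m) {t : ℝ} (ht : 0 < t) (s : ℝ) :
    HasDerivAt (fun s : ℝ => kd i (z + s • ee i) t) (kdd i (z + s • ee i) t) s := by
  have h := ((coord_deriv i z s).const_mul (2 * aa m * t)).mul
    ((QQ_deriv_y i z t s).rpow_const (p := aa m - 1) (Or.inl (QQ_pos (z + s • ee i) ht).ne'))
  refine h.congr_deriv ?_
  unfold kdd; ring

lemma kk_deriv_t {m : ℕ} (z : Eu m) {t : ℝ} (ht : 0 < t) :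
    HasDerivAt (fun t : ℝ => kk z t) (kt z t) t := by
  have h := (hasDerivAt_id' t).mul
    ((QQ_deriv_t z t).rpow_const (p := aa m) (Or.inl (QQ_pos z ht).ne'))
  refine h.congr_deriv ?_
  unfold kt; ring

lemma kt_deriv_t {m : ℕ} (z : Eu m) {t : ℝ} (ht : 0 < t) :
    HasDerivAt (fun t : ℝ => kt z t) (ktt z t) t := by
  have h := ((QQ_deriv_t z t).rpow_const (p := aa m) (Or.inl (QQ_pos z ht).ne')).add
    (((hasDerivAt_pow 2 t).const_mul (2 * aa m)).mul
    ((QQ_deriv_t z t).rpow_const (p := aa m - 1) (Or.inl (QQ_pos z ht).ne')))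
  refine h.congr_deriv ?_
  unfold ktt; simp; ring

lemma kk_harm {m : ℕ} (z : Eu m) {t : ℝ} (ht : 0 < t) :
    ∑ i, kdd i z t + ktt z t = 0 := by
  have hQ := QQ_pos z ht
  have h1 : QQ z t ^ (aa m - 1) = QQ z t * QQ z t ^ (aa m - 1 - 1) := by
    rw [Real.rpow_sub_one hQ.ne' (aa m - 1)]; field_simp
  have h2 : ∑ i, z i ^ 2 = ‖z‖ ^ 2 := by
    rw [EuclideanSpace.norm_sq_eq]; simp
  unfold kdd ktt
  have h4 : ∑ x, 4 * aa m * (aa m - 1) * t * z x ^ 2 * QQ z t ^ (aa m - 1 - 1)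
      = 4 * aa m * (aa m - 1) * t * ‖z‖ ^ 2 * QQ z t ^ (aa m - 1 - 1) := by
    rw [← Finset.sum_mul, ← Finset.mul_sum, h2]
  rw [Finset.sum_add_distrib, h4]
  simp only [Finset.sum_const, Finset.card_univ, Fintype.card_fin, nsmul_eq_mul]
  rw [h1]
  have h3 : ‖z‖ ^ 2 = QQ z t - t ^ 2 := by unfold QQ; ring
  rw [h3]
  simp only [aa]
  ring

/-- the weight -/
def ww {m : ℕ} (z : Eu m) : ℝ := (1 + ‖z‖ ^ 2) ^ aa m

lemma ww_nonneg {m : ℕ} (z : Eu m) : 0 ≤ ww z := by unfold ww; positivity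

lemma ww_int (m : ℕ) : Integrable (ww : Eu m → ℝ) := by
  have := integrable_rpow_neg_one_add_norm_sq (E := Eu m) (μ := volume) (r := (m : ℝ) + 1)
    (by simp)
  exact this

lemma ww_cont (m : ℕ) : Continuous (ww : Eu m → ℝ) := by
  unfold ww
  apply Continuous.rpow_const (by fun_prop)
  intro z; left; positivity

lemma QQ_weight {m : ℕ} (ρ τ : ℝ) (hρ : 0 ≤ ρ) (hτ : 0 < τ) :
    ∃ B, 0 ≤ B ∧ ∀ (y z : Eu m) (t : ℝ), ‖y‖ ≤ ρ → τ ≤ t → QQ (y - z) t ^ aa m ≤ B * ww z := by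
  set D : ℝ := 2 + (1 + 2 * ρ ^ 2) / τ ^ 2 with hD
  have hDp : 0 < D := by positivity
  refine ⟨(1 / D) ^ aa m, by positivity, ?_⟩
  intro y z t hy ht
  have ht0 : 0 < t := lt_of_lt_of_le hτ ht
  have hQ := QQ_pos (y - z) ht0
  have h1 : 1 + ‖z‖ ^ 2 ≤ D * QQ (y - z) t := by
    have h2 : ‖z‖ ≤ ‖y - z‖ + ρ := by
      have : ‖z‖ ≤ ‖y - z‖ + ‖y‖ := by
        have := norm_sub_le y (y - z)
        simp at this
        linarith
      linarith
    have h3 : ‖z‖ ^ 2 ≤ 2 * ‖y - z‖ ^ 2 + 2 * ρ ^ 2 := by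
      have : ‖z‖ ^ 2 ≤ (‖y - z‖ + ρ) ^ 2 := by gcongr
      nlinarith [sq_nonneg (‖y - z‖ - ρ)]
    have h4 : τ ^ 2 ≤ t ^ 2 := by gcongr
    have h5 : 1 + 2 * ρ ^ 2 ≤ (1 + 2 * ρ ^ 2) / τ ^ 2 * QQ (y - z) t := by
      rw [div_mul_eq_mul_div, le_div_iff₀ (by positivity)]
      apply mul_le_mul_of_nonneg_left _ (by positivity)
      unfold QQ; nlinarith [sq_nonneg ‖y - z‖]
    have h6 : 2 * ‖y - z‖ ^ 2 ≤ 2 * QQ (y - z) t := by unfold QQ; nlinarith [sq_nonneg t]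
    rw [hD, add_mul]
    linarith
  unfold ww
  rw [← Real.mul_rpow (by positivity) (by positivity)]
  apply Real.rpow_le_rpow_of_nonpos (by positivity)
  · rw [one_div, inv_mul_le_iff₀ hDp]; exact h1
  · simp only [aa]
    have : (0:ℝ) ≤ m := Nat.cast_nonneg m
    linarith

lemma kernel_crude {m : ℕ} (τ T : ℝ) (hτ : 0 < τ) (hτT : τ ≤ T) :
    ∃ B, 0 ≤ B ∧ ∀ (z : Eu m) (t : ℝ), τ ≤ t → t ≤ T →
      |kk z t| ≤ B * QQ z t ^ aa m ∧ (∀ i, |kd i z t| ≤ B * QQ z t ^ aa m) ∧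
      (∀ i, |kdd i z t| ≤ B * QQ z t ^ aa m) ∧ |kt z t| ≤ B * QQ z t ^ aa m ∧
      |ktt z t| ≤ B * QQ z t ^ aa m := by
  set α := |aa m| with hα
  set β := |aa m - 1| with hβ
  set σ := 1 / τ ^ 2 with hσ
  have hT : 0 < T := lt_of_lt_of_le hτ hτT
  set B := T + 2 * α * T * (1 + σ) + (2 * α * T * σ + 4 * α * β * T * σ) + (1 + 2 * α * T ^ 2 * σ)
    + (6 * α * T * σ + 4 * α * β * T * σ) with hB
  have hα0 : 0 ≤ α := abs_nonneg _
  have hβ0 : 0 ≤ β := abs_nonneg _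
  have hσ0 : 0 ≤ σ := by positivity
  refine ⟨B, by positivity, ?_⟩
  intro z t h1 h2
  have ht : 0 < t := lt_of_lt_of_le hτ h1
  have hQ := QQ_pos z ht
  have hW : 0 < QQ z t ^ aa m := by positivity
  have e1 : QQ z t ^ (aa m - 1) = QQ z t ^ aa m * (1 / QQ z t) := by
    rw [Real.rpow_sub_one hQ.ne']; ring
  have e2 : QQ z t ^ (aa m - 1 - 1) = QQ z t ^ aa m * (1 / QQ z t) * (1 / QQ z t) := by
    rw [Real.rpow_sub_one hQ.ne', e1]; ring
  have hi0 : 0 ≤ 1 / QQ z t := by positivity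
  have hi : 1 / QQ z t ≤ σ := by
    rw [hσ]
    apply one_div_le_one_div_of_le (by positivity)
    have : τ ^ 2 ≤ t ^ 2 := by gcongr
    unfold QQ; nlinarith [sq_nonneg ‖z‖]
  have ht2 : t ^ 2 * (1 / QQ z t) ≤ 1 := by
    rw [mul_one_div, div_le_one hQ]
    unfold QQ; nlinarith [sq_nonneg ‖z‖]
  have hzi : ∀ i, z i ^ 2 * (1 / QQ z t) ≤ 1 := by
    intro i
    rw [mul_one_div, div_le_one hQ]
    have : z i ^ 2 ≤ ‖z‖ ^ 2 := by
      have := PiLp.norm_apply_le z i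
      rw [Real.norm_eq_abs] at this
      rw [← sq_abs]; gcongr
    unfold QQ; nlinarith [sq_nonneg t]
  have hzi' : ∀ i, |z i| * (1 / QQ z t) ≤ 1 + σ := by
    intro i
    have a1 : |z i| ≤ z i ^ 2 + 1 := by nlinarith [sq_abs (z i), sq_nonneg (|z i| - 1), abs_nonneg (z i)]
    calc |z i| * (1 / QQ z t) ≤ (z i ^ 2 + 1) * (1 / QQ z t) := by gcongr
      _ = z i ^ 2 * (1 / QQ z t) + 1 / QQ z t := by ring
      _ ≤ 1 + σ := by linarith [hzi i]
  have p1 : 0 ≤ 2 * α * T * (1 + σ) := by positivity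
  have p2 : 0 ≤ 2 * α * T * σ + 4 * α * β * T * σ := by positivity
  have p3 : 0 ≤ 1 + 2 * α * T ^ 2 * σ := by positivity
  have p4 : 0 ≤ 6 * α * T * σ + 4 * α * β * T * σ := by positivity
  refine ⟨?_, ?_, ?_, ?_, ?_⟩
  · unfold kk
    rw [abs_mul, abs_of_pos ht, abs_of_pos hW]
    apply mul_le_mul_of_nonneg_right _ hW.le
    linarith
  · intro i
    unfold kd
    rw [e1]
    calc |2 * aa m * t * z i * (QQ z t ^ aa m * (1 / QQ z t))|
        = (2 * α * t * (|z i| * (1 / QQ z t))) * QQ z t ^ aa m := by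
          simp only [abs_mul, abs_of_pos ht, abs_of_pos hW, abs_of_nonneg hi0, ← hα]
          rw [abs_of_pos (by norm_num : (0:ℝ) < 2)]; ring
      _ ≤ (2 * α * T * (1 + σ)) * QQ z t ^ aa m := by
          have := hzi' i
          gcongr
      _ ≤ B * QQ z t ^ aa m := by
          apply mul_le_mul_of_nonneg_right _ hW.le
          linarith
  · intro i
    unfold kdd
    rw [e1, e2]
    calc |2 * aa m * t * (QQ z t ^ aa m * (1 / QQ z t)) + 4 * aa m * (aa m - 1) * t * z i ^ 2 *
            (QQ z t ^ aa m * (1 / QQ z t) * (1 / QQ z t))|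
        ≤ |2 * aa m * t * (QQ z t ^ aa m * (1 / QQ z t))| + |4 * aa m * (aa m - 1) * t * z i ^ 2 *
            (QQ z t ^ aa m * (1 / QQ z t) * (1 / QQ z t))| := abs_add_le _ _
      _ = (2 * α * t * (1 / QQ z t) + 4 * α * β * t * ((z i ^ 2 * (1 / QQ z t)) * (1 / QQ z t)))
            * QQ z t ^ aa m := by
          simp only [abs_mul, abs_of_pos ht, abs_of_pos hW, abs_of_nonneg hi0, ← hα, ← hβ,
            abs_of_nonneg (sq_nonneg (z i))]
          rw [abs_of_pos (by norm_num : (0:ℝ) < 2), abs_of_pos (by norm_num : (0:ℝ) < 4)]; ring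
      _ ≤ (2 * α * T * σ + 4 * α * β * T * (1 * σ)) * QQ z t ^ aa m := by
          have := hzi i
          gcongr
      _ ≤ B * QQ z t ^ aa m := by
          apply mul_le_mul_of_nonneg_right _ hW.le
          linarith
  · unfold kt
    rw [e1]
    calc |QQ z t ^ aa m + 2 * aa m * t ^ 2 * (QQ z t ^ aa m * (1 / QQ z t))|
        ≤ |QQ z t ^ aa m| + |2 * aa m * t ^ 2 * (QQ z t ^ aa m * (1 / QQ z t))| := abs_add_le _ _
      _ = (1 + 2 * α * t ^ 2 * (1 / QQ z t)) * QQ z t ^ aa m := by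
          simp only [abs_mul, abs_of_pos (pow_pos ht 2), abs_of_pos hW, abs_of_nonneg hi0, ← hα]
          rw [abs_of_pos (by norm_num : (0:ℝ) < 2)]; ring
      _ ≤ (1 + 2 * α * T ^ 2 * σ) * QQ z t ^ aa m := by gcongr
      _ ≤ B * QQ z t ^ aa m := by
          apply mul_le_mul_of_nonneg_right _ hW.le
          linarith
  · unfold ktt
    rw [e1, e2]
    calc |6 * aa m * t * (QQ z t ^ aa m * (1 / QQ z t)) + 4 * aa m * (aa m - 1) * t ^ 3 *
            (QQ z t ^ aa m * (1 / QQ z t) * (1 / QQ z t))|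
        ≤ |6 * aa m * t * (QQ z t ^ aa m * (1 / QQ z t))| + |4 * aa m * (aa m - 1) * t ^ 3 *
            (QQ z t ^ aa m * (1 / QQ z t) * (1 / QQ z t))| := abs_add_le _ _
      _ = (6 * α * t * (1 / QQ z t) + 4 * α * β * t * ((t ^ 2 * (1 / QQ z t)) * (1 / QQ z t)))
            * QQ z t ^ aa m := by
          simp only [abs_mul, abs_of_pos ht, abs_of_pos (pow_pos ht 3), abs_of_pos hW,
            abs_of_nonneg hi0, ← hα, ← hβ]
          rw [abs_of_pos (by norm_num : (0:ℝ) < 6), abs_of_pos (by norm_num : (0:ℝ) < 4)]; ring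
      _ ≤ (6 * α * T * σ + 4 * α * β * T * (1 * σ)) * QQ z t ^ aa m := by
          gcongr
      _ ≤ B * QQ z t ^ aa m := by
          apply mul_le_mul_of_nonneg_right _ hW.le
          linarith

lemma kernel_bound {m : ℕ} (ρ τ T : ℝ) (hρ : 0 ≤ ρ) (hτ : 0 < τ) (hτT : τ ≤ T) :
    ∃ B, 0 ≤ B ∧ ∀ (y z : Eu m) (t : ℝ), ‖y‖ ≤ ρ → τ ≤ t → t ≤ T →
      |kk (y - z) t| ≤ B * ww z ∧ (∀ i, |kd i (y - z) t| ≤ B * ww z) ∧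
      (∀ i, |kdd i (y - z) t| ≤ B * ww z) ∧ |kt (y - z) t| ≤ B * ww z ∧
      |ktt (y - z) t| ≤ B * ww z := by
  obtain ⟨B1, hB1, h1⟩ := QQ_weight (m := m) ρ τ hρ hτ
  obtain ⟨B2, hB2, h2⟩ := kernel_crude (m := m) τ T hτ hτT
  refine ⟨B2 * B1, by positivity, ?_⟩
  intro y z t hy ht hT
  have a := h1 y z t hy ht
  obtain ⟨b1, b2, b3, b4, b5⟩ := h2 (y - z) t ht hT
  have : B2 * QQ (y - z) t ^ aa m ≤ B2 * B1 * ww z := by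
    rw [mul_assoc]; gcongr
  exact ⟨b1.trans this, fun i => (b2 i).trans this, fun i => (b3 i).trans this, b4.trans this,
    b5.trans this⟩

lemma QQ_pow_cont {m : ℕ} {t : ℝ} (ht : 0 < t) (a : ℝ) :
    Continuous (fun z : Eu m => QQ z t ^ a) := by
  apply Continuous.rpow_const
  · unfold QQ; fun_prop
  · intro z; left; exact (QQ_pos z ht).ne'

lemma kernel_cont {m : ℕ} {t : ℝ} (ht : 0 < t) :
    Continuous (fun z : Eu m => kk z t) ∧ (∀ i, Continuous (fun z : Eu m => kd i z t)) ∧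
    (∀ i, Continuous (fun z : Eu m => kdd i z t)) ∧ Continuous (fun z : Eu m => kt z t) ∧
    Continuous (fun z : Eu m => ktt z t) := by
  have h := QQ_pow_cont (m := m) ht
  have h1 := h (aa m)
  have h2 := h (aa m - 1)
  have h3 := h (aa m - 1 - 1)
  refine ⟨?_, fun i => ?_, fun i => ?_, ?_, ?_⟩
  · unfold kk; fun_prop
  · unfold kd; fun_prop
  · unfold kdd; fun_prop
  · unfold kt; fun_prop
  · unfold ktt; fun_prop

/-! ### The Poisson integral -/

lemma weight_integrable {m : ℕ} {K f : Eu m → ℝ} {B C : ℝ} (hK : Continuous K) (hf : Continuous f)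
    (hKB : ∀ z, |K z| ≤ B * ww z) (hfC : ∀ z, |f z| ≤ C) : Integrable (fun z => K z * f z) := by
  refine Integrable.mono' (g := fun z => B * C * ww z) ((ww_int m).const_mul _)
    (hK.mul hf).aestronglyMeasurable (Eventually.of_forall fun z => ?_)
  rw [Real.norm_eq_abs, abs_mul]
  have h1 := hKB z
  have h2 := hfC z
  calc |K z| * |f z| ≤ (B * ww z) * C :=
        mul_le_mul h1 h2 (abs_nonneg _) ((abs_nonneg _).trans h1)
    _ = B * C * ww z := by ring

lemma param_deriv {m : ℕ} {f : Eu m → ℝ} {C : ℝ} (hf : Continuous f) (hfC : ∀ z, |f z| ≤ C)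
    (K K' : ℝ → Eu m → ℝ) (s0 r B : ℝ) (hr : 0 < r)
    (hd : ∀ s ∈ ball s0 r, ∀ z, HasDerivAt (fun s => K s z) (K' s z) s)
    (hKc : ∀ s ∈ ball s0 r, Continuous (K s)) (hKc' : ∀ s ∈ ball s0 r, Continuous (K' s))
    (hKB : ∀ s ∈ ball s0 r, ∀ z, |K s z| ≤ B * ww z)
    (hKB' : ∀ s ∈ ball s0 r, ∀ z, |K' s z| ≤ B * ww z) :
    HasDerivAt (fun s => ∫ z, K s z * f z) (∫ z, K' s0 z * f z) s0 := by
  have hs0 : s0 ∈ ball s0 r := mem_ball_self hr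
  refine (hasDerivAt_integral_of_dominated_loc_of_deriv_le (μ := volume)
    (bound := fun z => B * C * ww z)
    (F := fun s z => K s z * f z) (F' := fun s z => K' s z * f z) (ball_mem_nhds s0 hr) ?_ ?_ ?_ ?_ ?_ ?_).2
  · filter_upwards [ball_mem_nhds s0 hr] with s hs
    exact ((hKc s hs).mul hf).aestronglyMeasurable
  · exact weight_integrable (hKc s0 hs0) hf (hKB s0 hs0) hfC
  · exact ((hKc' s0 hs0).mul hf).aestronglyMeasurable
  · refine Eventually.of_forall fun z s hs => ?_
    rw [Real.norm_eq_abs, abs_mul]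
    have h1 := hKB' s hs z
    have h2 := hfC z
    calc |K' s z| * |f z| ≤ (B * ww z) * C :=
          mul_le_mul h1 h2 (abs_nonneg _) ((abs_nonneg _).trans h1)
      _ = B * C * ww z := by ring
  · exact (ww_int m).const_mul _
  · exact Eventually.of_forall fun z s hs => (hd s hs z).mul_const _

/-- unnormalised Poisson integral -/
def PI {m : ℕ} (f : Eu m → ℝ) (y : Eu m) (t : ℝ) : ℝ := ∫ z, kk (y - z) t * f z

lemma PI_deriv_t {m : ℕ} {f : Eu m → ℝ} {C : ℝ} (hf : Continuous f) (hfC : ∀ z, |f z| ≤ C)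
    (y : Eu m) {t : ℝ} (ht : 0 < t) :
    HasDerivAt (fun t => PI f y t) (∫ z, kt (y - z) t * f z) t := by
  obtain ⟨B, hB0, hB⟩ := kernel_bound (m := m) ‖y‖ (t / 2) (2 * t) (norm_nonneg _) (by linarith)
    (by linarith)
  have hb : ∀ s ∈ ball t (t / 2), t / 2 < s ∧ s < 2 * t := by
    intro s hs
    rw [mem_ball, Real.dist_eq, abs_lt] at hs
    constructor <;> linarith [hs.1, hs.2]
  refine param_deriv hf hfC (fun s z => kk (y - z) s) (fun s z => kt (y - z) s) t (t / 2) B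
    (by linarith) ?_ ?_ ?_ ?_ ?_
  · intro s hs z
    exact kk_deriv_t (y - z) (by linarith [(hb s hs).1])
  · intro s hs
    exact (kernel_cont (by linarith [(hb s hs).1])).1.comp (by fun_prop : Continuous fun z => y - z)
  · intro s hs
    exact (kernel_cont (by linarith [(hb s hs).1])).2.2.2.1.comp
      (by fun_prop : Continuous fun z => y - z)
  · intro s hs z
    exact (hB y z s le_rfl (hb s hs).1.le (hb s hs).2.le).1
  · intro s hs z
    exact (hB y z s le_rfl (hb s hs).1.le (hb s hs).2.le).2.2.2.1

lemma PI_deriv_tt {m : ℕ} {f : Eu m → ℝ} {C : ℝ} (hf : Continuous f) (hfC : ∀ z, |f z| ≤ C)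
    (y : Eu m) {t : ℝ} (ht : 0 < t) :
    HasDerivAt (fun t => ∫ z, kt (y - z) t * f z) (∫ z, ktt (y - z) t * f z) t := by
  obtain ⟨B, hB0, hB⟩ := kernel_bound (m := m) ‖y‖ (t / 2) (2 * t) (norm_nonneg _) (by linarith)
    (by linarith)
  have hb : ∀ s ∈ ball t (t / 2), t / 2 < s ∧ s < 2 * t := by
    intro s hs
    rw [mem_ball, Real.dist_eq, abs_lt] at hs
    constructor <;> linarith [hs.1, hs.2]
  refine param_deriv hf hfC (fun s z => kt (y - z) s) (fun s z => ktt (y - z) s) t (t / 2) B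
    (by linarith) ?_ ?_ ?_ ?_ ?_
  · intro s hs z
    exact kt_deriv_t (y - z) (by linarith [(hb s hs).1])
  · intro s hs
    exact (kernel_cont (by linarith [(hb s hs).1])).2.2.2.1.comp
      (by fun_prop : Continuous fun z => y - z)
  · intro s hs
    exact (kernel_cont (by linarith [(hb s hs).1])).2.2.2.2.comp
      (by fun_prop : Continuous fun z => y - z)
  · intro s hs z
    exact (hB y z s le_rfl (hb s hs).1.le (hb s hs).2.le).2.2.2.1
  · intro s hs z
    exact (hB y z s le_rfl (hb s hs).1.le (hb s hs).2.le).2.2.2.2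

lemma norm_add_ee_le {m : ℕ} (y : Eu m) (i : Fin m) (s s0 : ℝ) (hs : s ∈ ball s0 1) :
    ‖y + s • ee i‖ ≤ ‖y‖ + (|s0| + 1) := by
  refine (norm_add_le _ _).trans ?_
  have h1 : ‖s • (ee i : Eu m)‖ = |s| := by simp [norm_smul]
  rw [mem_ball, Real.dist_eq] at hs
  have h2 : |s| ≤ |s0| + 1 := by
    have := abs_sub_abs_le_abs_sub s s0
    linarith
  linarith

lemma PI_deriv_y {m : ℕ} {f : Eu m → ℝ} {C : ℝ} (hf : Continuous f) (hfC : ∀ z, |f z| ≤ C)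
    (y : Eu m) (i : Fin m) {t : ℝ} (ht : 0 < t) (s0 : ℝ) :
    HasDerivAt (fun s : ℝ => PI f (y + s • ee i) t) (∫ z, kd i (y + s0 • ee i - z) t * f z) s0 := by
  obtain ⟨B, hB0, hB⟩ := kernel_bound (m := m) (‖y‖ + (|s0| + 1)) t t (by positivity) ht le_rfl
  have hc := kernel_cont (m := m) ht
  refine param_deriv hf hfC (fun s z => kk (y + s • ee i - z) t)
    (fun s z => kd i (y + s • ee i - z) t) s0 1 B one_pos ?_ ?_ ?_ ?_ ?_
  · intro s hs z
    have := kk_deriv_y i (y - z) ht s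
    simpa only [sub_add_eq_add_sub] using this
  · intro s hs
    exact hc.1.comp (by fun_prop : Continuous fun z => y + s • ee i - z)
  · intro s hs
    exact (hc.2.1 i).comp (by fun_prop : Continuous fun z => y + s • ee i - z)
  · intro s hs z
    exact (hB _ z t (norm_add_ee_le y i s s0 hs) le_rfl le_rfl).1
  · intro s hs z
    exact (hB _ z t (norm_add_ee_le y i s s0 hs) le_rfl le_rfl).2.1 i

lemma PI_deriv_yy {m : ℕ} {f : Eu m → ℝ} {C : ℝ} (hf : Continuous f) (hfC : ∀ z, |f z| ≤ C)
    (y : Eu m) (i : Fin m) {t : ℝ} (ht : 0 < t) (s0 : ℝ) :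
    HasDerivAt (fun s : ℝ => ∫ z, kd i (y + s • ee i - z) t * f z)
      (∫ z, kdd i (y + s0 • ee i - z) t * f z) s0 := by
  obtain ⟨B, hB0, hB⟩ := kernel_bound (m := m) (‖y‖ + (|s0| + 1)) t t (by positivity) ht le_rfl
  have hc := kernel_cont (m := m) ht
  refine param_deriv hf hfC (fun s z => kd i (y + s • ee i - z) t)
    (fun s z => kdd i (y + s • ee i - z) t) s0 1 B one_pos ?_ ?_ ?_ ?_ ?_
  · intro s hs z
    have := kd_deriv_y i (y - z) ht s
    simpa only [sub_add_eq_add_sub] using this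
  · intro s hs
    exact (hc.2.1 i).comp (by fun_prop : Continuous fun z => y + s • ee i - z)
  · intro s hs
    exact (hc.2.2.1 i).comp (by fun_prop : Continuous fun z => y + s • ee i - z)
  · intro s hs z
    exact (hB _ z t (norm_add_ee_le y i s s0 hs) le_rfl le_rfl).2.1 i
  · intro s hs z
    exact (hB _ z t (norm_add_ee_le y i s s0 hs) le_rfl le_rfl).2.2.1 i

lemma PI_harm {m : ℕ} {f : Eu m → ℝ} {C : ℝ} (hf : Continuous f) (hfC : ∀ z, |f z| ≤ C)
    (y : Eu m) {t : ℝ} (ht : 0 < t) : Harm (PI f) y t := by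
  obtain ⟨B, hB0, hB⟩ := kernel_bound (m := m) ‖y‖ t t (norm_nonneg _) ht le_rfl
  have hc := kernel_cont (m := m) ht
  have hcy : Continuous fun z : Eu m => y - z := by fun_prop
  refine ⟨fun i => ∫ z, kdd i (y - z) t * f z, ∫ z, ktt (y - z) t * f z, ?_, ?_, ?_⟩
  · intro i
    refine ⟨fun s => ∫ z, kd i (y + s • ee i - z) t * f z,
      Eventually.of_forall fun s => PI_deriv_y hf hfC y i ht s, ?_⟩
    have := PI_deriv_yy hf hfC y i ht 0
    simpa using this
  · refine ⟨fun s => ∫ z, kt (y - z) (t + s) * f z, ?_, ?_⟩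
    · have : ∀ᶠ s in nhds (0:ℝ), 0 < t + s := by
        have : Tendsto (fun s : ℝ => t + s) (nhds 0) (nhds t) :=
          Continuous.tendsto' (by fun_prop) _ _ (by simp)
        exact this.eventually (lt_mem_nhds ht)
      filter_upwards [this] with s hs
      exact (PI_deriv_t hf hfC y hs).comp_const_add t s
    · have h := PI_deriv_tt hf hfC y ht
      have h' : HasDerivAt (fun t => ∫ z, kt (y - z) t * f z) (∫ z, ktt (y - z) t * f z) (t + 0) := by
        simpa using h
      exact h'.comp_const_add t 0
  · rw [← integral_finsetSum, ← integral_add]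
    · have : ∀ z, ∑ i, kdd i (y - z) t * f z + ktt (y - z) t * f z = 0 := by
        intro z
        rw [← Finset.sum_mul, ← add_mul, kk_harm _ ht, zero_mul]
      simp [this]
    · exact integrable_finsetSum _ fun i _ =>
        weight_integrable ((hc.2.2.1 i).comp hcy) hf (fun z => (hB y z t le_rfl le_rfl le_rfl).2.2.1 i)
          hfC
    · exact weight_integrable (hc.2.2.2.2.comp hcy) hf
        (fun z => (hB y z t le_rfl le_rfl le_rfl).2.2.2.2) hfC
    · exact fun i _ =>
        weight_integrable ((hc.2.2.1 i).comp hcy) hf (fun z => (hB y z t le_rfl le_rfl le_rfl).2.2.1 i)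
          hfC

/-- scaled form of the Poisson integral -/
def PS {m : ℕ} (f : Eu m → ℝ) (y : Eu m) (t : ℝ) : ℝ := ∫ w, ww w * f (y - t • w)

lemma QQ_scale {m : ℕ} (w : Eu m) {t : ℝ} (ht : 0 < t) (a : ℝ) :
    QQ (t • w) t ^ a = t ^ (2 * a) * (1 + ‖w‖ ^ 2) ^ a := by
  have : QQ (t • w) t = t ^ 2 * (1 + ‖w‖ ^ 2) := by
    unfold QQ; rw [norm_smul, Real.norm_eq_abs, mul_pow, sq_abs]; ring
  rw [this, Real.mul_rpow (by positivity) (by positivity), ← Real.rpow_natCast t 2,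
    ← Real.rpow_mul ht.le]
  norm_num

lemma PI_eq_PS {m : ℕ} (f : Eu m → ℝ) (y : Eu m) {t : ℝ} (ht : 0 < t) : PI f y t = PS f y t := by
  unfold PI PS
  have h1 : ∫ z, kk (y - z) t * f z = ∫ z, kk z t * f (y - z) := by
    rw [← integral_sub_left_eq_self (fun z => kk z t * f (y - z)) volume y]
    simp
  have h2 := Measure.integral_comp_smul (volume : Measure (Eu m)) (fun z => kk z t * f (y - z)) t
  rw [h1]
  have h3 : ∀ w : Eu m, kk (t • w) t * f (y - t • w) = (t ^ m)⁻¹ * (ww w * f (y - t • w)) := by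
    intro w
    have : kk (t • w) t = (t ^ m)⁻¹ * ww w := by
      unfold kk ww
      rw [QQ_scale w ht]
      have : t * t ^ (2 * aa m) = (t ^ m)⁻¹ := by
        rw [← Real.rpow_natCast, ← Real.rpow_neg ht.le]
        nth_rewrite 1 [← Real.rpow_one t]
        rw [← Real.rpow_add ht]
        congr 1
        simp only [aa]; ring
      rw [← mul_assoc, this]
    rw [this]; ring
  simp only [h3, finrank_euclideanSpace, Fintype.card_fin, smul_eq_mul] at h2
  rw [integral_const_mul, abs_of_pos (by positivity)] at h2
  have hne : (t ^ m)⁻¹ ≠ 0 := by positivity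
  exact (mul_left_cancel₀ hne h2).symm

lemma PS_cont {m : ℕ} {f : Eu m → ℝ} {C : ℝ} (hf : Continuous f) (hfC : ∀ z, |f z| ≤ C) :
    Continuous (fun z : Eu m × ℝ => PS f z.1 z.2) := by
  unfold PS
  refine continuous_of_dominated (bound := fun w => ww w * C) ?_ ?_ ?_ ?_
  · intro z
    exact ((ww_cont m).mul (hf.comp (by fun_prop))).aestronglyMeasurable
  · intro z
    refine Eventually.of_forall fun w => ?_
    rw [norm_mul, Real.norm_eq_abs, Real.norm_eq_abs, abs_of_nonneg (ww_nonneg w)]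
    exact mul_le_mul_of_nonneg_left (hfC _) (ww_nonneg w)
  · exact (ww_int m).mul_const _
  · refine Eventually.of_forall fun w => ?_
    exact continuous_const.mul (hf.comp (by fun_prop))

lemma PS_bound {m : ℕ} {f : Eu m → ℝ} {C : ℝ} (hfC : ∀ z, |f z| ≤ C)
    (y : Eu m) (t : ℝ) : |PS f y t| ≤ (∫ w : Eu m, ww w) * C := by
  unfold PS
  rw [← integral_mul_const, ← Real.norm_eq_abs]
  refine norm_integral_le_of_norm_le ((ww_int m).mul_const _) (Eventually.of_forall fun w => ?_)
  rw [norm_mul, Real.norm_eq_abs, Real.norm_eq_abs, abs_of_nonneg (ww_nonneg w)]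
  exact mul_le_mul_of_nonneg_left (hfC _) (ww_nonneg w)

lemma PS_zero {m : ℕ} (hm : 1 ≤ m) (f : Eu m → ℝ) (y : Eu m) :
    2 / sphereArea (m + 1) * PS f y 0 = f y := by
  unfold PS
  have := poisson_norm m hm
  simp only [zero_smul, sub_zero]
  rw [integral_mul_const]
  unfold ww
  rw [← mul_assoc, this, one_mul]

lemma Harm.const_mul {m : ℕ} {g : Eu m → ℝ → ℝ} {y : Eu m} {t : ℝ} (c : ℝ) (hg : Harm g y t) :
    Harm (fun y t => c * g y t) y t := by
  obtain ⟨a, b, h1, h2, h3⟩ := hg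
  refine ⟨fun i => c * a i, c * b, fun i => (h1 i).const_mul c, h2.const_mul c, ?_⟩
  rw [← Finset.mul_sum, ← mul_add, h3, mul_zero]

lemma PS_harm {m : ℕ} {f : Eu m → ℝ} {C : ℝ} (hf : Continuous f) (hfC : ∀ z, |f z| ≤ C)
    (y : Eu m) {t : ℝ} (ht : 0 < t) : Harm (PS f) y t := by
  obtain ⟨a, b, h1, h2, h3⟩ := PI_harm hf hfC y ht
  refine ⟨a, b, fun i => (h1 i).congr ?_, h2.congr ?_, h3⟩
  · exact Eventually.of_forall fun s => PI_eq_PS f _ ht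
  · have : ∀ᶠ s in nhds (0:ℝ), 0 < t + s := by
      have : Tendsto (fun s : ℝ => t + s) (nhds 0) (nhds t) :=
        Continuous.tendsto' (by fun_prop) _ _ (by simp)
      exact this.eventually (lt_mem_nhds ht)
    filter_upwards [this] with s hs using PI_eq_PS f _ hs

/-- Poisson representation. -/
lemma poisson_rep {m : ℕ} (hm : 1 ≤ m) (g : Eu m → ℝ → ℝ)
    (hcont : ContinuousOn (fun z : Eu m × ℝ => g z.1 z.2) {z | 0 ≤ z.2})
    (hharm : ∀ y t, 0 < t → Harm g y t) (hgr : Grow g) (y : Eu m) (t : ℝ) (ht : 0 < t) :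
    g y t = 2 / sphereArea (m + 1) * PI (fun z => g z 0) y t := by
  have hgr' := hgr
  obtain ⟨⟨C, hC0, hC⟩, hg⟩ := hgr
  have hf : Continuous (fun z => g z 0) := by
    have : ContinuousOn (fun z : Eu m => ((z, 0) : Eu m × ℝ)) Set.univ := by fun_prop
    have := hcont.comp this (fun z _ => by simp)
    exact continuousOn_univ.mp this
  have hfC : ∀ z, |g z 0| ≤ C := fun z => by simpa using hC z 0 le_rfl
  set c := 2 / sphereArea (m + 1) with hc
  have hcp : 0 < c := div_pos two_pos (sphereArea_pos _ (by omega))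
  set A := (∫ w : Eu m, ww w) * C with hA
  have hA0 : 0 ≤ A := mul_nonneg (integral_nonneg fun w => ww_nonneg w) hC0
  have hPb : ∀ y t, |c * PS (fun z => g z 0) y t| ≤ c * A := by
    intro y t
    rw [abs_mul, abs_of_pos hcp]
    exact mul_le_mul_of_nonneg_left (PS_bound hfC y t) hcp.le
  have key := pl_zero (fun y t => g y t - c * PS (fun z => g z 0) y t) ?_ ?_ ?_ ?_ y t ht.le
  · rw [PI_eq_PS _ _ ht]
    linarith
  · exact hcont.sub (continuous_const.mul (PS_cont hf hfC)).continuousOn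
  · intro y t ht
    exact (hharm y t ht).sub ((PS_harm hf hfC y ht).const_mul c)
  · intro y
    rw [PS_zero hm]; simp
  · refine ⟨⟨C + c * A, by positivity, ?_⟩, ?_⟩
    · intro y t ht
      have h1 := hC y t ht
      have h2 := hPb y t
      have h3 := abs_sub (g y t) (c * PS (fun z => g z 0) y t)
      have h4 : 0 ≤ c * A * t := by positivity
      linarith
    · intro ε hε
      obtain ⟨R, hR⟩ := hg (ε / 2) (by positivity)
      refine ⟨max R (c * A / (ε / 2)), ?_⟩
      intro y t ht
      have h1 := hR y t ((le_max_left _ _).trans ht)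
      have h2 := hPb y t
      have h3 := abs_sub (g y t) (c * PS (fun z => g z 0) y t)
      have h4 : c * A ≤ ε / 2 * t := by
        have := (le_max_right R (c * A / (ε / 2))).trans ht
        rw [div_le_iff₀ (by positivity)] at this
        linarith
      linarith

/-! ### The core half-space estimate -/

lemma kk_ibp {m : ℕ} {f : Eu m → ℝ} {C : ℝ} (j : Fin m) (hf : ContDiff ℝ 1 f)
    (hfC : ∀ z, |f z| ≤ C) (hfC' : ∀ z, |fderiv ℝ f z (ee j)| ≤ C) {t : ℝ} (ht : 0 < t) :
    ∫ z, kk (0 - z) t * fderiv ℝ f z (ee j) = ∫ z, kd j (0 - z) t * f z := by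
  obtain ⟨B, hB0, hB⟩ := kernel_bound (m := m) 0 t t le_rfl ht le_rfl
  have hc := kernel_cont (m := m) ht
  have hcy : Continuous fun z : Eu m => 0 - z := by fun_prop
  have hb := fun z => hB 0 z t (by simp) le_rfl le_rfl
  have hfc : Continuous f := hf.continuous
  have hfc' : Continuous fun z => fderiv ℝ f z (ee j) :=
    (hf.continuous_fderiv one_ne_zero).clm_apply continuous_const
  have i1 : Integrable fun z => kd j (0 - z) t * f z :=
    weight_integrable ((hc.2.1 j).comp hcy) hfc (fun z => (hb z).2.1 j) hfC
  have i2 : Integrable fun z => kk (0 - z) t * fderiv ℝ f z (ee j) :=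
    weight_integrable (hc.1.comp hcy) hfc' (fun z => (hb z).1) hfC'
  have i3 : Integrable fun z => kk (0 - z) t * f z :=
    weight_integrable (hc.1.comp hcy) hfc (fun z => (hb z).1) hfC
  have := integral_bilinear_hasLineDerivAt_right_eq_neg_left_of_integrable (μ := volume)
    (B := ContinuousLinearMap.mul ℝ ℝ) (f := fun z : Eu m => kk (0 - z) t)
    (f' := fun z => - kd j (0 - z) t) (g := f) (g' := fun z => fderiv ℝ f z (ee j)) (v := ee j)
    (by simpa using i1.neg) (by simpa using i2) (by simpa using i3) ?_ ?_
  · simp only [ContinuousLinearMap.mul_apply'] at this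
    rw [this, ← integral_neg]
    simp
  · intro z _
    have h1 := kk_deriv_y j (0 - z) ht 0
    have h2 : HasDerivAt (fun s : ℝ => kk ((0 - z) + (-s) • ee j) t) (kd j (0 - z) t * (-1)) 0 := by
      have h1' : HasDerivAt (fun s : ℝ => kk ((0 - z) + s • ee j) t) (kd j (0 - z) t) (-0) := by
        simpa using h1
      exact h1'.comp (0:ℝ) ((hasDerivAt_id' (0:ℝ)).neg)
    have h3 : HasDerivAt (fun s : ℝ => kk (0 - (z + s • ee j)) t) (- kd j (0 - z) t) 0 := by
      refine (h2.congr_deriv (by ring)).congr_of_eventuallyEq (Eventually.of_forall fun s => ?_)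
      simp only
      congr 1
      module
    exact h3
  · intro z _
    exact ((hf.differentiable one_ne_zero) z).hasFDerivAt.hasLineDerivAt (ee j)

/-- length of the gradient of the Poisson kernel -/
def NN {m : ℕ} (z : Eu m) (t : ℝ) : ℝ :=
  √(1 + ((m : ℝ) + 1) * ((m : ℝ) - 1) * (t ^ 2 / QQ z t)) * QQ z t ^ aa m

lemma NN_sq {m : ℕ} (hm : 1 ≤ m) (z : Eu m) {t : ℝ} (ht : 0 < t) :
    ∑ j, kd j z t ^ 2 + kt z t ^ 2 = NN z t ^ 2 := by
  have hQ := QQ_pos z ht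
  have hm' : (1:ℝ) ≤ m := by exact_mod_cast hm
  have h1 : QQ z t ^ (aa m - 1) = QQ z t ^ aa m / QQ z t := Real.rpow_sub_one hQ.ne' _
  have h2 : ∑ i, z i ^ 2 = ‖z‖ ^ 2 := by
    rw [EuclideanSpace.norm_sq_eq]; simp
  have h3 : ‖z‖ ^ 2 = QQ z t - t ^ 2 := by unfold QQ; ring
  have h4 : ∑ j, kd j z t ^ 2 = (2 * aa m * t) ^ 2 * ‖z‖ ^ 2 * (QQ z t ^ aa m / QQ z t) ^ 2 := by
    rw [← h2, Finset.mul_sum, Finset.sum_mul]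
    refine Finset.sum_congr rfl fun j _ => ?_
    unfold kd; rw [h1]; ring
  have hnn : 0 ≤ 1 + ((m : ℝ) + 1) * ((m : ℝ) - 1) * (t ^ 2 / QQ z t) := by
    have : 0 ≤ (m : ℝ) - 1 := by linarith
    positivity
  rw [h4, h3]
  unfold NN kt
  rw [mul_pow (√(1 + ((m : ℝ) + 1) * ((m : ℝ) - 1) * (t ^ 2 / QQ z t))) _ 2, Real.sq_sqrt hnn, h1]
  simp only [aa]
  field_simp
  ring

lemma NN_nonneg {m : ℕ} (z : Eu m) {t : ℝ} (ht : 0 < t) : 0 ≤ NN z t := by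
  have := QQ_pos z ht
  unfold NN; positivity

lemma NN_int {m : ℕ} (hm : 1 ≤ m) {t : ℝ} (ht : 0 < t) :
    2 * (2 / sphereArea (m + 1)) * ∫ z : Eu m, NN (0 - z) t = Econst (m + 1) / t := by
  rw [Econst_eq m hm]
  have h1 : ∫ z : Eu m, NN (0 - z) t = ∫ z : Eu m, NN z t :=
    integral_sub_left_eq_self (fun z : Eu m => NN z t) volume 0
  rw [h1]
  have h2 := Measure.integral_comp_smul (volume : Measure (Eu m)) (fun z => NN z t) t
  have h3 : ∀ w : Eu m, NN (t • w) t = (t ^ (m + 1))⁻¹ *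
      (√(1 + ((m : ℝ) + 1) * ((m : ℝ) - 1) * (1 + ‖w‖ ^ 2)⁻¹) * (1 + ‖w‖ ^ 2) ^ (aa m)) := by
    intro w
    unfold NN
    rw [QQ_scale w ht]
    have e1 : t ^ (2 * aa m) = (t ^ (m + 1))⁻¹ := by
      rw [← Real.rpow_natCast, ← Real.rpow_neg ht.le]
      congr 1
      simp only [aa]; push_cast; ring
    have e2 : t ^ 2 / QQ (t • w) t = (1 + ‖w‖ ^ 2)⁻¹ := by
      have : QQ (t • w) t = t ^ 2 * (1 + ‖w‖ ^ 2) := by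
        unfold QQ; rw [norm_smul, Real.norm_eq_abs, mul_pow, sq_abs]; ring
      rw [this]
      field_simp
    rw [e1, e2]; ring
  simp only [h3, finrank_euclideanSpace, Fintype.card_fin, smul_eq_mul] at h2
  rw [integral_const_mul, abs_of_pos (by positivity)] at h2
  have h4 : ∫ z : Eu m, NN z t = (1 / t) * ∫ w : Eu m,
      (√(1 + ((m : ℝ) + 1) * ((m : ℝ) - 1) * (1 + ‖w‖ ^ 2)⁻¹) * (1 + ‖w‖ ^ 2) ^ (aa m)) := by
    set J := ∫ w : Eu m,
      (√(1 + ((m : ℝ) + 1) * ((m : ℝ) - 1) * (1 + ‖w‖ ^ 2)⁻¹) * (1 + ‖w‖ ^ 2) ^ (aa m)) with hJ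
    set I := ∫ z : Eu m, NN z t with hI
    have hne : t ^ m ≠ 0 := by positivity
    rw [pow_succ] at h2
    field_simp at h2 ⊢
    linarith
  rw [h4]
  ring

lemma core_estimate {m : ℕ} (hm : 1 ≤ m) (g1 g2 : Eu m → ℝ → ℝ) (f : Fin m → Eu m → ℝ)
    (C M t0 : ℝ) (ht0 : 0 < t0) (hM0 : 0 ≤ M)
    (hc1 : Continuous (fun z : Eu m × ℝ => g1 z.1 z.2))
    (hc2 : Continuous (fun z : Eu m × ℝ => g2 z.1 z.2))
    (hh1 : ∀ y t, 0 < t → Harm g1 y t) (hh2 : ∀ y t, 0 < t → Harm g2 y t)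
    (hg1 : Grow g1) (hg2 : Grow g2)
    (hf : ∀ j, ContDiff ℝ 1 (f j)) (hfC : ∀ j z, |f j z| ≤ C)
    (hfC' : ∀ j z, |fderiv ℝ (f j) z (ee j)| ≤ C)
    (hbd : ∀ z, g2 z 0 = ∑ j, fderiv ℝ (f j) z (ee j))
    (hM : ∀ z, ∑ j, f j z ^ 2 + g1 z 0 ^ 2 ≤ M ^ 2)
    (a : ℝ) (ha : HasDerivAt (fun t => g1 0 t) a t0) :
    |2 * (g2 0 t0 + a)| ≤ Econst (m + 1) / t0 * M := by
  set c := 2 / sphereArea (m + 1) with hc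
  have hcp : 0 < c := div_pos two_pos (sphereArea_pos _ (by omega))
  obtain ⟨B, hB0, hB⟩ := kernel_bound (m := m) 0 t0 t0 le_rfl ht0 le_rfl
  have hk := kernel_cont (m := m) ht0
  have hcy : Continuous fun z : Eu m => 0 - z := by fun_prop
  have hb := fun z => hB 0 z t0 (by simp) le_rfl le_rfl
  have hg1c : Continuous fun z => g1 z 0 := hc1.comp (by fun_prop : Continuous fun z : Eu m => (z, (0:ℝ)))
  obtain ⟨⟨C1, hC10, hC1⟩, _⟩ := id hg1
  have hg1b : ∀ z, |g1 z 0| ≤ C1 := fun z => by simpa using hC1 z 0 le_rfl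
  have hfc' : ∀ j, Continuous fun z => fderiv ℝ (f j) z (ee j) := fun j =>
    ((hf j).continuous_fderiv one_ne_zero).clm_apply continuous_const
  -- the normal derivative
  have ea : a = c * ∫ z, kt (0 - z) t0 * g1 z 0 := by
    have h1 := (PI_deriv_t hg1c hg1b 0 ht0).const_mul c
    have h2 : (fun t => g1 0 t) =ᶠ[nhds t0] fun t => c * PI (fun z => g1 z 0) 0 t := by
      filter_upwards [lt_mem_nhds ht0] with t ht
      exact poisson_rep hm g1 hc1.continuousOn hh1 hg1 0 t ht
    exact ha.unique (h1.congr_of_eventuallyEq h2)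
  have i1 : ∀ j, Integrable fun z => kd j (0 - z) t0 * f j z := fun j =>
    weight_integrable ((hk.2.1 j).comp hcy) (hf j).continuous (fun z => (hb z).2.1 j) (hfC j)
  have i2 : ∀ j, Integrable fun z => kk (0 - z) t0 * fderiv ℝ (f j) z (ee j) := fun j =>
    weight_integrable (hk.1.comp hcy) (hfc' j) (fun z => (hb z).1) (hfC' j)
  have i3 : Integrable fun z => kt (0 - z) t0 * g1 z 0 :=
    weight_integrable (hk.2.2.2.1.comp hcy) hg1c (fun z => (hb z).2.2.2.1) hg1b
  have eg : g2 0 t0 = c * ∑ j, ∫ z, kd j (0 - z) t0 * f j z := by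
    rw [poisson_rep hm g2 hc2.continuousOn hh2 hg2 0 t0 ht0]
    congr 1
    unfold PI
    simp only [hbd, Finset.mul_sum]
    rw [integral_finsetSum _ fun j _ => i2 j]
    exact Finset.sum_congr rfl fun j _ => kk_ibp j (hf j) (hfC j) (hfC' j) ht0
  have esum : g2 0 t0 + a = c * ∫ z, (∑ j, kd j (0 - z) t0 * f j z + kt (0 - z) t0 * g1 z 0) := by
    rw [eg, ea, integral_add (integrable_finsetSum _ fun j _ => i1 j) i3,
      integral_finsetSum _ fun j _ => i1 j]
    ring
  have hpt : ∀ z, |∑ j, kd j (0 - z) t0 * f j z + kt (0 - z) t0 * g1 z 0| ≤ NN (0 - z) t0 * M := by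
    intro z
    apply abs_le_of_sq_le_sq _ (mul_nonneg (NN_nonneg _ ht0) hM0)
    rw [mul_pow, ← NN_sq hm (0 - z) ht0]
    have cs := Finset.sum_mul_sq_le_sq_mul_sq (Finset.univ : Finset (Option (Fin m)))
      (fun o => o.elim (kt (0 - z) t0) (fun j => kd j (0 - z) t0))
      (fun o => o.elim (g1 z 0) (fun j => f j z))
    simp only [Fintype.sum_option, Option.elim] at cs
    have h1 : 0 ≤ ∑ j, kd j (0 - z) t0 ^ 2 + kt (0 - z) t0 ^ 2 := by positivity
    calc (∑ j, kd j (0 - z) t0 * f j z + kt (0 - z) t0 * g1 z 0) ^ 2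
        = (kt (0 - z) t0 * g1 z 0 + ∑ j, kd j (0 - z) t0 * f j z) ^ 2 := by ring
      _ ≤ _ := cs
      _ = (∑ j, kd j (0 - z) t0 ^ 2 + kt (0 - z) t0 ^ 2) * (∑ j, f j z ^ 2 + g1 z 0 ^ 2) := by ring
      _ ≤ _ := mul_le_mul_of_nonneg_left (hM z) h1
  have hNint : Integrable fun z : Eu m => NN (0 - z) t0 := by
    have hNc : Continuous fun z : Eu m => NN z t0 := by
      unfold NN
      apply Continuous.mul _ (QQ_pow_cont ht0 _)
      apply Continuous.sqrt
      apply Continuous.add continuous_const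
      apply Continuous.mul continuous_const
      apply Continuous.div continuous_const
      · unfold QQ; fun_prop
      · intro z; exact (QQ_pos z ht0).ne'
    refine Integrable.mono' (g := fun z => (m * B + B) * ww z) ((ww_int m).const_mul _)
      (hNc.comp hcy).aestronglyMeasurable (Eventually.of_forall fun z => ?_)
    rw [Real.norm_eq_abs, abs_of_nonneg (NN_nonneg _ ht0)]
    have hw := ww_nonneg z
    apply le_of_sq_le_sq _ (by positivity)
    rw [← NN_sq hm _ ht0]
    have e1 : ∀ j, kd j (0 - z) t0 ^ 2 ≤ (B * ww z) ^ 2 := fun j => by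
      rw [← sq_abs]
      have := (hb z).2.1 j
      gcongr
    have e2 : kt (0 - z) t0 ^ 2 ≤ (B * ww z) ^ 2 := by
      rw [← sq_abs]
      have := (hb z).2.2.2.1
      gcongr
    have e3 : ∑ j, kd j (0 - z) t0 ^ 2 ≤ m * (B * ww z) ^ 2 := by
      calc _ ≤ ∑ _j : Fin m, (B * ww z) ^ 2 := Finset.sum_le_sum fun j _ => e1 j
        _ = _ := by simp
    have hm' : (0:ℝ) ≤ m := Nat.cast_nonneg m
    have e4 : ((m * B + B) * ww z) ^ 2 = (m ^ 2 + 2 * m + 1) * (B * ww z) ^ 2 := by ring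
    rw [e4]
    nlinarith [sq_nonneg (B * ww z), mul_nonneg hm' (sq_nonneg (B * ww z)),
      mul_nonneg (mul_nonneg hm' hm') (sq_nonneg (B * ww z))]
  have hfin : |∫ z, (∑ j, kd j (0 - z) t0 * f j z + kt (0 - z) t0 * g1 z 0)|
      ≤ (∫ z : Eu m, NN (0 - z) t0) * M := by
    rw [← integral_mul_const, ← Real.norm_eq_abs]
    exact norm_integral_le_of_norm_le (hNint.mul_const _) (Eventually.of_forall hpt)
  rw [esum, ← NN_int hm ht0, abs_mul, abs_mul, abs_of_pos hcp, abs_of_pos two_pos]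
  calc 2 * (c * |∫ z, (∑ j, kd j (0 - z) t0 * f j z + kt (0 - z) t0 * g1 z 0)|)
      ≤ 2 * (c * ((∫ z : Eu m, NN (0 - z) t0) * M)) := by gcongr
    _ = _ := by ring

open scoped ContDiff

/-! ### Directional derivatives of smooth functions and the smooth half-space estimate -/

/-- directional derivative -/
def dd {n : ℕ} (v : Eu n) (F : Eu n → ℝ) (x : Eu n) : ℝ := fderiv ℝ F x v

lemma dd_smooth {n : ℕ} (v : Eu n) {F : Eu n → ℝ} (hF : ContDiff ℝ ∞ F) :
    ContDiff ℝ ∞ (dd v F) := by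
  have h : ContDiff ℝ ∞ (fderiv ℝ F) := hF.fderiv_right (by simp)
  exact h.clm_apply contDiff_const

lemma smooth_diff {n : ℕ} {F : Eu n → ℝ} (hF : ContDiff ℝ ∞ F) : Differentiable ℝ F :=
  hF.differentiable (by simp)

lemma dd_line {n : ℕ} (v : Eu n) {F : Eu n → ℝ} (hF : ContDiff ℝ ∞ F) (x : Eu n) (s : ℝ) :
    HasDerivAt (fun s : ℝ => F (x + s • v)) (dd v F (x + s • v)) s := by
  have h1 : HasDerivAt (fun s : ℝ => x + s • v) v s := by
    simpa using ((hasDerivAt_id' s).smul_const v).const_add x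
  exact ((smooth_diff hF) (x + s • v)).hasFDerivAt.comp_hasDerivAt s h1

lemma dd_D2 {n : ℕ} (v : Eu n) {F : Eu n → ℝ} (hF : ContDiff ℝ ∞ F) (x : Eu n) :
    D2 (fun s : ℝ => F (x + s • v)) (dd v (dd v F) x) := by
  refine ⟨fun s => dd v F (x + s • v), Eventually.of_forall fun s => dd_line v hF x s, ?_⟩
  simpa using dd_line v (dd_smooth v hF) x 0

lemma dd_comm {n : ℕ} (v w : Eu n) {F : Eu n → ℝ} (hF : ContDiff ℝ ∞ F) (x : Eu n) :
    dd v (dd w F) x = dd w (dd v F) x := by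
  have hs : IsSymmSndFDerivAt ℝ F x :=
    (hF.contDiffAt (x := x)).isSymmSndFDerivAt (by simp; exact ENat.LEInfty.out)
  have h : ContDiff ℝ ∞ (fderiv ℝ F) := hF.fderiv_right (by simp)
  have key : ∀ a b : Eu n, dd a (dd b F) x = fderiv ℝ (fderiv ℝ F) x a b := by
    intro a b
    have h1 : HasFDerivAt (fderiv ℝ F) (fderiv ℝ (fderiv ℝ F) x) x :=
      (h.differentiable (by simp) x).hasFDerivAt
    have h2 := h1.clm_apply (hasFDerivAt_const b x)
    unfold dd
    rw [h2.fderiv]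
    simp
  rw [key, key]
  exact hs v w

lemma dd_congr {n : ℕ} (v : Eu n) {F H : Eu n → ℝ} {U : Set (Eu n)} (hU : IsOpen U)
    (h : ∀ z ∈ U, F z = H z) : ∀ z ∈ U, dd v F z = dd v H z := by
  intro z hz
  have : F =ᶠ[nhds z] H := by
    filter_upwards [hU.mem_nhds hz] with y hy using h y hy
  unfold dd
  rw [this.fderiv_eq]

lemma dd_sum {n : ℕ} {ι : Type*} [Fintype ι] (v : Eu n) {F : ι → Eu n → ℝ}
    (hF : ∀ i, ContDiff ℝ ∞ (F i)) (x : Eu n) :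
    dd v (fun z => ∑ i, F i z) x = ∑ i, dd v (F i) x := by
  unfold dd
  rw [fderiv_fun_sum (fun i _ => smooth_diff (hF i) x)]
  simp

lemma dd_sub {n : ℕ} (v : Eu n) {F H : Eu n → ℝ} (hF : ContDiff ℝ ∞ F) (hH : ContDiff ℝ ∞ H)
    (x : Eu n) : dd v (fun z => F z - H z) x = dd v F x - dd v H x := by
  unfold dd
  rw [fderiv_fun_sub (smooth_diff hF x) (smooth_diff hH x)]
  simp

lemma dd_cmul {n : ℕ} (v : Eu n) (c : ℝ) {F : Eu n → ℝ} (hF : ContDiff ℝ ∞ F)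
    (x : Eu n) : dd v (fun z => c * F z) x = c * dd v F x := by
  unfold dd
  rw [fderiv_const_mul (smooth_diff hF x)]
  simp

/-- height above the hyperplane through `q` orthogonal to `ν` -/
def hgt {n : ℕ} (ν q z : Eu n) : ℝ := ⟪ν, z - q⟫

lemma hgt_smooth {n : ℕ} (ν q : Eu n) : ContDiff ℝ ∞ (hgt ν q) := by
  unfold hgt
  exact contDiff_const.inner ℝ (contDiff_id.sub contDiff_const)

lemma hgt_add {n : ℕ} (ν q z : Eu n) (s : ℝ) (v : Eu n) :
    hgt ν q (z + s • v) = hgt ν q z + s * ⟪ν, v⟫ := by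
  unfold hgt
  rw [add_sub_right_comm, inner_add_right, inner_smul_right]

lemma dd_hmul {n : ℕ} (ν q v : Eu n) {F : Eu n → ℝ} (hF : ContDiff ℝ ∞ F) (x : Eu n) :
    dd v (fun z => hgt ν q z * F z) x = ⟪ν, v⟫ * F x + hgt ν q x * dd v F x := by
  have hG : ContDiff ℝ ∞ (fun z => hgt ν q z * F z) := (hgt_smooth ν q).mul hF
  have h1 := dd_line v hG x 0
  have h2 : HasDerivAt (fun s : ℝ => hgt ν q (x + s • v)) ⟪ν, v⟫ 0 := by
    simp only [hgt_add]
    simpa using ((hasDerivAt_id' (0:ℝ)).mul_const ⟪ν, v⟫).const_add (hgt ν q x)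
  have h3 := h2.mul (dd_line v hF x 0)
  have := h1.unique h3
  simpa using this

/-- Laplacian in the basis `b` -/
def lapb {n : ℕ} (b : Fin n → Eu n) (F : Eu n → ℝ) (x : Eu n) : ℝ := ∑ i, dd (b i) (dd (b i) F) x

lemma lapb_smooth {n : ℕ} (b : Fin n → Eu n) {F : Eu n → ℝ} (hF : ContDiff ℝ ∞ F) :
    ContDiff ℝ ∞ (lapb b F) := by
  unfold lapb
  exact ContDiff.sum fun i _ => dd_smooth _ (dd_smooth _ hF)

lemma lapb_sub {n : ℕ} (b : Fin n → Eu n) {F H : Eu n → ℝ} (hF : ContDiff ℝ ∞ F)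
    (hH : ContDiff ℝ ∞ H) (x : Eu n) :
    lapb b (fun z => F z - H z) x = lapb b F x - lapb b H x := by
  unfold lapb
  rw [← Finset.sum_sub_distrib]
  refine Finset.sum_congr rfl fun i _ => ?_
  have : dd (b i) (fun z => F z - H z) = fun z => dd (b i) F z - dd (b i) H z := by
    funext z; exact dd_sub _ hF hH z
  rw [this, dd_sub _ (dd_smooth _ hF) (dd_smooth _ hH)]

lemma lapb_cmul {n : ℕ} (b : Fin n → Eu n) (c : ℝ) {F : Eu n → ℝ} (hF : ContDiff ℝ ∞ F)
    (x : Eu n) : lapb b (fun z => c * F z) x = c * lapb b F x := by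
  unfold lapb
  rw [Finset.mul_sum]
  refine Finset.sum_congr rfl fun i _ => ?_
  have : dd (b i) (fun z => c * F z) = fun z => c * dd (b i) F z := by
    funext z; exact dd_cmul _ c hF z
  rw [this, dd_cmul _ c (dd_smooth _ hF)]

lemma lapb_dd {n : ℕ} (b : Fin n → Eu n) (v : Eu n) {F : Eu n → ℝ} (hF : ContDiff ℝ ∞ F)
    (x : Eu n) : lapb b (dd v F) x = dd v (lapb b F) x := by
  have h : dd v (lapb b F) x = ∑ i, dd v (dd (b i) (dd (b i) F)) x :=
    dd_sum v (fun i => dd_smooth (b i) (dd_smooth (b i) hF)) x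
  rw [h]
  unfold lapb
  refine Finset.sum_congr rfl fun i _ => ?_
  have : dd (b i) (dd v F) = dd v (dd (b i) F) := by
    funext z; exact dd_comm _ _ hF z
  rw [this, dd_comm _ _ (dd_smooth _ hF)]

lemma lapb_hmul {n : ℕ} (b : Fin n → Eu n) (k : Fin n)
    (hb : ∀ i, ⟪b k, b i⟫ = if i = k then (1:ℝ) else 0)
    (q : Eu n) {F : Eu n → ℝ} (hF : ContDiff ℝ ∞ F) (x : Eu n) :
    lapb b (fun z => hgt (b k) q z * F z) x
      = 2 * dd (b k) F x + hgt (b k) q x * lapb b F x := by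
  have h1 : ∀ i, dd (b i) (dd (b i) (fun z => hgt (b k) q z * F z)) x
      = 2 * (⟪b k, b i⟫ * dd (b i) F x) + hgt (b k) q x * dd (b i) (dd (b i) F) x := by
    intro i
    have e : dd (b i) (fun z => hgt (b k) q z * F z)
        = fun z => ⟪b k, b i⟫ * F z - (-1) * (hgt (b k) q z * dd (b i) F z) := by
      funext z; rw [dd_hmul _ _ _ hF]; ring
    have hs : ContDiff ℝ ∞ (fun z => hgt (b k) q z * dd (b i) F z) :=
      (hgt_smooth _ q).mul (dd_smooth _ hF)
    rw [e, dd_sub _ (contDiff_const.mul hF) (contDiff_const.mul hs), dd_cmul _ _ hF,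
      dd_cmul _ _ hs, dd_hmul _ _ _ (dd_smooth _ hF)]
    ring
  unfold lapb
  rw [Finset.sum_congr rfl fun i _ => h1 i, Finset.sum_add_distrib, ← Finset.mul_sum,
    ← Finset.mul_sum]
  congr 2
  simp [hb]

/-- coordinates adapted to the half-space -/
def Phi {m : ℕ} (b : Fin (m+1) → Eu (m+1)) (q : Eu (m+1)) (y : Eu m) (t : ℝ) : Eu (m+1) :=
  q + t • b (Fin.last m) + ∑ j : Fin m, y j • b j.castSucc

lemma Phi_add {m : ℕ} (b : Fin (m+1) → Eu (m+1)) (q : Eu (m+1)) (y : Eu m) (t s : ℝ) :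
    Phi b q y (t + s) = Phi b q y t + s • b (Fin.last m) := by
  unfold Phi; rw [add_smul]; abel

lemma Phi_single {m : ℕ} (b : Fin (m+1) → Eu (m+1)) (q : Eu (m+1)) (y : Eu m) (t s : ℝ)
    (i : Fin m) : Phi b q (y + s • ee i) t = Phi b q y t + s • b i.castSucc := by
  unfold Phi
  rw [add_assoc _ _ (s • _)]
  congr 1
  simp only [PiLp.add_apply, PiLp.smul_apply, add_smul, Finset.sum_add_distrib, smul_eq_mul]
  congr 1
  rw [Finset.sum_eq_single i]
  · simp
  · intro j _ hj; simp [hj]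
  · simp

lemma Phi_smooth {m : ℕ} (b : Fin (m+1) → Eu (m+1)) (q : Eu (m+1)) :
    ContDiff ℝ ∞ (fun z : Eu m × ℝ => Phi b q z.1 z.2) := by
  unfold Phi
  refine (contDiff_const.add (contDiff_snd.smul contDiff_const)).add
    (ContDiff.sum fun j _ => ?_)
  have h : ContDiff ℝ ∞ (fun z : Eu m × ℝ => z.1 j) :=
    (EuclideanSpace.proj (𝕜 := ℝ) j).contDiff.comp contDiff_fst
  exact h.smul contDiff_const

lemma Phi_hgt {m : ℕ} (b : Fin (m+1) → Eu (m+1))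
    (hb : ∀ i, ⟪b (Fin.last m), b i⟫ = if i = Fin.last m then (1:ℝ) else 0)
    (q : Eu (m+1)) (y : Eu m) (t : ℝ) : hgt (b (Fin.last m)) q (Phi b q y t) = t := by
  unfold hgt Phi
  rw [add_assoc, add_sub_cancel_left, inner_add_right, inner_smul_right, inner_sum, hb]
  have : ∀ j : Fin m, ⟪b (Fin.last m), y j • b j.castSucc⟫ = 0 := by
    intro j
    rw [inner_smul_right, hb, if_neg (Fin.castSucc_lt_last j).ne, mul_zero]
  simp [this]

lemma Phi_harm {m : ℕ} (b : Fin (m+1) → Eu (m+1)) (q : Eu (m+1)) {F : Eu (m+1) → ℝ}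
    (hF : ContDiff ℝ ∞ F) (y : Eu m) (t : ℝ) (h : lapb b F (Phi b q y t) = 0) :
    Harm (fun y t => F (Phi b q y t)) y t := by
  refine ⟨fun i => dd (b i.castSucc) (dd (b i.castSucc) F) (Phi b q y t),
    dd (b (Fin.last m)) (dd (b (Fin.last m)) F) (Phi b q y t), fun i => ?_, ?_, ?_⟩
  · simp only [Phi_single]
    exact dd_D2 _ hF _
  · simp only [Phi_add]
    exact dd_D2 _ hF _
  · unfold lapb at h
    rw [Fin.sum_univ_castSucc] at h
    exact h

open scoped ContDiff

lemma grow_of {m : ℕ} (A B : Eu m → ℝ → ℝ) (C : ℝ)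
    (hA : ∀ y t, |A y t| ≤ C) (hB : ∀ y t, 0 ≤ t → |B y t| ≤ C)
    (hB0 : ∀ ε > 0, ∃ R : ℝ, ∀ y t, R ≤ t → |B y t| ≤ ε) :
    Grow (fun y t => A y t - t * B y t / 2) := by
  have hC : 0 ≤ C := (abs_nonneg _).trans (hA 0 0)
  constructor
  · refine ⟨C, hC, fun y t ht => ?_⟩
    have h1 := hA y t
    have h2 := hB y t ht
    have h3 : |t * B y t / 2| ≤ t * C := by
      rw [abs_div, abs_mul, abs_of_nonneg ht, abs_of_pos (by norm_num : (0:ℝ) < 2)]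
      have := mul_le_mul_of_nonneg_left h2 ht
      have := mul_nonneg ht hC
      linarith
    calc _ ≤ |A y t| + |t * B y t / 2| := abs_sub _ _
      _ ≤ _ := by linarith
  · intro ε hε
    obtain ⟨R, hR⟩ := hB0 ε hε
    refine ⟨max R (max 0 (2 * C / ε)), fun y t ht => ?_⟩
    have t1 : R ≤ t := (le_max_left _ _).trans ht
    have t2 : 0 ≤ t := (le_max_left _ _).trans ((le_max_right _ _).trans ht)
    have t3 : 2 * C / ε ≤ t := (le_max_right _ _).trans ((le_max_right _ _).trans ht)
    have h1 := hA y t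
    have h2 := hR y t t1
    have h3 : |t * B y t / 2| ≤ t * ε / 2 := by
      rw [abs_div, abs_mul, abs_of_nonneg t2, abs_of_pos (by norm_num : (0:ℝ) < 2)]
      have := mul_le_mul_of_nonneg_left h2 t2
      linarith
    rw [div_le_iff₀ hε] at t3
    calc _ ≤ |A y t| + |t * B y t / 2| := abs_sub _ _
      _ ≤ _ := by linarith

theorem half_smooth {m : ℕ} (hm : 1 ≤ m) (b : Fin (m+1) → Eu (m+1))
    (hb : ∀ i, ⟪b (Fin.last m), b i⟫ = if i = Fin.last m then (1:ℝ) else 0)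
    (v : Fin (m+1) → Eu (m+1) → ℝ) (p : Eu (m+1) → ℝ)
    (hv : ∀ k, ContDiff ℝ ∞ (v k)) (hp : ContDiff ℝ ∞ p) (q : Eu (m+1)) (η : ℝ) (hη : 0 < η)
    (hst : ∀ z, -η < hgt (b (Fin.last m)) q z → ∀ k, lapb b (v k) z = dd (b k) p z)
    (hdiv : ∀ z, -η < hgt (b (Fin.last m)) q z → ∑ k, dd (b k) (v k) z = 0)
    (C M : ℝ) (hM0 : 0 ≤ M)
    (hC0 : ∀ k z, |v k z| ≤ C) (hC1 : ∀ k z, |dd (b k) (v k) z| ≤ C)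
    (hC2 : ∀ k z, |lapb b (v k) z| ≤ C)
    (hM : ∀ z, ∑ k, v k z ^ 2 ≤ M ^ 2)
    (hp0 : ∀ ε > 0, ∃ R : ℝ, ∀ z, R ≤ hgt (b (Fin.last m)) q z → |p z| ≤ ε)
    (hp1 : ∀ ε > 0, ∃ R : ℝ, ∀ z, R ≤ hgt (b (Fin.last m)) q z →
      |dd (b (Fin.last m)) p z| ≤ ε)
    (t0 : ℝ) (ht0 : 0 < t0) :
    |p (q + t0 • b (Fin.last m))| ≤ Econst (m + 1) / t0 * M := by
  set L := Fin.last m with hL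
  set ν := b L with hν
  set U : Set (Eu (m+1)) := {z | -η < hgt ν q z} with hU
  have hUo : IsOpen U := isOpen_lt continuous_const (hgt_smooth ν q).continuous
  have hνν : ⟪ν, ν⟫ = (1:ℝ) := by rw [hν, hb, if_pos rfl]
  have hCn : 0 ≤ C := (abs_nonneg _).trans (hC0 0 0)
  -- harmonicity of the pressure
  have hph : ∀ z ∈ U, lapb b p z = 0 := by
    intro z hz
    have h1 : lapb b p z = ∑ k, dd (b k) (lapb b (v k)) z := by
      unfold lapb
      refine Finset.sum_congr rfl fun k _ => ?_
      exact (dd_congr (b k) hUo (fun y hy => hst y hy k) z hz).symm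
    have h2 : ∑ k, dd (b k) (lapb b (v k)) z = lapb b (fun y => ∑ k, dd (b k) (v k) y) z := by
      simp only [← lapb_dd b _ (hv _)]
      unfold lapb
      rw [Finset.sum_comm]
      refine Finset.sum_congr rfl fun i _ => ?_
      have : dd (b i) (fun y => ∑ k, dd (b k) (v k) y)
          = fun y => ∑ k, dd (b i) (dd (b k) (v k)) y := by
        funext y; exact dd_sum _ (fun k => dd_smooth _ (hv k)) y
      rw [this, dd_sum _ (fun k => dd_smooth _ (dd_smooth _ (hv k)))]
    have h0 : ∀ w : Eu (m+1), ∀ y, dd w (fun _ => (0:ℝ)) y = 0 := by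
      intro w y; simp [dd]
    have h3 : lapb b (fun y => ∑ k, dd (b k) (v k) y) z = 0 := by
      unfold lapb
      refine Finset.sum_eq_zero fun i _ => ?_
      have e1 : ∀ y ∈ U, dd (b i) (fun y => ∑ k, dd (b k) (v k) y) y = 0 := by
        intro y hy
        rw [dd_congr (b i) hUo (H := fun _ => 0) (fun x hx => hdiv x hx) y hy, h0]
      rw [dd_congr (b i) hUo (H := fun _ => 0) e1 z hz, h0]
    rw [h1, h2, h3]
  -- boundedness of the pressure
  have hdp : ∀ z ∈ U, |dd ν p z| ≤ C := by
    intro z hz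
    rw [hν, ← hst z hz L]; exact hC2 L z
  obtain ⟨R, hR⟩ := hp0 1 one_pos
  set R' := max R 0 with hR'
  have hR0 : 0 ≤ R' := le_max_right _ _
  have hpb : ∀ z, 0 ≤ hgt ν q z → |p z| ≤ 1 + C * R' := by
    intro z hz
    have h1 : |p (z + R' • ν)| ≤ 1 := by
      apply hR
      rw [hgt_add, hνν]
      have := le_max_left R 0
      linarith
    have h2 : ‖p (z + R' • ν) - p (z + (0:ℝ) • ν)‖ ≤ C * ‖R' - 0‖ := by
      refine (convex_Icc (0:ℝ) R').norm_image_sub_le_of_norm_hasDerivWithin_le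
        (f := fun s : ℝ => p (z + s • ν))
        (f' := fun s => dd ν p (z + s • ν))
        (fun s _ => (dd_line ν hp z s).hasDerivWithinAt) (fun s hs => ?_)
        ⟨le_rfl, hR0⟩ ⟨hR0, le_rfl⟩
      apply hdp
      simp only [hU, Set.mem_ofPred_eq, hgt_add, hνν]
      linarith [hs.1]
    rw [sub_zero, Real.norm_eq_abs, Real.norm_eq_abs, abs_of_nonneg hR0, zero_smul, add_zero] at h2
    have h3 := abs_sub_abs_le_abs_sub (p z) (p (z + R' • ν))
    rw [abs_sub_comm] at h3
    linarith
  -- the two harmonic functions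
  have hhp : ContDiff ℝ ∞ (fun z => hgt ν q z * p z) := (hgt_smooth ν q).mul hp
  have hdps := dd_smooth ν hp
  have hhdp : ContDiff ℝ ∞ (fun z => hgt ν q z * dd ν p z) := (hgt_smooth ν q).mul hdps
  have hdv := dd_smooth ν (hv L)
  set G1 : Eu (m+1) → ℝ := fun z => v L z - (1/2) * (hgt ν q z * p z) with hG1
  set G2 : Eu (m+1) → ℝ := fun z => (-1) * dd ν (v L) z - (-1/2) * (hgt ν q z * dd ν p z) with hG2
  have sG1 : ContDiff ℝ ∞ G1 := (hv L).sub (contDiff_const.mul hhp)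
  have sG2 : ContDiff ℝ ∞ G2 := (contDiff_const.mul hdv).sub (contDiff_const.mul hhdp)
  have lG1 : ∀ z ∈ U, lapb b G1 z = 0 := by
    intro z hz
    rw [hG1, lapb_sub b (hv L) (contDiff_const.mul hhp), lapb_cmul b _ hhp,
      lapb_hmul b L hb q hp, hph z hz, hst z hz L]
    ring
  have lG2 : ∀ z ∈ U, lapb b G2 z = 0 := by
    intro z hz
    have e1 : dd ν (lapb b (v L)) z = dd ν (dd ν p) z :=
      dd_congr ν hUo (fun y hy => hst y hy L) z hz
    have e2 : dd ν (lapb b p) z = 0 := by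
      rw [dd_congr ν hUo (H := fun _ => 0) hph z hz]; simp [dd]
    rw [hG2, lapb_sub b (contDiff_const.mul hdv) (contDiff_const.mul hhdp), lapb_cmul b _ hhdp,
      lapb_cmul b _ hdv, lapb_hmul b L hb q hdps, lapb_dd b ν hp, lapb_dd b ν (hv L), e1, e2]
    ring
  have hPh := Phi_hgt b hb q
  have hmem : ∀ y t, 0 ≤ t → Phi b q y t ∈ U := by
    intro y t ht
    simp only [hU, Set.mem_ofPred_eq]
    rw [hPh]; linarith
  have hPc := (Phi_smooth b q).continuous
  set C' := max C (1 + C * R') with hC'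
  have key := core_estimate hm (fun y t => G1 (Phi b q y t)) (fun y t => G2 (Phi b q y t))
    (fun j z => v j.castSucc (Phi b q z 0)) C M t0 ht0 hM0
    (sG1.continuous.comp hPc) (sG2.continuous.comp hPc)
    (fun y t ht => Phi_harm b q sG1 y t (lG1 _ (hmem y t ht.le)))
    (fun y t ht => Phi_harm b q sG2 y t (lG2 _ (hmem y t ht.le)))
    ?_ ?_ ?_ ?_ ?_ ?_ ?_ (dd ν G1 (Phi b q 0 t0)) ?_
  · have e1 : Phi b q 0 t0 = q + t0 • ν := by simp [Phi, hν, hL]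
    rw [e1] at key
    have e2 : dd ν G1 (q + t0 • ν) = dd ν (v L) (q + t0 • ν) - (1/2) * (p (q + t0 • ν)
        + t0 * dd ν p (q + t0 • ν)) := by
      have hh : hgt ν q (q + t0 • ν) = t0 := by rw [← e1]; exact hPh 0 t0
      rw [hG1, dd_sub ν (hv L) (contDiff_const.mul hhp), dd_cmul ν _ hhp, dd_hmul _ _ _ hp, hνν, hh]
      ring
    have hh : hgt ν q (q + t0 • ν) = t0 := by rw [← e1]; exact hPh 0 t0
    have e3 : 2 * (G2 (q + t0 • ν) + dd ν G1 (q + t0 • ν)) = - p (q + t0 • ν) := by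
      rw [e2, hG2]; simp only [hh]; ring
    rw [e3, abs_neg] at key
    exact key
  · have := grow_of (fun y t => v L (Phi b q y t)) (fun y t => p (Phi b q y t)) C'
      (fun y t => (hC0 L _).trans (le_max_left _ _))
      (fun y t ht => (hpb _ (by rw [hPh]; exact ht)).trans (le_max_right _ _)) ?_
    · convert this using 3
      simp only [hG1]; rw [hPh]; ring
    · intro ε hε
      obtain ⟨R, hR⟩ := hp0 ε hε
      exact ⟨R, fun y t ht => hR _ (by rw [hPh]; exact ht)⟩
  · have := grow_of (fun y t => - dd ν (v L) (Phi b q y t)) (fun y t => - dd ν p (Phi b q y t)) C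
      (fun y t => by rw [abs_neg]; exact hC1 L _)
      (fun y t ht => by rw [abs_neg]; exact hdp _ (hmem y t ht)) ?_
    · convert this using 3
      simp only [hG2]; rw [hPh]; ring
    · intro ε hε
      obtain ⟨R, hR⟩ := hp1 ε hε
      exact ⟨R, fun y t ht => by rw [abs_neg]; exact hR _ (by rw [hPh]; exact ht)⟩
  · intro j
    have h0 : ContDiff ℝ ∞ (fun z : Eu m => v j.castSucc (Phi b q z 0)) :=
      (hv j.castSucc).comp ((Phi_smooth b q).comp (contDiff_id.prodMk contDiff_const))
    exact h0.of_le ENat.LEInfty.out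
  · intro j z; exact hC0 _ _
  · intro j z
    have h0 : ContDiff ℝ ∞ (fun z : Eu m => v j.castSucc (Phi b q z 0)) :=
      (hv j.castSucc).comp ((Phi_smooth b q).comp (contDiff_id.prodMk contDiff_const))
    have h1 := dd_line (ee j) h0 z 0
    simp only [Phi_single] at h1
    have h2 := h1.unique (dd_line (b j.castSucc) (hv j.castSucc) (Phi b q z 0) 0)
    simp only [zero_smul, add_zero] at h2
    have h3 : fderiv ℝ (fun z => v j.castSucc (Phi b q z 0)) z (ee j)
      = dd (b j.castSucc) (v j.castSucc) (Phi b q z 0) := h2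
    rw [h3]; exact hC1 _ _
  · intro z
    have e : ∀ j : Fin m, fderiv ℝ (fun z => v j.castSucc (Phi b q z 0)) z (ee j)
      = dd (b j.castSucc) (v j.castSucc) (Phi b q z 0) := by
      intro j
      have h0 : ContDiff ℝ ∞ (fun z : Eu m => v j.castSucc (Phi b q z 0)) :=
        (hv j.castSucc).comp ((Phi_smooth b q).comp (contDiff_id.prodMk contDiff_const))
      have h1 := dd_line (ee j) h0 z 0
      simp only [Phi_single] at h1
      have h2 := h1.unique (dd_line (b j.castSucc) (hv j.castSucc) (Phi b q z 0) 0)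
      simp only [zero_smul, add_zero] at h2
      exact h2
    rw [Finset.sum_congr rfl fun j _ => e j]
    have h := hdiv _ (hmem z 0 le_rfl)
    rw [Fin.sum_univ_castSucc] at h
    simp only [hG2]
    rw [hPh]
    linarith
  · intro z
    have h := hM (Phi b q z 0)
    rw [Fin.sum_univ_castSucc] at h
    simp only [hG1]
    rw [hPh]
    simpa using h
  · have h1 := dd_line ν sG1 (Phi b q 0 t0) 0
    have h2 : HasDerivAt (fun t => t - t0) 1 t0 := by
      simpa using (hasDerivAt_id' t0).sub_const t0
    have h3 : HasDerivAt (fun s : ℝ => G1 (Phi b q 0 t0 + s • ν))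
      (dd ν G1 (Phi b q 0 t0)) (t0 - t0) := by simpa using h1
    have h4 := HasDerivAt.comp (h := fun t => t - t0) t0 h3 h2
    rw [mul_one] at h4
    have e : ((fun s => G1 (Phi b q 0 t0 + s • ν)) ∘ fun t => t - t0)
        = fun t => G1 (Phi b q 0 t) := by
      funext t
      have : Phi b q 0 t = Phi b q 0 t0 + (t - t0) • ν := by
        rw [hν, ← Phi_add]; congr 1; ring
      simp only [Function.comp_apply, this]
    rw [e] at h4
    exact h4

open scoped ContDiff Convolution

/-! ### Mollification -/

/-- smooth function supported in the closed ball of radius `δ` -/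
def Tst {n : ℕ} (φ : Eu n → ℝ) (δ : ℝ) : Prop :=
  ContDiff ℝ ∞ φ ∧ ∀ t, t ∉ closedBall (0 : Eu n) δ → φ t = 0

/-- scalar convolution -/
def cv {n : ℕ} (φ g : Eu n → ℝ) : Eu n → ℝ :=
  convolution φ g (ContinuousLinearMap.lsmul ℝ ℝ) volume

lemma cv_def {n : ℕ} (φ g : Eu n → ℝ) (x : Eu n) : cv φ g x = ∫ t, φ t * g (x - t) := by
  simp [cv, convolution_def]

lemma Tst.compact {n : ℕ} {φ : Eu n → ℝ} {δ : ℝ} (h : Tst φ δ) : HasCompactSupport φ :=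
  HasCompactSupport.intro (isCompact_closedBall 0 δ) h.2

lemma Tst.tsupp {n : ℕ} {φ : Eu n → ℝ} {δ : ℝ} (h : Tst φ δ) : tsupport φ ⊆ closedBall 0 δ := by
  refine closure_minimal (fun t ht => ?_) isClosed_closedBall
  by_contra hc
  exact ht (h.2 t hc)

lemma Tst.dd {n : ℕ} {φ : Eu n → ℝ} {δ : ℝ} (h : Tst φ δ) (v : Eu n) : Tst (dd v φ) δ := by
  refine ⟨dd_smooth v h.1, fun t ht => ?_⟩
  have h1 : t ∉ tsupport φ := fun hc => ht (h.tsupp hc)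
  have h2 : fderiv ℝ φ t = 0 := by
    by_contra hc
    exact h1 (support_fderiv_subset ℝ hc)
  simp [_root_.dd, h2]

lemma cv_smooth {n : ℕ} {φ g : Eu n → ℝ} {δ : ℝ} (h : Tst φ δ) (hg : LocallyIntegrable g) :
    ContDiff ℝ ∞ (cv φ g) :=
  h.compact.contDiff_convolution_left _ h.1 hg

lemma cv_dd {n : ℕ} {φ g : Eu n → ℝ} {δ : ℝ} (h : Tst φ δ) (hg : LocallyIntegrable g)
    (v : Eu n) : dd v (cv φ g) = cv (dd v φ) g := by
  funext x
  have h1 := h.compact.hasFDerivAt_convolution_left (ContinuousLinearMap.lsmul ℝ ℝ)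
    (h.1.of_le ENat.LEInfty.out) hg x
  have h2 : ConvolutionExistsAt (fderiv ℝ φ) g x
      ((ContinuousLinearMap.lsmul ℝ ℝ).precompL (Eu n)) volume :=
    (h.compact.fderiv ℝ).convolutionExists_left _
      (h.1.continuous_fderiv (by simp)) hg x
  unfold dd cv
  rw [h1.fderiv, convolution_def, ContinuousLinearMap.integral_apply h2]
  simp [convolution_def]

lemma loc_integrable {n : ℕ} {φ g : Eu n → ℝ} {δ : ℝ} (h : Tst φ δ) {x : Eu n}
    (hg : ContinuousOn g (closedBall x δ)) : Integrable (fun t => φ t * g (x - t)) := by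
  have h1 : ContinuousOn (fun t => φ t * g (x - t)) (closedBall 0 δ) := by
    refine h.1.continuous.continuousOn.mul (hg.comp (by fun_prop) ?_)
    intro t ht
    simpa [dist_eq_norm] using ht
  have h2 := h1.integrableOn_compact (μ := volume) (isCompact_closedBall 0 δ)
  refine (integrableOn_iff_integrable_of_support_subset ?_).1 h2
  intro t ht
  by_contra hc
  exact ht (by simp [h.2 t hc])

lemma locint_integrable {n : ℕ} {φ g : Eu n → ℝ} {δ : ℝ} (h : Tst φ δ)
    (hg : LocallyIntegrable g) (x : Eu n) : Integrable (fun t => φ t * g (x - t)) := by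
  have := h.compact.convolutionExists_left (ContinuousLinearMap.lsmul ℝ ℝ) h.1.continuous hg x
  simpa [ConvolutionExistsAt] using this

lemma cv_congr {n : ℕ} {φ g k : Eu n → ℝ} {δ : ℝ} (h : Tst φ δ) {x : Eu n}
    (hg : ∀ y ∈ closedBall x δ, g y = k y) : cv φ g x = cv φ k x := by
  rw [cv_def, cv_def]
  congr 1
  funext t
  by_cases ht : t ∈ closedBall (0 : Eu n) δ
  · rw [hg]
    simpa [dist_eq_norm] using ht
  · simp [h.2 t ht]

lemma cv_sum {n : ℕ} {ι : Type*} [Fintype ι] {φ : Eu n → ℝ} {g : ι → Eu n → ℝ} {δ : ℝ}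
    (h : Tst φ δ) {x : Eu n}
    (hg : ∀ i, ContinuousOn (g i) (closedBall x δ)) :
    cv φ (fun y => ∑ i, g i y) x = ∑ i, cv φ (g i) x := by
  simp only [cv_def, Finset.mul_sum]
  exact integral_finsetSum _ fun i _ => loc_integrable h (hg i)

lemma cv_bound {n : ℕ} {φ g : Eu n → ℝ} {δ C : ℝ} (h : Tst φ δ) {x : Eu n}
    (hg : ∀ y ∈ closedBall x δ, |g y| ≤ C) : |cv φ g x| ≤ C * ∫ t, |φ t| := by
  rw [cv_def, ← integral_const_mul, ← Real.norm_eq_abs]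
  refine norm_integral_le_of_norm_le
    ((h.1.continuous.integrable_of_hasCompactSupport h.compact).abs.const_mul C)
    (Eventually.of_forall fun t => ?_)
  rw [Real.norm_eq_abs, abs_mul, mul_comm C]
  by_cases ht : t ∈ closedBall (0 : Eu n) δ
  · refine mul_le_mul_of_nonneg_left (hg _ ?_) (abs_nonneg _)
    simpa [dist_eq_norm] using ht
  · simp [h.2 t ht]

lemma cv_ibp {n : ℕ} {φ g : Eu n → ℝ} {δ : ℝ} (h : Tst φ δ) {x : Eu n} {W : Set (Eu n)}
    (hW : IsOpen W) (hWx : closedBall x δ ⊆ W) (hg : ContDiffOn ℝ 1 g W) (v : Eu n) :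
    cv (dd v φ) g x = cv φ (dd v g) x := by
  have hgc : ContinuousOn g (closedBall x δ) := hg.continuousOn.mono hWx
  have hgd : ContinuousOn (dd v g) (closedBall x δ) := by
    have := hg.continuousOn_fderiv_of_isOpen hW le_rfl
    exact (this.clm_apply continuousOn_const).mono hWx
  have hmem : ∀ t ∈ closedBall (0 : Eu n) δ, x - t ∈ W := by
    intro t ht
    apply hWx
    simpa [dist_eq_norm] using ht
  have hd : ∀ t ∈ closedBall (0 : Eu n) δ,
      HasFDerivAt (fun s => g (x - s)) (-(fderiv ℝ g (x - t))) t := by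
    intro t ht
    have h1 : HasFDerivAt g (fderiv ℝ g (x - t)) (x - t) :=
      ((hg.differentiableOn (by simp)).differentiableAt (hW.mem_nhds (hmem t ht))).hasFDerivAt
    have h2 : HasFDerivAt (fun s : Eu n => x - s) (-(ContinuousLinearMap.id ℝ (Eu n))) t :=
      (hasFDerivAt_id t).const_sub x
    have h3 := HasFDerivAt.comp (f := fun s => x - s) t h1 h2
    exact h3.congr_fderiv (by ext w; simp)
  have hpt : ∀ t, φ t * fderiv ℝ (fun s => g (x - s)) t v = -(φ t * dd v g (x - t)) := by
    intro t
    by_cases ht : t ∈ closedBall (0 : Eu n) δ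
    · rw [(hd t ht).fderiv]; simp [dd]
    · simp [h.2 t ht]
  have key := integral_mul_fderiv_eq_neg_fderiv_mul_of_integrable (μ := (volume : Measure (Eu n)))
    (f := φ) (g := fun s => g (x - s)) (v := v)
    (loc_integrable (h.dd v) hgc) (by
      simp only [hpt]
      exact (loc_integrable h hgd).neg) (loc_integrable h hgc)
    (fun t _ => smooth_diff h.1 t) (fun t ht => (hd t (h.tsupp ht)).differentiableAt)
  simp only [hpt, integral_neg, neg_inj] at key
  rw [cv_def, cv_def, key]
  rfl

lemma locint_indicator {n : ℕ} {A W : Set (Eu n)} {g : Eu n → ℝ} (hA : IsClosed A) (hAW : A ⊆ W)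
    (hg : ContinuousOn g W) : LocallyIntegrable (A.indicator g) := by
  rw [MeasureTheory.locallyIntegrable_iff]
  intro K hK
  rw [integrableOn_indicator_iff hA.measurableSet]
  exact (hg.mono (Set.inter_subset_left.trans hAW)).integrableOn_compact (hK.inter_left hA)

open scoped ContDiff Convolution

lemma dd_contDiffOn {n : ℕ} {g : Eu n → ℝ} {W : Set (Eu n)} (hW : IsOpen W)
    (hg : ContDiffOn ℝ 2 g W) (v : Eu n) : ContDiffOn ℝ 1 (dd v g) W := by
  have h := hg.fderiv_of_isOpen (m := 1) hW (by norm_num)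
  exact h.clm_apply contDiffOn_const

lemma dd_continuousOn {n : ℕ} {g : Eu n → ℝ} {W : Set (Eu n)} (hW : IsOpen W)
    (hg : ContDiffOn ℝ 1 g W) (v : Eu n) : ContinuousOn (dd v g) W := by
  have h := hg.continuousOn_fderiv_of_isOpen hW le_rfl
  exact h.clm_apply continuousOn_const

lemma hgt_ball {n : ℕ} {ν q x y : Eu n} {δ : ℝ} (hν : ‖ν‖ = 1) (hy : y ∈ closedBall x δ) :
    hgt ν q x - δ ≤ hgt ν q y := by
  have h1 : hgt ν q x - hgt ν q y = ⟪ν, x - y⟫ := by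
    unfold hgt
    rw [← inner_sub_right]; congr 1; abel
  have h2 := real_inner_le_norm ν (x - y)
  rw [hν, one_mul] at h2
  have h3 : ‖x - y‖ ≤ δ := by rw [← dist_eq_norm, dist_comm]; exact hy
  linarith

theorem half_moll {m : ℕ} (hm : 1 ≤ m) (b : Fin (m+1) → Eu (m+1))
    (hb : ∀ i, ⟪b (Fin.last m), b i⟫ = if i = Fin.last m then (1:ℝ) else 0)
    (v : Fin (m+1) → Eu (m+1) → ℝ) (p : Eu (m+1) → ℝ) (q : Eu (m+1))
    (hv : ∀ k, ContDiffOn ℝ 2 (v k) {z | 0 < hgt (b (Fin.last m)) q z})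
    (hp : ContDiffOn ℝ 1 p {z | 0 < hgt (b (Fin.last m)) q z})
    (hst : ∀ z, 0 < hgt (b (Fin.last m)) q z → ∀ k, lapb b (v k) z = dd (b k) p z)
    (hdiv : ∀ z, 0 < hgt (b (Fin.last m)) q z → ∑ k, dd (b k) (v k) z = 0)
    (M : ℝ) (hM0 : 0 ≤ M)
    (hM : ∀ z, 0 < hgt (b (Fin.last m)) q z → ∑ k, v k z ^ 2 ≤ M ^ 2)
    (hp0 : ∀ ε > 0, ∃ R : ℝ, ∀ z, 0 < hgt (b (Fin.last m)) q z →
      R ≤ hgt (b (Fin.last m)) q z → |p z| ≤ ε)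
    (δ : ℝ) (hδ : 0 < δ) (φ : Eu (m+1) → ℝ) (hφ : Tst φ δ) (hφ0 : ∀ t, 0 ≤ φ t)
    (hφ1 : ∫ t, φ t = 1) (t0 : ℝ) (ht0 : 3 * δ < t0) :
    |cv φ ({z | δ ≤ hgt (b (Fin.last m)) q z}.indicator p) (q + t0 • b (Fin.last m))|
      ≤ Econst (m + 1) / (t0 - 3 * δ) * M := by
  set ν := b (Fin.last m) with hν
  set H : Set (Eu (m+1)) := {z | 0 < hgt ν q z} with hH
  set A : Set (Eu (m+1)) := {z | δ ≤ hgt ν q z} with hA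
  set W : Set (Eu (m+1)) := {z | δ < hgt ν q z} with hW
  have hhc := (hgt_smooth ν q).continuous
  have hAc : IsClosed A := isClosed_le continuous_const hhc
  have hWo : IsOpen W := isOpen_lt continuous_const hhc
  have hAH : A ⊆ H := fun z hz => lt_of_lt_of_le hδ hz
  have hWA : W ⊆ A := by
    intro z hz
    have h1 : δ < hgt ν q z := hz
    exact h1.le
  have hνν : ⟪ν, ν⟫ = (1:ℝ) := by rw [hν, hb, if_pos rfl]
  have hνn : ‖ν‖ = 1 := by
    have : ‖ν‖ ^ 2 = 1 := by rw [← real_inner_self_eq_norm_sq, hνν]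
    nlinarith [norm_nonneg ν]
  set vt : Fin (m+1) → Eu (m+1) → ℝ := fun k => A.indicator (v k) with hvt
  set pt : Eu (m+1) → ℝ := A.indicator p with hpt
  have vli : ∀ k, LocallyIntegrable (vt k) := fun k => locint_indicator hAc hAH (hv k).continuousOn
  have pli : LocallyIntegrable pt := locint_indicator hAc hAH hp.continuousOn
  have veq : ∀ k, ∀ z ∈ W, vt k z = v k z := fun k z hz => Set.indicator_of_mem (hWA hz) _
  have peq : ∀ z ∈ W, pt z = p z := fun z hz => Set.indicator_of_mem (hWA hz) _
  have vt2 : ∀ k, ContDiffOn ℝ 2 (vt k) W := fun k =>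
    ((hv k).mono (hWA.trans hAH)).congr (veq k)
  have vt1 : ∀ k, ContDiffOn ℝ 1 (vt k) W := fun k => (vt2 k).of_le (by norm_num)
  have pt1 : ContDiffOn ℝ 1 pt W := (hp.mono (hWA.trans hAH)).congr peq
  -- pointwise bound
  have vM : ∀ z, ∑ k, vt k z ^ 2 ≤ M ^ 2 := by
    intro z
    by_cases hz : z ∈ A
    · have : ∀ k, vt k z = v k z := fun k => Set.indicator_of_mem hz _
      simp only [this]
      exact hM z (hAH hz)
    · have : ∀ k, vt k z = 0 := fun k => Set.indicator_of_notMem hz _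
      simp only [this]
      simpa using sq_nonneg M
  have vM1 : ∀ k z, |vt k z| ≤ M := by
    intro k z
    refine abs_le_of_sq_le_sq ?_ hM0
    exact (Finset.single_le_sum (f := fun k => vt k z ^ 2) (fun i _ => sq_nonneg _)
      (Finset.mem_univ k)).trans (vM z)
  have hball : ∀ z, 2 * δ < hgt ν q z → closedBall z δ ⊆ W := by
    intro z hz y hy
    have := hgt_ball (q := q) hνn hy
    have h2 : δ < hgt ν q y := by linarith
    exact h2
  have hshift : ∀ z, hgt ν (q + (3 * δ) • ν) z = hgt ν q z - 3 * δ := by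
    intro z
    unfold hgt
    rw [← sub_sub, inner_sub_right, inner_smul_right, hνν, mul_one]
  -- decay
  have decay : ∀ ψ : Eu (m+1) → ℝ, Tst ψ δ → ∀ ε > 0, ∃ R : ℝ, ∀ z,
      R ≤ hgt ν (q + (3 * δ) • ν) z → |cv ψ pt z| ≤ ε := by
    intro ψ hψ ε hε
    have hI : 0 ≤ ∫ t, |ψ t| := integral_nonneg fun t => abs_nonneg _
    have hpos : 0 < 1 + ∫ t, |ψ t| := by linarith
    obtain ⟨R, hR⟩ := hp0 (ε / (1 + ∫ t, |ψ t|)) (div_pos hε hpos)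
    refine ⟨max R 0, fun z hz => ?_⟩
    rw [hshift] at hz
    have hz1 := (le_max_left R 0).trans hz
    have hz2 := (le_max_right R 0).trans hz
    have h1 := cv_bound (g := pt) (C := ε / (1 + ∫ t, |ψ t|)) hψ (x := z) (by
      intro y hy
      have h2 := hgt_ball (q := q) hνn hy
      have hyW : y ∈ W := by
        have h3 : δ < hgt ν q y := by linarith
        exact h3
      rw [peq y hyW]
      exact hR y (hAH (hWA hyW)) (by linarith))
    refine h1.trans ?_
    rw [div_mul_eq_mul_div, div_le_iff₀ hpos]
    nlinarith
  -- bounds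
  obtain ⟨C, hCk⟩ : ∃ C : Fin (m+1) → ℝ, ∀ k, (∀ z, |cv φ (vt k) z| ≤ C k) ∧
      (∀ z, |dd (b k) (cv φ (vt k)) z| ≤ C k) ∧ (∀ z, |lapb b (cv φ (vt k)) z| ≤ C k) := by
    have : ∀ k, ∃ C : ℝ, (∀ z, |cv φ (vt k) z| ≤ C) ∧
      (∀ z, |dd (b k) (cv φ (vt k)) z| ≤ C) ∧ (∀ z, |lapb b (cv φ (vt k)) z| ≤ C) := by
      intro k
      set c0 := M * ∫ t, |φ t|
      set c1 := M * ∫ t, |dd (b k) φ t|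
      set c2 := ∑ i, M * ∫ t, |dd (b i) (dd (b i) φ) t|
      refine ⟨max c0 (max c1 c2), fun z => ?_, fun z => ?_, fun z => ?_⟩
      · exact (cv_bound hφ fun y _ => vM1 k y).trans (le_max_left _ _)
      · rw [cv_dd hφ (vli k)]
        exact (cv_bound (hφ.dd _) fun y _ => vM1 k y).trans
          ((le_max_left _ _).trans (le_max_right _ _))
      · refine le_trans ?_ ((le_max_right _ _).trans (le_max_right _ _))
        unfold lapb
        refine (Finset.abs_sum_le_sum_abs _ _).trans (Finset.sum_le_sum fun i _ => ?_)
        rw [cv_dd hφ (vli k), cv_dd (hφ.dd _) (vli k)]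
        exact cv_bound ((hφ.dd _).dd _) fun y _ => vM1 k y
    choose C hC using this
    exact ⟨C, hC⟩
  have hCs : ∀ k, C k ≤ ∑ i, C i := by
    intro k
    exact Finset.single_le_sum (f := C)
      (fun i _ => (abs_nonneg _).trans ((hCk i).1 0)) (Finset.mem_univ k)
  have res := half_smooth hm b hb (fun k => cv φ (vt k)) (cv φ pt)
    (fun k => cv_smooth hφ (vli k)) (cv_smooth hφ pli) (q + (3 * δ) • ν) δ hδ
    ?_ ?_ (∑ i, C i) M hM0
    (fun k z => ((hCk k).1 z).trans (hCs k))
    (fun k z => ((hCk k).2.1 z).trans (hCs k))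
    (fun k z => ((hCk k).2.2 z).trans (hCs k))
    ?_ (decay φ hφ) ?_ (t0 - 3 * δ) (by linarith)
  · have e : q + (3 * δ) • ν + (t0 - 3 * δ) • ν = q + t0 • ν := by
      rw [add_assoc, ← add_smul]; congr 2; ring
    rw [← hν, e] at res
    exact res
  · intro z hz k
    rw [hshift] at hz
    have hz2 : 2 * δ < hgt ν q z := by linarith
    have hB := hball z hz2
    have e1 : ∀ i, dd (b i) (dd (b i) (cv φ (vt k))) z
        = cv φ (dd (b i) (dd (b i) (vt k))) z := by
      intro i
      rw [cv_dd hφ (vli k), cv_dd (hφ.dd _) (vli k),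
        cv_ibp (hφ.dd _) hWo hB (vt1 k), cv_ibp hφ hWo hB (dd_contDiffOn hWo (vt2 k) _)]
    have e2 : dd (b k) (cv φ pt) z = cv φ (dd (b k) pt) z := by
      rw [cv_dd hφ pli, cv_ibp hφ hWo hB pt1]
    rw [e2]
    unfold lapb
    rw [Finset.sum_congr rfl fun i _ => e1 i,
      ← cv_sum hφ fun i => (dd_continuousOn hWo (dd_contDiffOn hWo (vt2 k) (b i)) _).mono hB]
    refine cv_congr hφ fun y hy => ?_
    have hyW := hB hy
    have s1 : ∀ i, dd (b i) (dd (b i) (vt k)) y = dd (b i) (dd (b i) (v k)) y := fun i =>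
      dd_congr _ hWo (dd_congr _ hWo (veq k)) y hyW
    rw [Finset.sum_congr rfl fun i _ => s1 i, dd_congr _ hWo peq y hyW]
    exact hst y (hAH (hWA hyW)) k
  · intro z hz
    rw [hshift] at hz
    have hz2 : 2 * δ < hgt ν q z := by linarith
    have hB := hball z hz2
    have e1 : ∀ i, dd (b i) (cv φ (vt i)) z = cv φ (dd (b i) (vt i)) z := by
      intro i
      rw [cv_dd hφ (vli i), cv_ibp hφ hWo hB (vt1 i)]
    rw [Finset.sum_congr rfl fun i _ => e1 i,
      ← cv_sum hφ fun i => (dd_continuousOn hWo (vt1 i) _).mono hB]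
    have : cv φ (fun y => ∑ i, dd (b i) (vt i) y) z = cv φ (fun _ => 0) z := by
      refine cv_congr hφ fun y hy => ?_
      have hyW := hB hy
      rw [Finset.sum_congr rfl fun i _ => dd_congr _ hWo (veq i) y hyW]
      exact hdiv y (hAH (hWA hyW))
    rw [this, cv_def]; simp
  · intro z
    set w : Fin (m+1) → ℝ := fun k => cv φ (vt k) z with hw
    set S := ∑ k, w k ^ 2 with hS
    have hS0 : 0 ≤ S := Finset.sum_nonneg fun k _ => sq_nonneg _
    have h1 : S = ∫ t, φ t * ∑ k, w k * vt k (z - t) := by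
      have : ∀ t, φ t * ∑ k, w k * vt k (z - t) = ∑ k, w k * (φ t * vt k (z - t)) := by
        intro t; rw [Finset.mul_sum]; refine Finset.sum_congr rfl fun k _ => ?_; ring
      simp only [this]
      rw [integral_finsetSum _ fun k _ => (locint_integrable hφ (vli k) z).const_mul _]
      refine Finset.sum_congr rfl fun k _ => ?_
      rw [integral_const_mul, ← cv_def, sq]
    have h2 : ∀ t, ∑ k, w k * vt k (z - t) ≤ √S * M := by
      intro t
      have cs := Finset.sum_mul_sq_le_sq_mul_sq Finset.univ w (fun k => vt k (z - t))
      have : (∑ k, w k * vt k (z - t)) ^ 2 ≤ (√S * M) ^ 2 := by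
        rw [mul_pow, Real.sq_sqrt hS0]
        exact cs.trans (mul_le_mul_of_nonneg_left (vM _) hS0)
      exact (le_abs_self _).trans (abs_le_of_sq_le_sq this (mul_nonneg (Real.sqrt_nonneg _) hM0))
    have hφi : Integrable φ := hφ.1.continuous.integrable_of_hasCompactSupport hφ.compact
    have h3 : S ≤ √S * M := by
      calc S = ∫ t, φ t * ∑ k, w k * vt k (z - t) := h1
        _ ≤ ∫ t, φ t * (√S * M) := by
            refine integral_mono ?_ (hφi.mul_const _)
              fun t => mul_le_mul_of_nonneg_left (h2 t) (hφ0 t)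
            have : ∀ t, φ t * ∑ k, w k * vt k (z - t) = ∑ k, w k * (φ t * vt k (z - t)) := by
              intro t; rw [Finset.mul_sum]; refine Finset.sum_congr rfl fun k _ => ?_; ring
            simp only [this]
            exact integrable_finsetSum _
              fun k _ => (locint_integrable hφ (vli k) z).const_mul _
        _ = √S * M := by rw [integral_mul_const, hφ1, one_mul]
    have h4 : √S ≤ M := by
      rcases (Real.sqrt_nonneg S).eq_or_lt with h | h
      · rw [← h]; exact hM0
      · have h5 : √S * √S ≤ √S * M := by rw [Real.mul_self_sqrt hS0]; exact h3
        exact le_of_mul_le_mul_left h5 h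
    calc S = √S ^ 2 := (Real.sq_sqrt hS0).symm
      _ ≤ M ^ 2 := by gcongr
  · intro ε hε
    obtain ⟨R, hR⟩ := decay _ (hφ.dd ν) ε hε
    refine ⟨R, fun z hz => ?_⟩
    rw [← hν, cv_dd hφ pli]
    exact hR z hz

open scoped ContDiff Convolution

theorem half_rough {m : ℕ} (hm : 1 ≤ m) (b : Fin (m+1) → Eu (m+1))
    (hb : ∀ i, ⟪b (Fin.last m), b i⟫ = if i = Fin.last m then (1:ℝ) else 0)
    (v : Fin (m+1) → Eu (m+1) → ℝ) (p : Eu (m+1) → ℝ) (q : Eu (m+1))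
    (hv : ∀ k, ContDiffOn ℝ 2 (v k) {z | 0 < hgt (b (Fin.last m)) q z})
    (hp : ContDiffOn ℝ 1 p {z | 0 < hgt (b (Fin.last m)) q z})
    (hst : ∀ z, 0 < hgt (b (Fin.last m)) q z → ∀ k, lapb b (v k) z = dd (b k) p z)
    (hdiv : ∀ z, 0 < hgt (b (Fin.last m)) q z → ∑ k, dd (b k) (v k) z = 0)
    (M : ℝ) (hM0 : 0 ≤ M)
    (hM : ∀ z, 0 < hgt (b (Fin.last m)) q z → ∑ k, v k z ^ 2 ≤ M ^ 2)
    (hp0 : ∀ ε > 0, ∃ R : ℝ, ∀ z, 0 < hgt (b (Fin.last m)) q z →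
      R ≤ hgt (b (Fin.last m)) q z → |p z| ≤ ε)
    (t0 : ℝ) (ht0 : 0 < t0) :
    |p (q + t0 • b (Fin.last m))| ≤ Econst (m + 1) / t0 * M := by
  set ν := b (Fin.last m) with hν
  have hνν : ⟪ν, ν⟫ = (1:ℝ) := by rw [hν, hb, if_pos rfl]
  have hνn : ‖ν‖ = 1 := by
    have : ‖ν‖ ^ 2 = 1 := by rw [← real_inner_self_eq_norm_sq, hνν]
    nlinarith [norm_nonneg ν]
  set x := q + t0 • ν with hx
  have hxh : hgt ν q x = t0 := by
    rw [hx, hgt_add, hνν]; simp [hgt]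
  have hHo : IsOpen {z | 0 < hgt ν q z} :=
    isOpen_lt continuous_const (hgt_smooth ν q).continuous
  have hpc : ContinuousAt p x :=
    hp.continuousOn.continuousAt (hHo.mem_nhds (by
      change 0 < hgt ν q x
      rw [hxh]; exact ht0))
  refine le_of_forall_pos_le_add fun ε hε => ?_
  obtain ⟨r, hr, hrp⟩ := Metric.continuousAt_iff.1 hpc ε hε
  have hlim : Tendsto (fun δ : ℝ => Econst (m + 1) / (t0 - 3 * δ) * M + ε)
      (nhdsWithin 0 (Set.Ioi 0)) (nhds (Econst (m + 1) / (t0 - 3 * 0) * M + ε)) := by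
    have hc : ContinuousAt (fun δ : ℝ => Econst (m + 1) / (t0 - 3 * δ) * M + ε) 0 := by
      refine ((continuousAt_const.div (by fun_prop) ?_).mul continuousAt_const).add
        continuousAt_const
      simpa using ht0.ne'
    exact hc.tendsto.mono_left nhdsWithin_le_nhds
  rw [mul_zero, sub_zero] at hlim
  refine ge_of_tendsto hlim ?_
  have hmin : 0 < min r (t0 / 4) := lt_min hr (by linarith)
  filter_upwards [Ioo_mem_nhdsGT hmin] with δ hδ
  have hδ0 : 0 < δ := hδ.1
  have hδr : δ < r := hδ.2.trans_le (min_le_left _ _)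
  have hδt : δ < t0 / 4 := hδ.2.trans_le (min_le_right _ _)
  let B : ContDiffBump (0 : Eu (m+1)) := ⟨δ / 2, δ, by linarith, by linarith⟩
  have hB : Tst (B.normed volume) δ := by
    refine ⟨B.contDiff_normed, fun t ht => ?_⟩
    have h1 : t ∉ Function.support (B.normed volume) := by
      rw [B.support_normed_eq]
      exact fun hc => ht (ball_subset_closedBall hc)
    simpa using h1
  have hest := half_moll hm b hb v p q hv hp hst hdiv M hM0 hM hp0 δ hδ0 (B.normed volume) hB
    (fun t => B.nonneg_normed t) (B.integral_normed) t0 (by linarith)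
  rw [← hν, ← hx] at hest
  set A : Set (Eu (m+1)) := {z | δ ≤ hgt ν q z} with hA
  have hmemA : ∀ y ∈ ball x δ, A.indicator p y = p y := by
    intro y hy
    refine Set.indicator_of_mem ?_ _
    have h1 := hgt_ball (q := q) hνn (ball_subset_closedBall hy)
    change δ ≤ hgt ν q y
    linarith
  have hAc : IsClosed A := isClosed_le continuous_const (hgt_smooth ν q).continuous
  have hli : LocallyIntegrable (A.indicator p) :=
    locint_indicator hAc (fun z hz => lt_of_lt_of_le hδ0 hz) hp.continuousOn
  have hdist : dist (cv (B.normed volume) (A.indicator p) x) (A.indicator p x) ≤ ε := by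
    refine ContDiffBump.dist_normed_convolution_le hli.aestronglyMeasurable fun y hy => ?_
    have hy' : y ∈ ball x δ := hy
    rw [hmemA y hy', hmemA x (mem_ball_self hδ0)]
    exact (hrp (lt_trans hy' hδr)).le
  rw [hmemA x (mem_ball_self hδ0), dist_comm, Real.dist_eq] at hdist
  have := abs_sub_abs_le_abs_sub (p x) (cv (B.normed volume) (A.indicator p) x)
  linarith

/-! ### Change of orthonormal basis -/

lemma sum_inner_basis {n : ℕ} (b : OrthonormalBasis (Fin n) ℝ (Eu n)) (T : Eu n →L[ℝ] Eu n) :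
    ∑ i, ⟪b i, T (b i)⟫ = ∑ i, ⟪ee i, T (ee i)⟫ := by
  have h1 := LinearMap.trace_eq_sum_inner (T : Eu n →ₗ[ℝ] Eu n) b
  have h2 := LinearMap.trace_eq_sum_inner (T : Eu n →ₗ[ℝ] Eu n)
    (EuclideanSpace.basisFun (Fin n) ℝ)
  rw [h1] at h2
  simpa using h2

lemma sum_bilin_basis {n : ℕ} (b : OrthonormalBasis (Fin n) ℝ (Eu n))
    (B : Eu n →L[ℝ] Eu n →L[ℝ] ℝ) :
    ∑ i, B (b i) (b i) = ∑ i, B (ee i) (ee i) := by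
  have h := sum_inner_basis b
    (((InnerProductSpace.toDual ℝ (Eu n)).symm.toContinuousLinearEquiv.toContinuousLinearMap).comp B)
  have e : ∀ w : Eu n, ⟪w, (((InnerProductSpace.toDual ℝ
      (Eu n)).symm.toContinuousLinearEquiv.toContinuousLinearMap).comp B) w⟫ = B w w := by
    intro w
    rw [real_inner_comm]
    exact InnerProductSpace.toDual_symm_apply
  simpa only [e] using h

lemma dd_dd_eq {n : ℕ} {F : Eu n → ℝ} {x : Eu n} (hF : ContDiffAt ℝ 2 F x) (w : Eu n) :
    dd w (dd w F) x = fderiv ℝ (fderiv ℝ F) x w w := by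
  have h : ContDiffAt ℝ 1 (fderiv ℝ F) x := hF.fderiv_right (by norm_num)
  have h1 : HasFDerivAt (fderiv ℝ F) (fderiv ℝ (fderiv ℝ F) x) x :=
    (h.differentiableAt (by simp)).hasFDerivAt
  have h2 := h1.clm_apply (hasFDerivAt_const w x)
  unfold dd
  rw [h2.fderiv]
  simp

lemma lapb_basis {n : ℕ} (b : OrthonormalBasis (Fin n) ℝ (Eu n)) {F : Eu n → ℝ} {x : Eu n}
    (hF : ContDiffAt ℝ 2 F x) : lapb b F x = lapb ee F x := by
  unfold lapb
  simp only [dd_dd_eq hF]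
  exact sum_bilin_basis b _

lemma dd_lin {n : ℕ} (w : Eu n) (c : Fin n → ℝ) {F : Fin n → Eu n → ℝ} {x : Eu n}
    (hF : ∀ j, DifferentiableAt ℝ (F j) x) :
    dd w (fun y => ∑ j, c j * F j y) x = ∑ j, c j * dd w (F j) x := by
  unfold dd
  rw [fderiv_fun_sum fun j _ => (hF j).const_mul (c j)]
  simp only [sum_apply]
  refine Finset.sum_congr rfl fun j _ => ?_
  rw [fderiv_const_mul (hF j)]
  simp

lemma eu_decomp {n : ℕ} (w : Eu n) : w = ∑ j, w j • ee j := by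
  have := (EuclideanSpace.basisFun (Fin n) ℝ).sum_repr w
  simpa using this.symm

lemma clm_decomp {n : ℕ} (L : Eu n →L[ℝ] ℝ) (w : Eu n) : L w = ∑ j, w j * L (ee j) := by
  conv_lhs => rw [eu_decomp w]
  simp

lemma inner_decomp {n : ℕ} (w z : Eu n) : ⟪w, z⟫ = ∑ j, w j * z j := by
  rw [PiLp.inner_apply]
  refine Finset.sum_congr rfl fun j _ => ?_
  simp [mul_comm]

lemma stokes_basis {n : ℕ} (b : OrthonormalBasis (Fin n) ℝ (Eu n)) {W : Set (Eu n)}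
    (hW : IsOpen W) (u : Eu n → Eu n) (p : Eu n → ℝ) (hu : ContDiffOn ℝ 2 u W)
    (hst : ∀ y ∈ W, ∀ j : Fin n, lapl (fun z => u z j) y - fderiv ℝ p y (ee j) = 0)
    (z : Eu n) (hz : z ∈ W) (k : Fin n) :
    lapb b (fun y => ⟪b k, u y⟫) z = dd (b k) p z := by
  have hc : ∀ j, ContDiffOn ℝ 2 (fun y => u y j) W := fun j =>
    (EuclideanSpace.proj (𝕜 := ℝ) j).contDiff.comp_contDiffOn hu
  have hvk : ContDiffOn ℝ 2 (fun y => ⟪b k, u y⟫) W := contDiffOn_const.inner ℝ hu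
  rw [lapb_basis b (hvk.contDiffAt (hW.mem_nhds hz))]
  have e : (fun y => ⟪b k, u y⟫) = fun y => ∑ j, b k j * u y j := by
    funext y; exact inner_decomp _ _
  rw [e]
  have h1 : ∀ i, dd (ee i) (dd (ee i) (fun y => ∑ j, b k j * u y j)) z
      = ∑ j, b k j * dd (ee i) (dd (ee i) (fun y => u y j)) z := by
    intro i
    rw [dd_congr (ee i) hW (H := fun y => ∑ j, b k j * dd (ee i) (fun y => u y j) y)
      (fun y hy => dd_lin _ _ fun j =>
        ((hc j).contDiffAt (hW.mem_nhds hy)).differentiableAt (by simp)) z hz]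
    exact dd_lin _ _ fun j =>
      ((dd_contDiffOn hW (hc j) (ee i)).contDiffAt (hW.mem_nhds hz)).differentiableAt (by simp)
  unfold lapb
  rw [Finset.sum_congr rfl fun i _ => h1 i, Finset.sum_comm]
  have h2 : ∀ j, ∑ i, b k j * dd (ee i) (dd (ee i) (fun y => u y j)) z
      = b k j * fderiv ℝ p z (ee j) := by
    intro j
    rw [← Finset.mul_sum]
    congr 1
    exact sub_eq_zero.1 (hst z hz j)
  rw [Finset.sum_congr rfl fun j _ => h2 j]
  exact (clm_decomp _ _).symm

lemma div_basis {n : ℕ} (b : OrthonormalBasis (Fin n) ℝ (Eu n)) (u : Eu n → Eu n) {z : Eu n}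
    (hu : DifferentiableAt ℝ u z) : ∑ k, dd (b k) (fun y => ⟪b k, u y⟫) z = divg u z := by
  have h1 : ∀ a : Eu n, dd a (fun y => ⟪a, u y⟫) z = ⟪a, fderiv ℝ u z a⟫ := by
    intro a
    unfold dd
    have := ((innerSL ℝ a).hasFDerivAt (x := u z)).comp z hu.hasFDerivAt
    have e : fderiv ℝ (fun y => ⟪a, u y⟫) z = (innerSL ℝ a).comp (fderiv ℝ u z) := this.fderiv
    rw [e]
    simp
  rw [Finset.sum_congr rfl fun k _ => h1 (b k), sum_inner_basis b]
  unfold divg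
  refine Finset.sum_congr rfl fun j _ => ?_
  rw [← h1]
  unfold dd
  congr 2
  funext y
  simp [EuclideanSpace.inner_single_left]

/-- Let `n ≥ 2` and `Ω = ℝⁿ \ Ḡ` with `G` a convex domain in `ℝⁿ`.
Let `u ∈ C²(Ω) ∩ C_b(Ω̄)` be the velocity component of a solution `{u, p}` of the
Stokes system `Δu - grad p = 0`, `div u = 0` in `Ω`, with pressure `p` vanishing as
`d_x → ∞`, and `|u| ≤ M` on `Ω`. Then for every `x ∈ Ω`,
`|p(x)| ≤ (Eₙ / d_x) · sup_Ω |u| ≤ (Eₙ / d_x) · M`. -/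
theorem pressure_bound_stokes_complement_convex
    (n : ℕ) (hn : 2 ≤ n) (G Ω : Set (Eu n))
    (hGo : IsOpen G) (hGc : Convex ℝ G) (hGne : G.Nonempty)
    (hΩ : Ω = (closure G)ᶜ)
    (u : Eu n → Eu n) (p : Eu n → ℝ)
    (hreg : ContDiffOn ℝ 2 u Ω) (hcont : ContinuousOn u (closure Ω))
    (hpreg : ContDiffOn ℝ 1 p Ω)
    (hstokes : ∀ y ∈ Ω, ∀ j : Fin n,
      lapl (fun z => u z j) y - fderiv ℝ p y (EuclideanSpace.single j 1) = 0)
    (hdiv : ∀ y ∈ Ω, divg u y = 0)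
    (hvanish : ∀ ε > 0, ∃ Rb : ℝ, ∀ y ∈ Ω, Rb ≤ Metric.infDist y (frontier Ω) → |p y| ≤ ε)
    (M : ℝ) (hM : ∀ y ∈ Ω, ‖u y‖ ≤ M)
    (x : Eu n) (hx : x ∈ Ω) :
    |p x| ≤ Econst n / Metric.infDist x (frontier Ω) * M := by
  obtain ⟨m, rfl⟩ : ∃ m, n = m + 1 := ⟨n - 1, by omega⟩
  have hm : 1 ≤ m := by omega
  set K := closure G with hK
  have hKne : K.Nonempty := hGne.closure
  have hKc : IsClosed K := isClosed_closure
  have hKv : Convex ℝ K := hGc.closure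
  have hΩo : IsOpen Ω := by rw [hΩ]; exact hKc.isOpen_compl
  obtain ⟨q, hqK, hq⟩ := exists_norm_eq_iInf_of_complete_convex hKne hKc.isComplete hKv x
  have hin := (norm_eq_iInf_iff_real_inner_le_zero hKv hqK).1 hq
  have hxK : x ∉ K := by rw [hΩ] at hx; exact hx
  have hxq : x - q ≠ 0 := by
    intro h
    rw [sub_eq_zero] at h
    exact hxK (h ▸ hqK)
  set d := ‖x - q‖ with hd
  have hd0 : 0 < d := norm_pos_iff.2 hxq
  set ν : Eu (m+1) := d⁻¹ • (x - q) with hν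
  have hνn : ‖ν‖ = 1 := by
    rw [hν, norm_smul, Real.norm_eq_abs, abs_of_pos (inv_pos.2 hd0)]
    exact inv_mul_cancel₀ hd0.ne'
  have hxe : q + d • ν = x := by
    rw [hν, smul_smul, mul_inv_cancel₀ hd0.ne', one_smul]; abel
  have hKh : ∀ y ∈ K, hgt ν q y ≤ 0 := by
    intro y hy
    unfold hgt
    rw [hν, real_inner_smul_left]
    exact mul_nonpos_of_nonneg_of_nonpos (inv_nonneg.2 hd0.le) (hin y hy)
  have hHΩ : ∀ y, 0 < hgt ν q y → y ∈ Ω := by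
    intro y hy
    rw [hΩ]
    intro hc
    exact absurd (hKh y hc) (not_le.2 hy)
  have hfr : frontier Ω ⊆ K := by
    rw [hΩ, frontier_compl]
    exact hKc.frontier_subset
  have hνν : ⟪ν, ν⟫ = (1:ℝ) := by rw [real_inner_self_eq_norm_sq, hνn]; norm_num
  have hqf : q ∈ frontier Ω := by
    rw [hΩ, frontier_compl, frontier_eq_closure_inter_closure]
    refine ⟨subset_closure hqK, ?_⟩
    have ht : Tendsto (fun s : ℝ => q + s • ν) (nhdsWithin 0 (Set.Ioi 0)) (nhds q) := by
      have hc : Continuous (fun s : ℝ => q + s • ν) := by fun_prop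
      have := hc.tendsto 0
      simp only [zero_smul, add_zero] at this
      exact this.mono_left nhdsWithin_le_nhds
    refine mem_closure_of_tendsto ht ?_
    filter_upwards [self_mem_nhdsWithin] with s hs hc
    have h1 := hKh _ hc
    rw [hgt_add, hνν] at h1
    have h2 : hgt ν q q = 0 := by simp [hgt]
    have h3 : 0 < s := hs
    linarith
  have hle : infDist x (frontier Ω) ≤ d := by
    have := infDist_le_dist_of_mem (x := x) hqf
    rwa [dist_eq_norm] at this
  have hpos : 0 < infDist x (frontier Ω) :=
    (isClosed_frontier.notMem_iff_infDist_pos ⟨q, hqf⟩).1 fun hc => hxK (hfr hc)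
  have hhd : ∀ y, hgt ν q y ≤ infDist y (frontier Ω) := by
    intro y
    refine (le_infDist ⟨q, hqf⟩).2 fun z hz => ?_
    have h1 := hKh z (hfr hz)
    have h2 : hgt ν q y - hgt ν q z = ⟪ν, y - z⟫ := by
      unfold hgt
      rw [← inner_sub_right]; congr 1; abel
    have h3 := real_inner_le_norm ν (y - z)
    rw [hνn, one_mul] at h3
    rw [dist_eq_norm]
    linarith
  have hM0 : 0 ≤ M := (norm_nonneg _).trans (hM x hx)
  -- orthonormal basis whose last vector is the normal
  obtain ⟨b, hb⟩ : ∃ b : OrthonormalBasis (Fin (m+1)) ℝ (Eu (m+1)), b (Fin.last m) = ν := by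
    have ho : Orthonormal ℝ (({Fin.last m} : Set (Fin (m+1))).restrict (fun _ => ν)) := by
      constructor
      · intro i; exact hνn
      · intro i j hij
        exact absurd (Subsingleton.elim i j) hij
    obtain ⟨b, hb⟩ := ho.exists_orthonormalBasis_extension_of_card_eq (by simp)
    exact ⟨b, hb _ rfl⟩
  have hsub : {z | 0 < hgt (b (Fin.last m)) q z} ⊆ Ω := by
    intro z hz
    rw [hb] at hz
    exact hHΩ z hz
  have res := half_rough hm (fun i => b i)
    (fun i => by
      rw [orthonormal_iff_ite.1 b.orthonormal]
      simp only [eq_comm])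
    (fun k y => ⟪b k, u y⟫) p q
    (fun k => contDiffOn_const.inner ℝ (hreg.mono hsub)) (hpreg.mono hsub)
    (fun z hz k => stokes_basis b hΩo u p hreg hstokes z (hsub hz) k)
    (fun z hz => by
      rw [div_basis b u ((hreg.contDiffAt (hΩo.mem_nhds (hsub hz))).differentiableAt (by simp))]
      exact hdiv z (hsub hz))
    M hM0
    (fun z hz => by
      rw [b.sum_sq_inner_right]
      exact pow_le_pow_left₀ (norm_nonneg _) (hM z (hsub hz)) 2)
    (fun ε hε => by
      obtain ⟨R, hR⟩ := hvanish ε hε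
      refine ⟨R, fun z hz hRz => hR z (hsub hz) (hRz.trans ?_)⟩
      rw [hb]
      exact hhd z)
    d hd0
  simp only [hb, hxe] at res
  refine res.trans ?_
  have h0 : 0 ≤ Econst (m + 1) / d * M := (abs_nonneg _).trans res
  have h1 : 0 ≤ Econst (m + 1) * M := by
    have := mul_nonneg h0 hd0.le
    have e : Econst (m + 1) / d * M * d = Econst (m + 1) * M := by field_simp
    rwa [e] at this
  rw [div_mul_eq_mul_div, div_mul_eq_mul_div]
  exact div_le_div_of_nonneg_left h1 hpos hle
end
end

section
/- Let Ω = ℂ \ Ḡ, where G is a convex domain in ℂ, and let f be a holomorphic function in Ω whose real part is bounded. Then for every point z ∈ Ω and every integer s ≥ 1, |f^{(s)}(z)| ≤ (K_s / d_z^s) · sup_Ω |Re f|, where d_z = dist(z, ∂Ω) and K_s = (s!/π) max_α ∫_{−π/2}^{π/2} |cos(α + (s+1)φ)| cos^{s−1}φ dφ. Moreover, for odd orders K_{2l+1} = 2[(2l+1)!!]² / (π(2l+1)), and K_2 = 3√3/(2π), K_4 = 3(16+5√5)/(4π). -/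
open Real Filter Metric
open scoped Real

noncomputable section

/-- The constant
`K_s = (s!/π) max_{α∈ℝ} ∫_{-π/2}^{π/2} |cos(α + (s+1)φ)| cos^{s-1}φ dφ`. -/
def Kconst (s : ℕ) : ℝ :=
  ((s.factorial : ℝ) / π) *
    ⨆ α : ℝ, ∫ t in (-(π / 2))..(π / 2),
      |Real.cos (α + ((s : ℝ) + 1) * t)| * Real.cos t ^ (s - 1)

/-- The integral whose supremum defines `Kconst`. -/
def Jint (s : ℕ) (α : ℝ) : ℝ := ∫ t in (-(π / 2))..(π / 2),
      |Real.cos (α + ((s : ℝ) + 1) * t)| * Real.cos t ^ (s - 1)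

lemma Kconst_eq (s : ℕ) : Kconst s = ((s.factorial : ℝ) / π) * ⨆ α : ℝ, Jint s α := rfl

lemma Jint_bdd (s : ℕ) : BddAbove (Set.range (Jint s)) := by
  refine ⟨1 * |π / 2 - (-(π / 2))|, ?_⟩
  rintro _ ⟨α, rfl⟩
  refine (le_abs_self _).trans ?_
  rw [← Real.norm_eq_abs]
  refine intervalIntegral.norm_integral_le_of_norm_le_const ?_
  intro t _
  rw [Real.norm_eq_abs, abs_mul, abs_abs, abs_pow]
  exact mul_le_one₀ (Real.abs_cos_le_one _) (by positivity)
    (pow_le_one₀ (abs_nonneg _) (Real.abs_cos_le_one _))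

lemma abs_cos_add_nat (x : ℝ) (n : ℕ) : |Real.cos (x + n * π)| = |Real.cos x| := by
  rw [Real.cos_add_nat_mul_pi]; simp [abs_mul]

lemma abs_cos_sub_nat (x : ℝ) (n : ℕ) : |Real.cos (x - n * π)| = |Real.cos x| := by
  rw [Real.cos_sub_nat_mul_pi]; simp [abs_mul]

lemma orth (α : ℝ) (N : ℕ) (hN : 0 < N) (k : ℤ) (hk : ¬ (N : ℤ) ∣ k) :
    ∫ t in (-(π / 2))..(π / 2),
      ((|Real.cos (α + N * t)| : ℝ) : ℂ) * Complex.exp (2 * k * t * Complex.I) = 0 := by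
  set g : ℝ → ℂ := fun t => ((|Real.cos (α + N * t)| : ℝ) : ℂ) *
    Complex.exp (2 * k * t * Complex.I) with hg
  have hN' : (N : ℝ) ≠ 0 := by positivity
  have hNc : (N : ℂ) ≠ 0 := by exact_mod_cast hN.ne'
  have hshift : ∀ t, g (t + π / N) = Complex.exp (2 * π * Complex.I * k / N) * g t := by
    intro t
    simp only [hg]
    have e : α + N * (t + π / N) = (α + N * t) + (1 : ℕ) * π := by push_cast; field_simp; ring
    rw [e, abs_cos_add_nat, mul_left_comm, ← Complex.exp_add]
    congr 2
    push_cast; field_simp; ring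
  have hper : Function.Periodic g π := by
    intro t
    simp only [hg]
    have e : α + N * (t + π) = (α + N * t) + N * π := by ring
    rw [e, abs_cos_add_nat]
    congr 1
    rw [Complex.exp_eq_exp_iff_exists_int]
    exact ⟨k, by push_cast; ring⟩
  have h1 : ∫ t in (-(π / 2))..(π / 2), g t = ∫ t in (-(π / 2))..(π / 2), g (t + π / N) := by
    rw [intervalIntegral.integral_comp_add_right (fun x => g x)]
    have := hper.intervalIntegral_add_eq (-(π / 2)) (-(π/2) + π / N)
    rw [show -(π / 2) + π = π / 2 by ring,
      show -(π / 2) + π / N + π = π / 2 + π / N by ring] at this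
    exact this
  have h2 : ∫ t in (-(π / 2))..(π / 2), g (t + π / N) =
      Complex.exp (2 * π * Complex.I * k / N) * ∫ t in (-(π / 2))..(π / 2), g t := by
    simp_rw [hshift]
    rw [intervalIntegral.integral_const_mul]
  have hne : Complex.exp (2 * π * Complex.I * k / N) ≠ 1 := by
    intro h
    rw [Complex.exp_eq_one_iff] at h
    obtain ⟨n, hn⟩ := h
    apply hk
    refine ⟨n, ?_⟩
    have : (2 * π * Complex.I) * k = (2 * π * Complex.I) * (N * n) := by
      field_simp at hn
      linear_combination (2 * π * Complex.I) * hn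
    have := mul_left_cancel₀ Complex.two_pi_I_ne_zero this
    exact_mod_cast this
  have h3 : (Complex.exp (2 * π * Complex.I * k / N) - 1) * ∫ t in (-(π / 2))..(π / 2), g t = 0 := by
    rw [sub_mul, ← h2, ← h1]; ring
  exact (mul_eq_zero.mp h3).resolve_left (sub_ne_zero.mpr hne)

lemma int_abs_cos_base : ∫ t in (-(π / 2))..(-(π / 2) + π), |Real.cos t| = 2 := by
  rw [show -(π / 2) + π = π / 2 by ring]
  have : ∫ t in (-(π / 2))..(π / 2), |Real.cos t| = ∫ t in (-(π / 2))..(π / 2), Real.cos t := by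
    apply intervalIntegral.integral_congr
    intro t ht
    rw [Set.uIcc_of_le (by linarith [Real.pi_pos])] at ht
    exact abs_of_nonneg (Real.cos_nonneg_of_mem_Icc ht)
  rw [this, integral_cos, Real.sin_neg, Real.sin_pi_div_two]; norm_num

lemma int_abs_cos (α : ℝ) (N : ℕ) (hN : 0 < N) :
    ∫ t in (-(π / 2))..(π / 2), |Real.cos (α + N * t)| = 2 := by
  have hN' : (N : ℝ) ≠ 0 := by positivity
  have hper : Function.Periodic (fun t => |Real.cos t|) π := by
    intro t; simp
  rw [intervalIntegral.integral_comp_add_mul (fun x => |Real.cos x|) hN' α]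
  have h1 := hper.intervalIntegral_add_zsmul_eq N (α + N * (-(π / 2)))
  have e : α + N * (-(π / 2)) + (N : ℤ) • π = α + N * (π / 2) := by simp; ring
  rw [e, hper.intervalIntegral_add_eq (α + N * (-(π / 2))) (-(π/2)), int_abs_cos_base] at h1
  rw [h1 (fun a b => (by fun_prop : Continuous fun t => |Real.cos t|).intervalIntegrable a b)]
  simp; field_simp

lemma cos_pow_even (l : ℕ) (t : ℝ) : ((Real.cos t ^ (2 * l) : ℝ) : ℂ) =
    ∑ m ∈ Finset.range (2 * l + 1), ((2 * l).choose m / 4 ^ l : ℂ) *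
      Complex.exp (2 * ((m - l : ℤ) : ℂ) * t * Complex.I) := by
  push_cast
  rw [Complex.cos, div_pow, add_pow, Finset.sum_div]
  refine Finset.sum_congr rfl fun m hm => ?_
  have hm' : m ≤ 2 * l := by simpa [Nat.lt_succ_iff] using hm
  rw [← Complex.exp_nat_mul, ← Complex.exp_nat_mul, ← Complex.exp_add]
  rw [show (m : ℂ) * (t * Complex.I) + ((2 * l - m : ℕ) : ℂ) * (-t * Complex.I) =
    2 * (m - l) * t * Complex.I by push_cast [Nat.cast_sub hm']; ring]
  rw [pow_mul]; norm_num; ring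

lemma Jint_odd (l : ℕ) (α : ℝ) : Jint (2 * l + 1) α = 2 * ((2 * l).choose l / 4 ^ l) := by
  have key : ((Jint (2 * l + 1) α : ℝ) : ℂ) = ((2 * ((2 * l).choose l / 4 ^ l) : ℝ) : ℂ) := by
    rw [Jint, ← intervalIntegral.integral_ofReal]
    have e : ∀ t : ℝ, ((|Real.cos (α + (((2 * l + 1 : ℕ) : ℝ) + 1) * t)| *
        Real.cos t ^ (2 * l + 1 - 1) : ℝ) : ℂ) =
        ∑ m ∈ Finset.range (2 * l + 1), ((2 * l).choose m / 4 ^ l : ℂ) *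
          (((|Real.cos (α + (2 * l + 2 : ℕ) * t)| : ℝ) : ℂ) *
          Complex.exp (2 * ((m - l : ℤ) : ℂ) * t * Complex.I)) := by
      intro t
      rw [Nat.add_sub_cancel, Complex.ofReal_mul, cos_pow_even, Finset.mul_sum]
      refine Finset.sum_congr rfl fun m _ => ?_
      rw [show (((2 * l + 1 : ℕ) : ℝ) + 1) = ((2 * l + 2 : ℕ) : ℝ) by push_cast; ring]
      ring
    simp_rw [e]
    rw [intervalIntegral.integral_finsetSum]
    · rw [Finset.sum_eq_single l]
      · rw [intervalIntegral.integral_const_mul]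
        simp only [sub_self, Int.cast_zero, mul_zero, zero_mul, Complex.exp_zero, mul_one]
        rw [intervalIntegral.integral_ofReal, int_abs_cos α _ (by omega)]
        push_cast; ring
      · intro m hm hml
        rw [intervalIntegral.integral_const_mul, orth α _ (by omega), mul_zero]
        intro hd
        have hm' : m < 2 * l + 1 := by simpa using hm
        have := Int.eq_zero_of_abs_lt_dvd hd (by rw [abs_lt]; push_cast; constructor <;> omega)
        omega
      · intro h; simp at h; omega
    · intro m _
      apply Continuous.intervalIntegrable
      fun_prop
  exact_mod_cast key

lemma Kconst_odd (l : ℕ) : Kconst (2 * l + 1) =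
        2 * ((Nat.doubleFactorial (2 * l + 1) : ℝ)) ^ 2 / (π * (2 * (l : ℝ) + 1)) := by
  rw [Kconst_eq]
  simp_rw [Jint_odd]
  rw [ciSup_const]
  have h1 : ((2 * l + 1).factorial : ℝ) = (2 * l + 1).doubleFactorial * (2 ^ l * l.factorial) := by
    rw [Nat.factorial_eq_mul_doubleFactorial, Nat.doubleFactorial_two_mul]; push_cast; ring
  have h2 : ((2 * l + 1).factorial : ℝ) = (2 * l + 1) * (2 * l).factorial := by
    rw [Nat.factorial_succ]; push_cast; ring
  have h3 : ((2 * l).choose l : ℝ) * l.factorial * l.factorial = (2 * l).factorial := by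
    have := Nat.choose_mul_factorial_mul_factorial (show l ≤ 2 * l by omega)
    rw [show 2 * l - l = l by omega] at this
    exact_mod_cast this
  have hl : (l.factorial : ℝ) ≠ 0 := by positivity
  have h5 : (2 * (l : ℝ) + 1) ≠ 0 := by positivity
  have hc : ((2 * l).choose l : ℝ) = (2 * l).factorial / (l.factorial * l.factorial) := by
    field_simp; linarith
  have hd : ((2 * l).factorial : ℝ) =
      (2 * l + 1).doubleFactorial * (2 ^ l * l.factorial) / (2 * l + 1) := by
    field_simp; linarith
  rw [hc, hd, h1, show (4 : ℝ) = 2 * 2 by norm_num, mul_pow]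
  field_simp

lemma Jint_period (s : ℕ) : Function.Periodic (Jint s) π := by
  intro α
  unfold Jint
  congr 1; ext t
  rw [show α + π + ((s : ℝ) + 1) * t = (α + (s + 1) * t) + (1 : ℕ) * π by push_cast; ring,
    abs_cos_add_nat]

/-- integral of `|cos|` against a function, splitting at the sign change -/
lemma split_sign (N α : ℝ) (hN : 0 < N) (hα : α ∈ Set.Icc 0 π) (w P : ℝ → ℝ) (hw : Continuous w)
    (hP : ∀ t, HasDerivAt P (Real.cos (α + N * t) * w t) t) :
    ∫ t in (-(π / (2 * N)))..(π / (2 * N)), |Real.cos (α + N * t)| * w t =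
      2 * P ((π / 2 - α) / N) - P (-(π / (2 * N))) - P (π / (2 * N)) := by
  have hpi := Real.pi_pos
  set p := (π / 2 - α) / N with hp
  have e1 : π / (2 * N) = (π / 2) / N := by field_simp
  have hp1 : -(π / (2 * N)) ≤ p := by
    rw [e1, hp, ← neg_div]; gcongr; linarith [hα.2]
  have hp2 : p ≤ π / (2 * N) := by
    rw [e1, hp]; gcongr; linarith [hα.1]
  have hc : Continuous fun t => Real.cos (α + N * t) * w t := by fun_prop
  have hc' : Continuous fun t => |Real.cos (α + N * t)| * w t := by fun_prop
  have hNp : N * p = π / 2 - α := by rw [hp]; field_simp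
  have hNe : N * (π / (2 * N)) = π / 2 := by field_simp
  rw [← intervalIntegral.integral_add_adjacent_intervals (b := p)
    (hc'.intervalIntegrable _ _) (hc'.intervalIntegrable _ _)]
  have i1 : ∫ t in (-(π / (2 * N)))..p, |Real.cos (α + N * t)| * w t =
      ∫ t in (-(π / (2 * N)))..p, Real.cos (α + N * t) * w t := by
    apply intervalIntegral.integral_congr
    intro t ht
    rw [Set.uIcc_of_le hp1] at ht
    have a1 := mul_le_mul_of_nonneg_left ht.1 hN.le
    have a2 := mul_le_mul_of_nonneg_left ht.2 hN.le
    have : 0 ≤ Real.cos (α + N * t) := by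
      apply Real.cos_nonneg_of_neg_pi_div_two_le_of_le
      · linarith [hα.1]
      · linarith
    simp only [abs_of_nonneg this]
  have i2 : ∫ t in p..(π / (2 * N)), |Real.cos (α + N * t)| * w t =
      ∫ t in p..(π / (2 * N)), -(Real.cos (α + N * t) * w t) := by
    apply intervalIntegral.integral_congr
    intro t ht
    rw [Set.uIcc_of_le hp2] at ht
    have a1 := mul_le_mul_of_nonneg_left ht.1 hN.le
    have a2 := mul_le_mul_of_nonneg_left ht.2 hN.le
    have : Real.cos (α + N * t) ≤ 0 := by
      apply Real.cos_nonpos_of_pi_div_two_le_of_le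
      · linarith
      · linarith [hα.2]
    simp only [abs_of_nonpos this]; ring
  rw [i1, i2, intervalIntegral.integral_neg,
    intervalIntegral.integral_eq_sub_of_hasDerivAt (fun t _ => hP t) (hc.intervalIntegrable _ _),
    intervalIntegral.integral_eq_sub_of_hasDerivAt (fun t _ => hP t) (hc.intervalIntegrable _ _)]
  ring

/-- Fold an integral over a length `π` interval into `2 m + 1` shifted pieces. -/
lemma fold_int (m : ℕ) (α : ℝ) (w : ℝ → ℝ) (hw : Continuous w) :
    ∫ t in (-(π / 2))..(π / 2), |Real.cos (α + (2 * m + 1 : ℝ) * t)| * w t =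
    ∫ t in (-(π / (2 * (2 * m + 1 : ℝ))))..(π / (2 * (2 * m + 1 : ℝ))),
      |Real.cos (α + (2 * m + 1 : ℝ) * t)| *
        ∑ k ∈ Finset.range (2 * m + 1), w (t + (k - m : ℝ) * (π / (2 * m + 1))) := by
  set N : ℝ := 2 * m + 1 with hN
  have hN0 : 0 < N := by positivity
  have hc' : Continuous fun t => |Real.cos (α + N * t)| * w t := by fun_prop
  have h := intervalIntegral.sum_integral_adjacent_intervals (μ := MeasureTheory.volume)
    (f := fun t => |Real.cos (α + N * t)| * w t)
    (a := fun k : ℕ => -(π / 2) + k * (π / N)) (n := 2 * m + 1)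
    (fun k _ => hc'.intervalIntegrable _ _)
  have e : -(π / 2) + ((2 * m + 1 : ℕ) : ℝ) * (π / N) = π / 2 := by
    push_cast; rw [← hN]; field_simp; ring
  simp only [e] at h
  rw [Nat.cast_zero, zero_mul, add_zero] at h
  rw [← h]
  simp_rw [Finset.mul_sum]
  rw [intervalIntegral.integral_finsetSum (fun k _ => by
    apply Continuous.intervalIntegrable; fun_prop)]
  refine Finset.sum_congr rfl fun k _ => ?_
  have hs : ∀ t, |Real.cos (α + N * t)| * w (t + (k - m : ℝ) * (π / N)) =
      (fun t => |Real.cos (α + N * t)| * w t) (t + (k - m : ℝ) * (π / N)) := by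
    intro t
    simp only
    congr 1
    rw [show α + N * (t + (k - m : ℝ) * (π / N)) = α + N * t + k * π - m * π by field_simp; ring,
      abs_cos_sub_nat, abs_cos_add_nat]
  simp_rw [hs]
  rw [intervalIntegral.integral_comp_add_right (fun t => |Real.cos (α + N * t)| * w t)]
  have e1 : -(π / 2) + (k : ℝ) * (π / N) = -(π / (2 * N)) + (k - m : ℝ) * (π / N) := by
    have : (m : ℝ) = (N - 1) / 2 := by rw [hN]; ring
    rw [this]; field_simp; ring
  have e2 : -(π / 2) + ((k + 1 : ℕ) : ℝ) * (π / N) = π / (2 * N) + (k - m : ℝ) * (π / N) := by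
    have : (m : ℝ) = (N - 1) / 2 := by rw [hN]; ring
    rw [this]; push_cast; field_simp; ring
  rw [e1, e2]

lemma Jint_two (α : ℝ) (hα : α ∈ Set.Icc 0 π) :
    Jint 2 α = 9 / 4 * Real.cos ((π / 2 - α) / 3) - Real.cos ((π / 2 - α) / 3) ^ 3 := by
  have h1 : Jint 2 α = ∫ t in (-(π / (2 * 3)))..(π / (2 * 3)),
      |Real.cos (α + 3 * t)| * (2 * Real.cos t) := by
    have := fold_int 1 α Real.cos Real.continuous_cos
    norm_num [Finset.sum_range_succ] at this
    unfold Jint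
    norm_num
    rw [this]
    congr 1; ext t
    rw [show t + -(π / 3) = t - π / 3 by ring, Real.cos_sub, Real.cos_add t,
      Real.cos_pi_div_three]
    ring
  rw [h1, split_sign 3 α (by norm_num) hα (fun t => 2 * Real.cos t)
    (fun t => Real.sin (α + 4 * t) / 4 + Real.sin (α + 2 * t) / 2) (by fun_prop)]
  · set p := (π / 2 - α) / 3 with hp
    have ha : α = π / 2 - 3 * p := by rw [hp]; ring
    have s1 : α + 4 * p = π / 2 + p := by rw [ha]; ring
    have s2 : α + 2 * p = π / 2 - p := by rw [ha]; ring
    have s3 : Real.sin α = 4 * Real.cos p ^ 3 - 3 * Real.cos p := by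
      rw [ha, Real.sin_pi_div_two_sub, Real.cos_three_mul]
    have c1 : Real.cos (4 * (π / (2 * 3))) = -(1/2) := by
      rw [show 4 * (π / (2 * 3)) = π - π / 3 by ring, Real.cos_pi_sub, Real.cos_pi_div_three]
    have c2 : Real.cos (2 * (π / (2 * 3))) = 1/2 := by
      rw [show 2 * (π / (2 * 3)) = π / 3 by ring, Real.cos_pi_div_three]
    rw [s1, s2, add_comm (π / 2) p, Real.sin_add_pi_div_two, Real.sin_pi_div_two_sub]
    rw [mul_neg, mul_neg, Real.sin_add, Real.sin_add, Real.sin_add, Real.sin_add]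
    simp only [Real.cos_neg, Real.sin_neg, c1, c2, s3]
    ring
  · intro t
    have a1 : HasDerivAt (fun t : ℝ => α + 4 * t) 4 t := by
      simpa using ((hasDerivAt_id t).const_mul 4).const_add α
    have a2 : HasDerivAt (fun t : ℝ => α + 2 * t) 2 t := by
      simpa using ((hasDerivAt_id t).const_mul 2).const_add α
    have := (a1.sin.div_const 4).add (a2.sin.div_const 2)
    refine HasDerivAt.congr_deriv this ?_
    rw [show α + 4 * t = (α + 3 * t) + t by ring, show α + 2 * t = (α + 3 * t) - t by ring,
      Real.cos_add (α + 3 * t), Real.cos_sub (α + 3 * t)]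
    ring

lemma Kconst_two : Kconst 2 = 3 * Real.sqrt 3 / (2 * π) := by
  have h3 : Real.sqrt 3 ^ 2 = 3 := Real.sq_sqrt (by norm_num)
  have hs : ⨆ α, Jint 2 α = 3 * Real.sqrt 3 / 4 := by
    apply le_antisymm
    · apply ciSup_le
      intro α
      obtain ⟨β, hβ, hab⟩ := (Jint_period 2).exists_mem_Ico₀ Real.pi_pos α
      rw [hab, Jint_two β ⟨hβ.1, hβ.2.le⟩]
      have hpi := Real.pi_pos
      set c := Real.cos ((π / 2 - β) / 3) with hc
      have hcl : Real.sqrt 3 / 2 ≤ c := by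
        rw [← Real.cos_pi_div_six, hc, ← Real.cos_abs ((π / 2 - β) / 3)]
        have hq : |(π / 2 - β) / 3| ≤ π / 6 := by
          rw [abs_le]; constructor <;> linarith [hβ.1, hβ.2]
        apply Real.cos_le_cos_of_nonneg_of_le_pi (abs_nonneg _) (by linarith) hq
      have hs0 : 0 < Real.sqrt 3 := by positivity
      nlinarith [mul_nonneg (sub_nonneg.2 hcl) (sub_nonneg.2 hcl),
        mul_nonneg (mul_nonneg (sub_nonneg.2 hcl) (sub_nonneg.2 hcl)) hs0.le,
        mul_nonneg (mul_nonneg (sub_nonneg.2 hcl) (sub_nonneg.2 hcl)) (sub_nonneg.2 hcl)]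
    · have h0 := le_ciSup (Jint_bdd 2) 0
      refine le_trans (le_of_eq ?_) h0
      rw [Jint_two 0 ⟨le_rfl, Real.pi_pos.le⟩,
        show (π / 2 - 0) / 3 = π / 6 by ring, Real.cos_pi_div_six]
      linear_combination (Real.sqrt 3 / 8) * h3
  rw [Kconst_eq, hs]
  norm_num [Nat.factorial]
  field_simp
  norm_num

lemma cos_two_pi_div_five : Real.cos (2 * (π / 5)) = (Real.sqrt 5 - 1) / 4 := by
  have h5 : Real.sqrt 5 ^ 2 = 5 := Real.sq_sqrt (by norm_num)
  rw [Real.cos_two_mul, Real.cos_pi_div_five]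
  linear_combination h5 / 8

lemma Jint_four (α : ℝ) (hα : α ∈ Set.Icc 0 π) :
    32 * Jint 4 α = 16 * Real.cos ((π / 2 - α) / 5) ^ 5
      - 20 * Real.sqrt 5 * Real.cos ((π / 2 - α) / 5) ^ 3
      + 25 * Real.sqrt 5 * Real.cos ((π / 2 - α) / 5) := by
  have h5 : Real.sqrt 5 ^ 2 = 5 := Real.sq_sqrt (by norm_num)
  set A : ℝ := 3 * (1 + Real.sqrt 5) / 4 with hA
  set B : ℝ := (1 - Real.sqrt 5) / 4 with hB
  have cube : ∀ x : ℝ, Real.cos x ^ 3 = (3 * Real.cos x + Real.cos (3 * x)) / 4 := by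
    intro x; rw [Real.cos_three_mul]; ring
  have c3 : Real.cos (3 * (π / 5)) = -((Real.sqrt 5 - 1) / 4) := by
    rw [show 3 * (π / 5) = π - 2 * (π / 5) by ring, Real.cos_pi_sub, cos_two_pi_div_five]
  have c6 : Real.cos (3 * (2 * (π / 5))) = -((1 + Real.sqrt 5) / 4) := by
    rw [show 3 * (2 * (π / 5)) = π / 5 + π by ring, Real.cos_add_pi, Real.cos_pi_div_five]
  have h1 : Jint 4 α = ∫ t in (-(π / (2 * 5)))..(π / (2 * 5)),
      |Real.cos (α + 5 * t)| * (A * Real.cos t + B * Real.cos (3 * t)) := by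
    have := fold_int 2 α (fun t => Real.cos t ^ 3) (by fun_prop)
    norm_num [Finset.sum_range_succ] at this
    unfold Jint
    norm_num
    rw [this]
    congr 1; ext t
    congr 1
    have r1 : t + -(2 * (π / 5)) = t - 2 * (π / 5) := by ring
    have r2 : t + -(π / 5) = t - π / 5 := by ring
    rw [r1, r2]
    simp only [cube]
    rw [mul_sub, mul_sub, mul_add, mul_add]
    simp only [Real.cos_sub, Real.cos_add, c3, c6, cos_two_pi_div_five, Real.cos_pi_div_five]
    rw [hA, hB]
    ring
  rw [h1, split_sign 5 α (by norm_num) hα (fun t => A * Real.cos t + B * Real.cos (3 * t))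
    (fun t => A * ((Real.sin (α + 6 * t) / 6 + Real.sin (α + 4 * t) / 4) / 2)
      + B * ((Real.sin (α + 8 * t) / 8 + Real.sin (α + 2 * t) / 2) / 2)) (by fun_prop)]
  · set p := (π / 2 - α) / 5 with hp
    have ha : α = π / 2 - 5 * p := by rw [hp]; ring
    have s1 : α + 6 * p = p + π / 2 := by rw [ha]; ring
    have s2 : α + 4 * p = π / 2 - p := by rw [ha]; ring
    have s1' : α + 8 * p = 3 * p + π / 2 := by rw [ha]; ring
    have s2' : α + 2 * p = π / 2 - 3 * p := by rw [ha]; ring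
    have s3 : Real.sin α = 16 * Real.cos p ^ 5 - 20 * Real.cos p ^ 3 + 5 * Real.cos p := by
      rw [ha, Real.sin_pi_div_two_sub, show 5 * p = 2 * p + 3 * p by ring, Real.cos_add,
        Real.cos_two_mul, Real.cos_three_mul, Real.sin_two_mul, Real.sin_three_mul]
      have hh := Real.sin_sq p
      linear_combination (-6 * Real.cos p + 8 * Real.cos p * (Real.sin p ^ 2 + (1 - Real.cos p ^ 2))) * hh
    have c1 : Real.cos (6 * (π / (2 * 5))) = -((Real.sqrt 5 - 1) / 4) := by
      rw [← c3]; congr 1; ring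
    have c2 : Real.cos (4 * (π / (2 * 5))) = (Real.sqrt 5 - 1) / 4 := by
      rw [← cos_two_pi_div_five]; congr 1; ring
    have c8 : Real.cos (8 * (π / (2 * 5))) = -((1 + Real.sqrt 5) / 4) := by
      rw [show 8 * (π / (2 * 5)) = π - π / 5 by ring, Real.cos_pi_sub, Real.cos_pi_div_five]
    have c22 : Real.cos (2 * (π / (2 * 5))) = (1 + Real.sqrt 5) / 4 := by
      rw [show 2 * (π / (2 * 5)) = π / 5 by ring, Real.cos_pi_div_five]
    rw [s1, s2, s1', s2']
    simp only [Real.sin_add_pi_div_two, Real.sin_pi_div_two_sub, mul_neg]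
    simp only [Real.sin_add, Real.cos_neg, Real.sin_neg, c1, c2, c8, c22, s3]
    rw [Real.cos_three_mul, hA, hB]
    generalize Real.cos p = c at *
    generalize Real.sqrt 5 = q at *
    linear_combination ((1 / 4) * (16 * c ^ 5 - 20 * c ^ 3 + 5 * c)) * h5
  · intro t
    have a1 : ∀ m : ℝ, HasDerivAt (fun t : ℝ => Real.sin (α + m * t)) (Real.cos (α + m * t) * m) t := by
      intro m
      have : HasDerivAt (fun t : ℝ => α + m * t) m t := by
        simpa using ((hasDerivAt_id t).const_mul m).const_add α
      exact this.sin
    have := (((((a1 6).div_const 6).add ((a1 4).div_const 4)).div_const 2).const_mul A).add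
      (((((a1 8).div_const 8).add ((a1 2).div_const 2)).div_const 2).const_mul B)
    refine HasDerivAt.congr_deriv this ?_
    rw [show α + 6 * t = (α + 5 * t) + t by ring, show α + 4 * t = (α + 5 * t) - t by ring,
      show α + 8 * t = (α + 5 * t) + 3 * t by ring, show α + 2 * t = (α + 5 * t) - 3 * t by ring]
    simp only [Real.cos_add (α + 5 * t), Real.cos_sub (α + 5 * t)]
    ring

lemma poly_four (q c : ℝ) (hq2 : q ≤ 2.2361) (hc0 : 0.95 ≤ c)
    (hc1 : c ≤ 1) : 16 * c ^ 5 - 20 * q * c ^ 3 + 25 * q * c ≤ 16 + 5 * q := by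
  have h : 0 ≤ 16 * (1 + c + c ^ 2 + c ^ 3 + c ^ 4) - 20 * q * (1 + c + c ^ 2) + 25 * q := by
    have h2 : 0 ≤ (20 * (1 + c + c ^ 2) - 25) := by nlinarith
    have h3 := mul_nonneg h2 (sub_nonneg.2 hq2)
    have h4 : 0 ≤ 16 * (1 + c + c ^ 2 + c ^ 3 + c ^ 4) - 20 * 2.2361 * (1 + c + c ^ 2) + 25 * 2.2361 := by
      have : ∃ x, c = 0.95 + x := ⟨c - 0.95, by ring⟩
      obtain ⟨x, rfl⟩ := this
      have hx : 0 ≤ x := by linarith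
      nlinarith [pow_nonneg hx 2, pow_nonneg hx 3, pow_nonneg hx 4, sq_nonneg (x - 0.02)]
    nlinarith
  nlinarith [mul_nonneg (sub_nonneg.2 hc1) h]

lemma Kconst_four : Kconst 4 = 3 * (16 + 5 * Real.sqrt 5) / (4 * π) := by
  have h5 : Real.sqrt 5 ^ 2 = 5 := Real.sq_sqrt (by norm_num)
  have hq1 : 2.236 ≤ Real.sqrt 5 := Real.le_sqrt_of_sq_le (by norm_num)
  have hq2 : Real.sqrt 5 ≤ 2.2361 := Real.sqrt_le_iff.2 (by norm_num)
  have hs : ⨆ α, Jint 4 α = (16 + 5 * Real.sqrt 5) / 32 := by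
    apply le_antisymm
    · apply ciSup_le
      intro α
      obtain ⟨β, hβ, hab⟩ := (Jint_period 4).exists_mem_Ico₀ Real.pi_pos α
      rw [hab]
      have h := Jint_four β ⟨hβ.1, hβ.2.le⟩
      have hpi := Real.pi_pos
      set c := Real.cos ((π / 2 - β) / 5) with hc
      have hcl : 0.95 ≤ c := by
        have hq : |(π / 2 - β) / 5| ≤ π / 10 := by
          rw [abs_le]; constructor <;> linarith [hβ.1, hβ.2]
        have hcc : Real.cos (π / 10) ≤ c := by
          rw [hc, ← Real.cos_abs ((π / 2 - β) / 5)]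
          exact Real.cos_le_cos_of_nonneg_of_le_pi (abs_nonneg _) (by linarith) hq
        have h10 : Real.cos (π / 10) ^ 2 = 1 / 2 + (1 + Real.sqrt 5) / 4 / 2 := by
          rw [Real.cos_sq, show 2 * (π / 10) = π / 5 by ring, Real.cos_pi_div_five]
        have h0 : 0 ≤ Real.cos (π / 10) :=
          Real.cos_nonneg_of_neg_pi_div_two_le_of_le (by linarith) (by linarith)
        nlinarith
      have := poly_four _ c hq2 hcl (Real.cos_le_one _)
      linarith
    · have h0 := le_ciSup (Jint_bdd 4) (π / 2)
      refine le_trans (le_of_eq ?_) h0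
      have := Jint_four (π / 2) ⟨by linarith [Real.pi_pos], by linarith [Real.pi_pos]⟩
      rw [sub_self, zero_div, Real.cos_zero] at this
      linarith
  rw [Kconst_eq, hs]
  norm_num [Nat.factorial]
  field_simp
  norm_num

lemma leibniz_one (h : ℂ → ℂ) (B : Set ℂ) (hB : IsOpen B) (hh : AnalyticOnNhd ℂ h B) (n : ℕ) :
    ∀ z ∈ B, iteratedDeriv (n + 1) (fun z => (1 - z) * h z) z =
      (1 - z) * iteratedDeriv (n + 1) h z - (n + 1) * iteratedDeriv n h z := by
  have hdiff : ∀ m, ∀ z ∈ B, DifferentiableAt ℂ (iteratedDeriv m h) z := by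
    intro m z hz
    rw [iteratedDeriv_eq_iterate]
    exact (hh.iterated_deriv m z hz).differentiableAt
  have h1 : ∀ z, HasDerivAt (fun z : ℂ => 1 - z) (-1) z := by
    intro z; simpa using (hasDerivAt_id z).const_sub 1
  induction n with
  | zero =>
    intro z hz
    have h0 := (hdiff 0 z hz).hasDerivAt
    rw [iteratedDeriv_zero] at h0
    have := ((h1 z).mul h0).deriv
    simp only [zero_add, iteratedDeriv_one, iteratedDeriv_zero]
    refine Eq.trans this ?_
    push_cast; ring
  | succ n ih =>
    intro z hz
    rw [iteratedDeriv_succ]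
    have hev : iteratedDeriv (n + 1) (fun z => (1 - z) * h z) =ᶠ[nhds z]
        fun z => (1 - z) * iteratedDeriv (n + 1) h z - (n + 1) * iteratedDeriv n h z := by
      filter_upwards [hB.mem_nhds hz] with w hw using ih w hw
    rw [hev.deriv_eq]
    have := (((h1 z).mul (hdiff (n + 1) z hz).hasDerivAt).sub
      ((hdiff n z hz).hasDerivAt.const_mul ((n : ℂ) + 1))).deriv
    refine Eq.trans this ?_
    rw [← iteratedDeriv_succ, ← iteratedDeriv_succ]
    push_cast; ring

/-- The Cayley-type parametrization of a half-plane by the unit disc. -/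
def cay (p u : ℂ) (z : ℂ) : ℂ := p + u * ((1 + z) / (1 - z))

lemma one_sub_ne {z : ℂ} (hz : z ∈ ball (0 : ℂ) 1) : 1 - z ≠ 0 := by
  intro h
  have : z = 1 := by linear_combination -h
  simp [this] at hz

lemma cay_hasDerivAt (p u : ℂ) {z : ℂ} (hz : z ∈ ball (0 : ℂ) 1) :
    HasDerivAt (cay p u) (2 * u / (1 - z) ^ 2) z := by
  have h1 : HasDerivAt (fun z : ℂ => 1 - z) (-1) z := by
    simpa using (hasDerivAt_id z).const_sub 1
  have h2 : HasDerivAt (fun z : ℂ => 1 + z) 1 z := by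
    simpa using (hasDerivAt_id z).const_add 1
  have := ((h2.div h1 (one_sub_ne hz)).const_mul u).const_add p
  refine HasDerivAt.congr_deriv this ?_
  ring

lemma cay_re {z : ℂ} (hz : z ∈ ball (0 : ℂ) 1) : 0 < ((1 + z) / (1 - z)).re := by
  have hne := one_sub_ne hz
  have h1 : 0 < Complex.normSq (1 - z) := Complex.normSq_pos.2 hne
  have h2 : Complex.normSq z < 1 := by
    rw [Complex.normSq_eq_norm_sq]
    have : ‖z‖ < 1 := by simpa using hz
    have := norm_nonneg z
    nlinarith
  rw [Complex.normSq_apply] at h2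
  rw [Complex.div_re, ← add_div]
  apply div_pos _ h1
  simp
  nlinarith

lemma bol (f : ℂ → ℂ) (U : Set ℂ) (hU : IsOpen U) (hf : DifferentiableOn ℂ f U) (p u : ℂ)
    (hpu : ∀ w : ℂ, 0 < w.re → p + u * w ∈ U) (n : ℕ) :
    ∀ z ∈ ball (0 : ℂ) 1, iteratedDeriv (n + 1) (fun z => (1 - z) ^ n * f (cay p u z)) z =
      (2 * u) ^ (n + 1) / (1 - z) ^ (n + 2) * iteratedDeriv (n + 1) f (cay p u z) := by
  have hfa := hf.analyticOnNhd hU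
  have hmem : ∀ z ∈ ball (0 : ℂ) 1, cay p u z ∈ U := fun z hz => hpu _ (cay_re hz)
  have hdf : ∀ m, ∀ z ∈ ball (0 : ℂ) 1, HasDerivAt (fun z => iteratedDeriv m f (cay p u z))
      (iteratedDeriv (m + 1) f (cay p u z) * (2 * u / (1 - z) ^ 2)) z := by
    intro m z hz
    have : DifferentiableAt ℂ (iteratedDeriv m f) (cay p u z) := by
      rw [iteratedDeriv_eq_iterate]
      exact (hfa.iterated_deriv m _ (hmem z hz)).differentiableAt
    rw [iteratedDeriv_succ]
    exact this.hasDerivAt.comp z (cay_hasDerivAt p u hz)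
  have han : ∀ n : ℕ, AnalyticOnNhd ℂ (fun z => (1 - z) ^ n * f (cay p u z)) (ball (0 : ℂ) 1) := by
    intro n
    apply DifferentiableOn.analyticOnNhd _ isOpen_ball
    intro z hz
    have := (hdf 0 z hz).differentiableAt
    rw [iteratedDeriv_zero] at this
    exact (DifferentiableAt.mul (by fun_prop) this).differentiableWithinAt
  induction n with
  | zero =>
    intro z hz
    have := (hdf 0 z hz).deriv
    simp only [iteratedDeriv_zero, zero_add] at this
    simp only [zero_add, iteratedDeriv_one, pow_zero, one_mul, pow_one] at this ⊢
    rw [this]; ring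
  | succ n ih =>
    intro z hz
    have e : (fun z => (1 - z) ^ (n + 1) * f (cay p u z)) =
        fun z => (1 - z) * ((fun z => (1 - z) ^ n * f (cay p u z)) z) := by
      ext z; simp only; ring
    rw [e, leibniz_one _ _ isOpen_ball (han n) (n + 1) z hz, ih z hz, iteratedDeriv_succ]
    have hev : iteratedDeriv (n + 1) (fun z => (1 - z) ^ n * f (cay p u z)) =ᶠ[nhds z]
        fun z => (2 * u) ^ (n + 1) / (1 - z) ^ (n + 2) * iteratedDeriv (n + 1) f (cay p u z) := by
      filter_upwards [isOpen_ball.mem_nhds hz] with w hw using ih w hw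
    rw [hev.deriv_eq]
    have hne := one_sub_ne hz
    have h1 : HasDerivAt (fun z : ℂ => 1 - z) (-1) z := by
      simpa using (hasDerivAt_id z).const_sub 1
    have := (((hasDerivAt_const z ((2 * u) ^ (n + 1))).div (h1.pow (n + 2)) (pow_ne_zero _ hne)).mul
      (hdf (n + 1) z hz)).deriv
    have h2 : deriv (fun z => (2 * u) ^ (n + 1) / (1 - z) ^ (n + 2) *
      iteratedDeriv (n + 1) f (cay p u z)) z = _ := this
    rw [h2]
    simp only [Pi.pow_apply, Pi.div_apply, show n + 2 - 1 = n + 1 by omega]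
    push_cast
    field_simp
    ring

lemma schwarz_repr (g : ℂ → ℂ) (hg : DifferentiableOn ℂ g (ball 0 1)) (n : ℕ) (r : ℝ)
    (hr0 : 0 < r) (hr1 : r < 1) :
    (r : ℂ) ^ (n + 1) * iteratedDeriv (n + 1) (fun z => (1 - z) ^ n * g z) 0 =
      (((n + 1).factorial : ℝ) / π : ℝ) * ∫ t in (0 : ℝ)..(2 * π),
        (((g (circleMap 0 r t)).re : ℝ) : ℂ) *
          ((1 - circleMap 0 r t) ^ n * Complex.exp (-((n + 1 : ℕ) * t * Complex.I))) := by
  have hsub : closedBall (0 : ℂ) r ⊆ ball 0 1 := closedBall_subset_ball hr1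
  have hgc : DifferentiableOn ℂ g (closedBall 0 r) := hg.mono hsub
  have hcont : Continuous fun t => g (circleMap 0 r t) :=
    hgc.continuousOn.comp_continuous (continuous_circleMap 0 r)
      (fun t => circleMap_mem_closedBall 0 hr0.le t)
  have hrc : (r : ℂ) ≠ 0 := by exact_mod_cast hr0.ne'
  have hce : ∀ t : ℝ, circleMap 0 r t = r * Complex.exp (t * Complex.I) := by
    intro t; simp [circleMap]
  -- Cauchy
  have h1 := DifferentiableOn.circleIntegral_one_div_sub_center_pow_smul hr0 (n + 1)
    (f := fun z => (1 - z) ^ n * g z) (c := 0) (DifferentiableOn.mul (by fun_prop) hgc)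
  set D := iteratedDeriv (n + 1) (fun z => (1 - z) ^ n * g z) 0 with hD
  have h2 : ∫ t in (0 : ℝ)..(2 * π), g (circleMap 0 r t) *
      ((1 - circleMap 0 r t) ^ n * Complex.exp (-((n + 1 : ℕ) * t * Complex.I))) =
      (r : ℂ) ^ (n + 1) * (2 * π / (n + 1).factorial) * D := by
    have e : ∀ t : ℝ, g (circleMap 0 r t) *
      ((1 - circleMap 0 r t) ^ n * Complex.exp (-((n + 1 : ℕ) * t * Complex.I))) =
      ((r : ℂ) ^ (n + 1) / Complex.I) * (deriv (circleMap 0 r) t •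
        ((1 / (circleMap 0 r t - 0) ^ (n + 1 + 1)) • ((1 - circleMap 0 r t) ^ n *
          g (circleMap 0 r t)))) := by
      intro t
      rw [deriv_circleMap, sub_zero, smul_eq_mul, smul_eq_mul, Complex.exp_neg, mul_assoc,
        Complex.exp_nat_mul]
      have : Complex.exp (t * Complex.I) ≠ 0 := Complex.exp_ne_zero _
      rw [hce]
      field_simp
      ring
    simp_rw [e]
    rw [intervalIntegral.integral_const_mul]
    rw [circleIntegral] at h1
    rw [h1, smul_eq_mul]
    field_simp
  -- conjugate part
  have h3 : ∫ t in (0 : ℝ)..(2 * π), (starRingEnd ℂ) (g (circleMap 0 r t)) *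
      ((1 - circleMap 0 r t) ^ n * Complex.exp (-((n + 1 : ℕ) * t * Complex.I))) = 0 := by
    have hG : DifferentiableOn ℂ (fun z => g z * (z * (z - (r : ℂ) ^ 2) ^ n)) (closedBall 0 r) :=
      hgc.mul (by fun_prop)
    have hdc : DiffContOnCl ℂ (fun z => g z * (z * (z - (r : ℂ) ^ 2) ^ n)) (ball 0 |r|) := by
      rw [abs_of_pos hr0]
      exact (hG.mono closure_ball_subset_closedBall).diffContOnCl
    have hav := hdc.circleAverage
    rw [Real.circleAverage_def] at hav
    simp only [zero_mul, mul_zero, smul_eq_zero] at hav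
    have hav' := hav.resolve_left (by positivity)
    have e : ∀ t : ℝ, (starRingEnd ℂ) (g (circleMap 0 r t)) *
      ((1 - circleMap 0 r t) ^ n * Complex.exp (-((n + 1 : ℕ) * t * Complex.I))) =
      (1 / (r : ℂ) ^ (n + 1)) * (starRingEnd ℂ) (g (circleMap 0 r t) * (circleMap 0 r t *
        (circleMap 0 r t - (r : ℂ) ^ 2) ^ n)) := by
      intro t
      have hx : Complex.exp (t * Complex.I) ≠ 0 := Complex.exp_ne_zero _
      have hcj : (starRingEnd ℂ) (Complex.exp (t * Complex.I)) = (Complex.exp (t * Complex.I))⁻¹ := by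
        rw [← Complex.exp_conj, ← Complex.exp_neg]; simp
      rw [map_mul, map_mul, map_pow, map_sub, hce]
      simp only [map_mul, map_pow, Complex.conj_ofReal, hcj]
      rw [Complex.exp_neg, mul_assoc ((n + 1 : ℕ) : ℂ), Complex.exp_nat_mul]
      have : (r : ℂ) * (Complex.exp (t * Complex.I))⁻¹ - (r : ℂ) ^ 2 =
        r * (Complex.exp (t * Complex.I))⁻¹ * (1 - r * Complex.exp (t * Complex.I)) := by
        field_simp
      rw [this, mul_pow, mul_pow, inv_pow]
      field_simp
      ring
    simp_rw [e]
    rw [intervalIntegral.integral_const_mul]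
    have : ∫ t in (0 : ℝ)..(2 * π), (starRingEnd ℂ) (g (circleMap 0 r t) * (circleMap 0 r t *
        (circleMap 0 r t - (r : ℂ) ^ 2) ^ n)) = (starRingEnd ℂ) (∫ t in (0 : ℝ)..(2 * π),
        (g (circleMap 0 r t) * (circleMap 0 r t * (circleMap 0 r t - (r : ℂ) ^ 2) ^ n))) := by
      rw [intervalIntegral.integral_of_le (by positivity),
        intervalIntegral.integral_of_le (by positivity)]
      exact integral_conj
    rw [this, hav', map_zero, mul_zero]
  have h4 : ∫ t in (0 : ℝ)..(2 * π), (((g (circleMap 0 r t)).re : ℝ) : ℂ) *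
          ((1 - circleMap 0 r t) ^ n * Complex.exp (-((n + 1 : ℕ) * t * Complex.I))) =
      (1 / 2) * ((∫ t in (0 : ℝ)..(2 * π), g (circleMap 0 r t) *
      ((1 - circleMap 0 r t) ^ n * Complex.exp (-((n + 1 : ℕ) * t * Complex.I)))) +
      ∫ t in (0 : ℝ)..(2 * π), (starRingEnd ℂ) (g (circleMap 0 r t)) *
      ((1 - circleMap 0 r t) ^ n * Complex.exp (-((n + 1 : ℕ) * t * Complex.I)))) := by
    have hcm : Continuous (circleMap (0 : ℂ) r) := continuous_circleMap 0 r
    rw [← intervalIntegral.integral_add, ← intervalIntegral.integral_const_mul]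
    · congr 1; ext t
      rw [Complex.re_eq_add_conj]; ring
    · apply Continuous.intervalIntegrable
      exact hcont.mul (by fun_prop)
    · apply Continuous.intervalIntegrable
      exact (Complex.continuous_conj.comp hcont).mul (by fun_prop)
  rw [h4, h3, h2]
  have hpi : (π : ℂ) ≠ 0 := by exact_mod_cast Real.pi_ne_zero
  have hfac : ((n + 1).factorial : ℂ) ≠ 0 := by exact_mod_cast (n + 1).factorial_ne_zero
  push_cast
  field_simp
  ring

lemma disc_bound (g : ℂ → ℂ) (hg : DifferentiableOn ℂ g (ball 0 1)) (n : ℕ) (M : ℝ)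
    (hM : ∀ z ∈ ball (0 : ℂ) 1, |(g z).re| ≤ M) :
    ∃ α, ‖iteratedDeriv (n + 1) (fun z => (1 - z) ^ n * g z) 0‖ ≤
      ((n + 1).factorial : ℝ) / π * (M * (2 ^ (n + 1) * Jint (n + 1) α)) := by
  set D := iteratedDeriv (n + 1) (fun z => (1 - z) ^ n * g z) 0 with hD
  set v : ℂ := Complex.exp (-(D.arg * Complex.I)) with hv
  have hvD : v * D = ‖D‖ := by
    conv_lhs => rw [← Complex.norm_mul_exp_arg_mul_I D]
    rw [hv, mul_left_comm, ← Complex.exp_add]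
    simp
  set k : ℝ → ℝ → ℂ := fun r t => (1 - circleMap 0 r t) ^ n *
    Complex.exp (-((n + 1 : ℕ) * t * Complex.I)) with hk
  have hkc : Continuous (Function.uncurry k) := by
    simp only [hk, Function.uncurry_def, circleMap]
    fun_prop
  have hkr : ∀ r, Continuous (k r) := by
    intro r
    simp only [hk, circleMap]
    fun_prop
  have hr : ∀ r ∈ Set.Ioo (0 : ℝ) 1, r ^ (n + 1) * ‖D‖ ≤ ((n + 1).factorial : ℝ) / π *
      (M * ∫ t in (0 : ℝ)..(2 * π), |(v * k r t).re|) := by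
    rintro r ⟨hr0, hr1⟩
    have h := schwarz_repr g hg n r hr0 hr1
    rw [← hD] at h
    change _ = _ * ∫ t in (0 : ℝ)..(2 * π), (((g (circleMap 0 r t)).re : ℝ) : ℂ) * k r t at h
    have hgc : DifferentiableOn ℂ g (closedBall 0 r) := hg.mono (closedBall_subset_ball hr1)
    have hcont : Continuous fun t => g (circleMap 0 r t) :=
      hgc.continuousOn.comp_continuous (continuous_circleMap 0 r)
        (fun t => circleMap_mem_closedBall 0 hr0.le t)
    have h2 : ((r ^ (n + 1) * ‖D‖ : ℝ) : ℂ) = (((n + 1).factorial : ℝ) / π : ℝ) *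
        ∫ t in (0 : ℝ)..(2 * π), (((g (circleMap 0 r t)).re : ℝ) : ℂ) * (v * k r t) := by
      have e : ∀ t : ℝ, (((g (circleMap 0 r t)).re : ℝ) : ℂ) * (v * k r t) =
        v * ((((g (circleMap 0 r t)).re : ℝ) : ℂ) * k r t) := by intro t; ring
      simp_rw [e]
      rw [intervalIntegral.integral_const_mul]
      rw [Complex.ofReal_mul, ← hvD, Complex.ofReal_pow]
      linear_combination v * h
    have hci : Continuous fun t => (((g (circleMap 0 r t)).re : ℝ) : ℂ) * (v * k r t) := by
      exact (Complex.continuous_ofReal.comp (Complex.continuous_re.comp hcont)).mul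
        (continuous_const.mul (hkr r))
    have h3 : r ^ (n + 1) * ‖D‖ = ((n + 1).factorial : ℝ) / π *
        ∫ t in (0 : ℝ)..(2 * π), (g (circleMap 0 r t)).re * (v * k r t).re := by
      have := congrArg Complex.re h2
      rw [Complex.ofReal_re, Complex.re_ofReal_mul] at this
      rw [this]
      congr 1
      have h5 := Complex.reCLM.intervalIntegral_comp_comm (hci.intervalIntegrable (μ := MeasureTheory.volume) 0 (2 * π))
      simp only [Complex.reCLM_apply, Complex.re_ofReal_mul] at h5
      exact h5.symm
    rw [h3]
    refine mul_le_mul_of_nonneg_left ?_ (by positivity)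
    rw [← intervalIntegral.integral_const_mul]
    have := hkr r
    apply intervalIntegral.integral_mono_on (by positivity)
    · apply Continuous.intervalIntegrable
      exact (Complex.continuous_re.comp hcont).mul
        (Complex.continuous_re.comp (continuous_const.mul (hkr r)))
    · apply Continuous.intervalIntegrable; fun_prop
    · intro t _
      refine (le_abs_self _).trans ?_
      rw [abs_mul]
      refine mul_le_mul_of_nonneg_right (hM _ ?_) (abs_nonneg _)
      exact closedBall_subset_ball hr1 (circleMap_mem_closedBall 0 hr0.le t)
  have hlim : 1 ^ (n + 1) * ‖D‖ ≤ ((n + 1).factorial : ℝ) / π *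
      (M * ∫ t in (0 : ℝ)..(2 * π), |(v * k 1 t).re|) := by
    have c1 : Continuous fun r : ℝ => r ^ (n + 1) * ‖D‖ := by fun_prop
    have c2 : Continuous fun r : ℝ => ((n + 1).factorial : ℝ) / π *
      (M * ∫ t in (0 : ℝ)..(2 * π), |(v * k r t).re|) := by
      refine continuous_const.mul (continuous_const.mul ?_)
      apply intervalIntegral.continuous_parametric_intervalIntegral_of_continuous'
      have : Continuous fun q : ℝ × ℝ => |(v * Function.uncurry k q).re| := by fun_prop
      exact this
    refine le_of_tendsto_of_tendsto (b := nhdsWithin 1 (Set.Iio 1))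
      (c1.continuousAt.tendsto.mono_left nhdsWithin_le_nhds)
      (c2.continuousAt.tendsto.mono_left nhdsWithin_le_nhds) ?_
    filter_upwards [Ioo_mem_nhdsLT (show (0 : ℝ) < 1 by norm_num)] with r hr' using hr r hr'
  refine ⟨(n + 1 : ℕ) * π + D.arg, ?_⟩
  rw [one_pow, one_mul] at hlim
  refine hlim.trans (le_of_eq ?_)
  congr 2
  have hsub := intervalIntegral.smul_integral_comp_add_mul (a := -(π / 2)) (b := π / 2)
    (fun t => |(v * k 1 t).re|) 2 π
  rw [show π + 2 * (-(π / 2)) = 0 by ring, show π + 2 * (π / 2) = 2 * π by ring] at hsub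
  rw [← hsub, Jint, smul_eq_mul, pow_succ', mul_assoc, ← intervalIntegral.integral_const_mul (2 ^ n)]
  congr 1
  apply intervalIntegral.integral_congr
  intro x hx
  rw [Set.uIcc_of_le (by linarith [Real.pi_pos])] at hx
  have hcos := Real.cos_nonneg_of_mem_Icc hx
  have hval : v * k 1 (π + 2 * x) = ((2 ^ n * Real.cos x ^ n : ℝ) : ℂ) *
      Complex.exp ((-((n + 1 : ℕ) * π + D.arg + (((n + 1 : ℕ) : ℝ) + 1) * x) : ℝ) * Complex.I) := by
    have h1 : 1 - circleMap 0 1 (π + 2 * x) = 2 * Complex.cos x * Complex.exp (x * Complex.I) := by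
      rw [circleMap, Complex.two_cos]
      push_cast
      rw [zero_add, one_mul, add_mul, add_mul, Complex.exp_add (π * Complex.I),
        Complex.exp_pi_mul_I, ← Complex.exp_add, ← Complex.exp_add]
      rw [show -(x : ℂ) * Complex.I + x * Complex.I = 0 by ring, Complex.exp_zero,
        show (x : ℂ) * Complex.I + x * Complex.I = 2 * x * Complex.I by ring]
      ring
    simp only [hk, hv]
    rw [h1, mul_pow, mul_pow, ← Complex.exp_nat_mul]
    push_cast
    rw [mul_assoc ((2 : ℂ) ^ n * Complex.cos x ^ n), ← Complex.exp_add, mul_left_comm,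
      ← Complex.exp_add]
    congr 2
    ring
  simp only
  rw [hval, Complex.re_ofReal_mul, Complex.exp_ofReal_mul_I_re, Real.cos_neg, abs_mul,
    abs_of_nonneg (by positivity), Nat.add_sub_cancel]
  ring

lemma halfplane_bound (f : ℂ → ℂ) (U : Set ℂ) (hU : IsOpen U) (hf : DifferentiableOn ℂ f U)
    (p u : ℂ) (hpu : ∀ w : ℂ, 0 < w.re → p + u * w ∈ U) (M : ℝ)
    (hM : ∀ w ∈ U, |(f w).re| ≤ M) (s : ℕ) (hs : 1 ≤ s) :
    ‖u‖ ^ s * ‖iteratedDeriv s f (p + u)‖ ≤ Kconst s * M := by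
  obtain ⟨n, rfl⟩ : ∃ n, s = n + 1 := ⟨s - 1, by omega⟩
  have hmem : ∀ z ∈ ball (0 : ℂ) 1, cay p u z ∈ U := fun z hz => hpu _ (cay_re hz)
  have hg : DifferentiableOn ℂ (fun z => f (cay p u z)) (ball 0 1) :=
    hf.comp (fun z hz => (cay_hasDerivAt p u hz).differentiableAt.differentiableWithinAt) hmem
  obtain ⟨α, hα⟩ := disc_bound _ hg n M (fun z hz => hM _ (hmem z hz))
  have h0 : cay p u 0 = p + u := by simp [cay]
  have hM0 : 0 ≤ M := (abs_nonneg _).trans (hM _ (hmem 0 (by simp)))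
  rw [bol f U hU hf p u hpu n 0 (by simp), h0] at hα
  simp only [sub_zero, one_pow, div_one, norm_mul, norm_pow, mul_pow, Complex.norm_ofNat] at hα
  have hle := le_ciSup (Jint_bdd (n + 1)) α
  rw [Kconst_eq]
  have h2 : (0 : ℝ) < 2 ^ (n + 1) := by positivity
  have h3 : ((n + 1).factorial : ℝ) / π * (M * (2 ^ (n + 1) * Jint (n + 1) α)) ≤
      ((n + 1).factorial : ℝ) / π * (M * (2 ^ (n + 1) * ⨆ α, Jint (n + 1) α)) := by
    gcongr
  have h4 := hα.trans h3
  refine le_of_mul_le_mul_left ?_ h2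
  calc _ = _ := by ring
    _ ≤ _ := h4
    _ = _ := by ring

lemma Kconst_nonneg (s : ℕ) : 0 ≤ Kconst s := by
  rw [Kconst_eq]
  refine mul_nonneg (by positivity) (Real.iSup_nonneg fun α => ?_)
  apply intervalIntegral.integral_nonneg (by linarith [Real.pi_pos])
  intro t ht
  exact mul_nonneg (abs_nonneg _) (pow_nonneg (Real.cos_nonneg_of_mem_Icc ht) _)

theorem main_bound (G Ω : Set ℂ) (hGc : Convex ℝ G) (hGne : G.Nonempty)
    (hΩ : Ω = (closure G)ᶜ)
    (f : ℂ → ℂ) (hf : DifferentiableOn ℂ f Ω)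
    (M : ℝ) (hM : ∀ w ∈ Ω, |(f w).re| ≤ M) (z : ℂ) (hz : z ∈ Ω) (s : ℕ) (hs : 1 ≤ s) :
      ‖iteratedDeriv s f z‖ ≤ Kconst s / Metric.infDist z (frontier Ω) ^ s * M := by
  have hΩo : IsOpen Ω := by rw [hΩ]; exact isClosed_closure.isOpen_compl
  have hM0 : 0 ≤ M := (abs_nonneg _).trans (hM z hz)
  obtain ⟨p, hp, hmin⟩ := exists_norm_eq_iInf_of_complete_convex hGne.closure
    isClosed_closure.isComplete hGc.closure z
  rw [norm_eq_iInf_iff_real_inner_le_zero hGc.closure hp] at hmin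
  have hpz : z - p ≠ 0 := by
    intro h
    rw [sub_eq_zero.1 h, hΩ] at hz
    exact hz hp
  have hpos : 0 < ‖z - p‖ := norm_pos_iff.2 hpz
  have hpu : ∀ w : ℂ, 0 < w.re → p + (z - p) * w ∈ Ω := by
    intro w hw
    rw [hΩ]
    intro hmem
    have h := hmin _ hmem
    rw [add_sub_cancel_left, Complex.inner] at h
    have e : (starRingEnd ℂ) (z - p) * ((z - p) * w) = ((‖z - p‖ ^ 2 : ℝ) : ℂ) * w := by
      rw [← mul_assoc, ← Complex.normSq_eq_conj_mul_self, Complex.normSq_eq_norm_sq]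
    first
      | rw [e, Complex.re_ofReal_mul] at h
      | rw [mul_comm, e, Complex.re_ofReal_mul] at h
    have : 0 < ‖z - p‖ ^ 2 * w.re := by positivity
    linarith
  have hb := halfplane_bound f Ω hΩo hf p (z - p) hpu M hM s hs
  rw [add_sub_cancel] at hb
  have hpf : p ∈ frontier Ω := by
    rw [frontier, hΩo.interior_eq]
    refine ⟨?_, by rw [hΩ]; exact fun h => h hp⟩
    have ht : Tendsto (fun x : ℝ => p + (z - p) * (x : ℂ)) (nhdsWithin 0 (Set.Ioi 0)) (nhds p) := by
      have hc : Continuous fun x : ℝ => p + (z - p) * (x : ℂ) := by fun_prop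
      have := hc.tendsto 0
      simp only [Complex.ofReal_zero, mul_zero, add_zero] at this
      exact this.mono_left nhdsWithin_le_nhds
    refine mem_closure_of_tendsto ht ?_
    filter_upwards [self_mem_nhdsWithin] with x hx
    exact hpu _ (by simpa using hx)
  have hdle : Metric.infDist z (frontier Ω) ≤ ‖z - p‖ := by
    rw [← dist_eq_norm]; exact Metric.infDist_le_dist_of_mem hpf
  have hdpos : 0 < Metric.infDist z (frontier Ω) := by
    rw [← isClosed_frontier.notMem_iff_infDist_pos ⟨p, hpf⟩]
    rw [frontier, hΩo.interior_eq]
    exact fun h => h.2 hz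
  have hK := Kconst_nonneg s
  rw [div_mul_eq_mul_div, le_div_iff₀ (by positivity), mul_comm]
  refine le_trans ?_ hb
  gcongr

/-- Let `Ω = ℂ \ Ḡ` with `G` a convex domain in `ℂ`, and let `f` be
holomorphic in `Ω` with bounded real part (say `|Re f| ≤ M` on `Ω`). Then for every
`z ∈ Ω` and every `s ≥ 1`,
`|f^{(s)}(z)| ≤ (K_s / d_z^s) · sup_Ω |Re f| ≤ (K_s / d_z^s) · M`, where
`d_z = dist(z, ∂Ω)`. Moreover `K_{2l+1} = 2((2l+1)‼)²/(π(2l+1))`, `K_2 = 3√3/(2π)`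
and `K_4 = 3(16+5√5)/(4π)`. -/
theorem derivative_bound_holomorphic_complement_convex
    (G Ω : Set ℂ) (hGo : IsOpen G) (hGc : Convex ℝ G) (hGne : G.Nonempty)
    (hΩ : Ω = (closure G)ᶜ)
    (f : ℂ → ℂ) (hf : DifferentiableOn ℂ f Ω)
    (M : ℝ) (hM : ∀ w ∈ Ω, |(f w).re| ≤ M) :
    (∀ z ∈ Ω, ∀ s : ℕ, 1 ≤ s →
      ‖iteratedDeriv s f z‖ ≤ Kconst s / Metric.infDist z (frontier Ω) ^ s * M)
    ∧ (∀ l : ℕ, Kconst (2 * l + 1) =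
        2 * ((Nat.doubleFactorial (2 * l + 1) : ℝ)) ^ 2 / (π * (2 * (l : ℝ) + 1)))
    ∧ Kconst 2 = 3 * Real.sqrt 3 / (2 * π)
    ∧ Kconst 4 = 3 * (16 + 5 * Real.sqrt 5) / (4 * π) := by
  exact ⟨fun z hz s hs => main_bound G Ω hGc hGne hΩ f hf M hM z hz s hs, Kconst_odd,
    Kconst_two, Kconst_four⟩
end
end
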